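/- arXiv:2007.02740 — 2 statements merged into one kernel-verified Lean document; each statement's English description precedes it below -/
import Mathlib

section
/- For every η > 0 there exist c ∈ ℕ and κ > 0 such that the following holds. Let f : {0,1}^m → {0,1} be a non-constant monotone function, S ⊆ {0,1}^ℓ × 𝒪 a search problem, and gd : {0,1}^t × {0,1}^t → {0,1} a gadget with disc(gd) ≤ 2^{−η·t} and t ≥ c·log₂(m·ℓ). Fix any protocol Π solving mKW_f ⊛ (S◇gd). Then for every live transcript π₁ of Π, there exist at least 2^{κ·Q(S)·t} distinct suffixes π₂ such that the concatenation π₁∘π₂ is a full transcript (a leaf) of Π. -/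
open Classical

noncomputable section

/-! ### Deterministic communication protocols -/

/-- A deterministic communication protocol: a finite binary protocol tree whose
leaves are labeled by outputs in `O`.  At a `nodeA` vertex Alice sends a bit
(computed from her input), at a `nodeB` vertex Bob sends a bit. -/
inductive Protocol (X Y O : Type) : Type where
  | leaf : O → Protocol X Y O
  | nodeA : (X → Bool) → Protocol X Y O → Protocol X Y O → Protocol X Y O
  | nodeB : (Y → Bool) → Protocol X Y O → Protocol X Y O → Protocol X Y O

namespace Protocol

variable {X Y O : Type}

/-- The output of the protocol on an input pair. -/
def run : Protocol X Y O → X → Y → O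
  | leaf o, _, _ => o
  | nodeA h p0 p1, x, y => if h x then run p1 x y else run p0 x y
  | nodeB h p0 p1, x, y => if h y then run p1 x y else run p0 x y

/-- Depth (communication complexity) of a protocol tree. -/
def depth : Protocol X Y O → ℕ
  | leaf _ => 0
  | nodeA _ p0 p1 => max (depth p0) (depth p1) + 1
  | nodeB _ p0 p1 => max (depth p0) (depth p1) + 1

/-- Number of leaves (protocol size). -/
def leaves : Protocol X Y O → ℕ
  | leaf _ => 1
  | nodeA _ p0 p1 => leaves p0 + leaves p1
  | nodeB _ p0 p1 => leaves p0 + leaves p1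

/-- `followsA p π x` : Alice's input `x` is consistent with the partial transcript `π`,
i.e. `x` belongs to the Alice-side `𝒳_π` of the rectangle associated with the vertex `π`. -/
def followsA : Protocol X Y O → List Bool → X → Prop
  | _, [], _ => True
  | leaf _, _ :: _, _ => False
  | nodeA h p0 p1, b :: rest, x =>
      h x = b ∧ (if b then followsA p1 rest x else followsA p0 rest x)
  | nodeB _ p0 p1, b :: rest, x =>
      if b then followsA p1 rest x else followsA p0 rest x

/-- `followsB p π y` : Bob's input `y` is consistent with the partial transcript `π`,
i.e. `y` belongs to the Bob-side `𝒴_π` of the rectangle associated with the vertex `π`. -/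
def followsB : Protocol X Y O → List Bool → Y → Prop
  | _, [], _ => True
  | leaf _, _ :: _, _ => False
  | nodeA _ p0 p1, b :: rest, y =>
      if b then followsB p1 rest y else followsB p0 rest y
  | nodeB h p0 p1, b :: rest, y =>
      h y = b ∧ (if b then followsB p1 rest y else followsB p0 rest y)

/-- The subtree of the protocol reached by following a partial transcript. -/
def subtree : Protocol X Y O → List Bool → Option (Protocol X Y O)
  | p, [] => some p
  | leaf _, _ :: _ => none
  | nodeA _ p0 p1, b :: rest => if b then subtree p1 rest else subtree p0 rest
  | nodeB _ p0 p1, b :: rest => if b then subtree p1 rest else subtree p0 rest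

/-- `π` is a (partial or full) transcript of the protocol, i.e. a vertex of the protocol tree. -/
def IsTranscript (p : Protocol X Y O) (π : List Bool) : Prop :=
  (subtree p π).isSome = true

/-- `π` is a full transcript of the protocol, i.e. a root-to-leaf path. -/
def IsFullTranscript (p : Protocol X Y O) (π : List Bool) : Prop :=
  ∃ o : O, subtree p π = some (leaf o)

end Protocol

/-- A protocol solves a communication problem `S` if on every input pair it
outputs a valid output. -/
def Solves {X Y O : Type} (p : Protocol X Y O) (S : X → Y → O → Prop) : Prop :=
  ∀ x y, S x y (p.run x y)

/-- `L(S)`: minimal number of leaves of a protocol solving `S`. -/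
def Lsize {X Y O : Type} (S : X → Y → O → Prop) : ℕ :=
  sInf {k | ∃ p : Protocol X Y O, Solves p S ∧ p.leaves = k}

/-- `CC(S)`: the deterministic communication complexity (minimal depth) of `S`. -/
def CC {X Y O : Type} (S : X → Y → O → Prop) : ℕ :=
  sInf {k | ∃ p : Protocol X Y O, Solves p S ∧ p.depth = k}

/-! ### Decision trees and query complexity -/

inductive DTree (ι O : Type) : Type where
  | leaf : O → DTree ι O
  | node : ι → DTree ι O → DTree ι O → DTree ι O

namespace DTree

variable {ι O : Type}

def run : DTree ι O → (ι → Bool) → O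
  | leaf o, _ => o
  | node i t0 t1, z => if z i then run t1 z else run t0 z

def depth : DTree ι O → ℕ
  | leaf _ => 0
  | node _ t0 t1 => max (depth t0) (depth t1) + 1

end DTree

def DSolves {ι O : Type} (T : DTree ι O) (S : (ι → Bool) → O → Prop) : Prop :=
  ∀ z, S z (T.run z)

/-- `Q(S)`: the deterministic query complexity of the search problem `S`. -/
def Qcomplexity {ι O : Type} (S : (ι → Bool) → O → Prop) : ℕ :=
  sInf {k | ∃ T : DTree ι O, DSolves T S ∧ T.depth = k}

/-! ### Monotone Karchmer–Wigderson relations -/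

/-- The monotone KW relation of a rectangle `A × B`: find `i` with `x i > y i`. -/
def mKWrect {ι : Type} (A B : Set (ι → Bool)) : ↥A → ↥B → ι → Prop :=
  fun x y i => x.val i = true ∧ y.val i = false

/-- `mL(A × B)`: the monotone formula complexity of the rectangle `A × B`. -/
def mL {ι : Type} (A B : Set (ι → Bool)) : ℕ := Lsize (mKWrect A B)

/-- The monotone KW relation of a monotone function `f`. -/
def mKW {ι : Type} (f : (ι → Bool) → Bool) :
    {x : ι → Bool // f x = true} → {y : ι → Bool // f y = false} → ι → Prop :=
  fun x y i => x.val i = true ∧ y.val i = false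

/-! ### Lifted search problems, discrepancy, reductions -/

/-- The lifted search problem `S ◇ gd`. -/
def liftSP {ι Λ O : Type} (S : (ι → Bool) → O → Prop) (gd : Λ → Λ → Bool) :
    (ι → Λ) → (ι → Λ) → O → Prop :=
  fun x y o => S (fun i => gd (x i) (y i)) o

/-- The discrepancy of a gadget `gd : {0,1}^t × {0,1}^t → {0,1}`. -/
def disc {t : ℕ} (gd : (Fin t → Bool) → (Fin t → Bool) → Bool) : ℝ :=
  sSup {r : ℝ | ∃ A B : Finset (Fin t → Bool),
    r = |((((A ×ˢ B).filter fun uv => gd uv.1 uv.2 = false).card : ℝ) -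
          (((A ×ˢ B).filter fun uv => gd uv.1 uv.2 = true).card : ℝ))| /
        ((2 ^ t : ℝ) * (2 ^ t : ℝ))}

/-- A (rectangular) reduction between communication problems. -/
def Reduces {X Y O X' Y' O' : Type}
    (S : X → Y → O → Prop) (S' : X' → Y' → O' → Prop) : Prop :=
  ∃ (RA : X → X') (RB : Y → Y') (Rout : O' → O),
    ∀ x y o', S' (RA x) (RB y) o' → S x y (Rout o')

/-- An injective reduction between communication problems. -/
def ReducesInj {X Y O X' Y' O' : Type}
    (S : X → Y → O → Prop) (S' : X' → Y' → O' → Prop) : Prop :=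
  ∃ (RA : X → X') (RB : Y → Y') (Rout : O' → O),
    Function.Injective RA ∧ Function.Injective RB ∧
    ∀ x y o', S' (RA x) (RB y) o' → S x y (Rout o')

/-! ### Compositions -/

/-- `mKW_f ◇ mKW_g := mKW_{f ◇ g}` : Alice gets `X ∈ (f◇g)⁻¹(1)`, Bob gets
`Y ∈ (f◇g)⁻¹(0)`, and they must find an entry `(i,j)` with `X i j > Y i j`. -/
def diamondKW {m : ℕ} {ι : Type} (f : (Fin m → Bool) → Bool) (g : (ι → Bool) → Bool) :
    {X : Fin m → ι → Bool // f (fun i => g (X i)) = true} →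
    {Y : Fin m → ι → Bool // f (fun i => g (Y i)) = false} →
    (Fin m × ι) → Prop :=
  fun X Y e => X.val e.1 e.2 = true ∧ Y.val e.1 e.2 = false

/-- `mKW_f ⊛ mKW_g` : same inputs as `mKW_f ◇ mKW_g`, but valid outputs are entries
`(i,j)` with `a_i > b_i` and `X i j > Y i j`, where `a_i = g(X_i)`, `b_i = g(Y_i)`. -/
def starKW {m : ℕ} {ι : Type} (f : (Fin m → Bool) → Bool) (g : (ι → Bool) → Bool) :
    {X : Fin m → ι → Bool // f (fun i => g (X i)) = true} →
    {Y : Fin m → ι → Bool // f (fun i => g (Y i)) = false} →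
    (Fin m × ι) → Prop :=
  fun X Y e => g (X.val e.1) = true ∧ g (Y.val e.1) = false ∧
    X.val e.1 e.2 = true ∧ Y.val e.1 e.2 = false

/-- `mKW_f ⊛ (S ◇ gd)` : Alice gets `X ∈ Λ^{m×ℓ}` and `a ∈ f⁻¹(1)`, Bob gets
`Y ∈ Λ^{m×ℓ}` and `b ∈ f⁻¹(0)`; valid outputs are pairs `(i,o)` with `a_i > b_i`
and `o` a valid output of `S ◇ gd` on the rows `(X_i, Y_i)`. -/
def starLift {m ℓ : ℕ} {Λ O : Type} (f : (Fin m → Bool) → Bool)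
    (S : (Fin ℓ → Bool) → O → Prop) (gd : Λ → Λ → Bool) :
    ((Fin m → Fin ℓ → Λ) × {a : Fin m → Bool // f a = true}) →
    ((Fin m → Fin ℓ → Λ) × {b : Fin m → Bool // f b = false}) →
    (Fin m × O) → Prop :=
  fun Xa Yb io =>
    Xa.2.val io.1 = true ∧ Yb.2.val io.1 = false ∧
      liftSP S gd (Xa.1 io.1) (Yb.1 io.1) io.2

/-! ### Live transcripts -/

/-- `𝒜_{π,W}` : the vectors `a ∈ f⁻¹(1)` such that `(W,a)` is consistent with `π`. -/
def Aset {m ℓ : ℕ} {Λ O : Type} (f : (Fin m → Bool) → Bool)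
    (Pr : Protocol ((Fin m → Fin ℓ → Λ) × {a : Fin m → Bool // f a = true})
                   ((Fin m → Fin ℓ → Λ) × {b : Fin m → Bool // f b = false}) (Fin m × O))
    (π : List Bool) (W : Fin m → Fin ℓ → Λ) : Set (Fin m → Bool) :=
  {a | ∃ h : f a = true, Protocol.followsA Pr π (W, ⟨a, h⟩)}

/-- `ℬ_{π,W}` : the vectors `b ∈ f⁻¹(0)` such that `(W,b)` is consistent with `π`. -/
def Bset {m ℓ : ℕ} {Λ O : Type} (f : (Fin m → Bool) → Bool)
    (Pr : Protocol ((Fin m → Fin ℓ → Λ) × {a : Fin m → Bool // f a = true})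
                   ((Fin m → Fin ℓ → Λ) × {b : Fin m → Bool // f b = false}) (Fin m × O))
    (π : List Bool) (W : Fin m → Fin ℓ → Λ) : Set (Fin m → Bool) :=
  {b | ∃ h : f b = false, Protocol.followsB Pr π (W, ⟨b, h⟩)}

/-- `γ(π)` : the average over uniform `W ∈ Λ^{m×ℓ}` of `mL(𝒜_{π,W} × ℬ_{π,W})`. -/
def gammaM {m ℓ : ℕ} {Λ O : Type} [Fintype Λ] [DecidableEq Λ] (f : (Fin m → Bool) → Bool)
    (Pr : Protocol ((Fin m → Fin ℓ → Λ) × {a : Fin m → Bool // f a = true})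
                   ((Fin m → Fin ℓ → Λ) × {b : Fin m → Bool // f b = false}) (Fin m × O))
    (π : List Bool) : ℝ :=
  (∑ W : Fin m → Fin ℓ → Λ, (mL (Aset f Pr π W) (Bset f Pr π W) : ℝ)) /
    (Fintype.card (Fin m → Fin ℓ → Λ) : ℝ)

/-- A transcript is live (alive) if it is a vertex of the protocol tree and `γ(π) ≥ 4m²`. -/
def LiveT {m ℓ : ℕ} {Λ O : Type} [Fintype Λ] [DecidableEq Λ] (f : (Fin m → Bool) → Bool)
    (Pr : Protocol ((Fin m → Fin ℓ → Λ) × {a : Fin m → Bool // f a = true})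
                   ((Fin m → Fin ℓ → Λ) × {b : Fin m → Bool // f b = false}) (Fin m × O))
    (π : List Bool) : Prop :=
  Protocol.IsTranscript Pr π ∧ 4 * (m : ℝ) ^ 2 ≤ gammaM f Pr π

/-! ### Average degree -/

/-- Projection of a set of strings to the coordinates in `J`. -/
def projSet {N Λ : Type} (W : Set (N → Λ)) (J : Set N) : Set (↥J → Λ) :=
  (fun w (j : ↥J) => w j.val) '' W

/-- Relative average degree: `rAvgDeg_I(W) = (|W| / |W|_{N−I}|) / |Λ|^{|I|}`. -/
def rAvgDeg {N Λ : Type} [Fintype Λ] (W : Set (N → Λ)) (I : Set N) : ℝ :=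
  ((W.ncard : ℝ) / ((projSet W Iᶜ).ncard : ℝ)) / ((Fintype.card Λ : ℝ) ^ I.ncard)

/-- View a set of `m × ℓ` matrices as a set of strings indexed by `Fin m × Fin ℓ`. -/
def matSet {m ℓ : ℕ} {Λ : Type} (WW : Set (Fin m → Fin ℓ → Λ)) : Set (Fin m × Fin ℓ → Λ) :=
  (fun W p => W p.1 p.2) '' WW

/-! ### Hard collections -/

/-- A transcript `π` supports the collection `(𝒲, a^W, b^W)` if for every `W ∈ 𝒲`,
`(W, a^W) ∈ 𝒳_π` and `(W, b^W) ∈ 𝒴_π`. -/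
def SupportsCollection {m ℓ : ℕ} {Λ O : Type} (f : (Fin m → Bool) → Bool)
    (Pr : Protocol ((Fin m → Fin ℓ → Λ) × {a : Fin m → Bool // f a = true})
                   ((Fin m → Fin ℓ → Λ) × {b : Fin m → Bool // f b = false}) (Fin m × O))
    (π : List Bool) (WW : Set (Fin m → Fin ℓ → Λ))
    (aW bW : (Fin m → Fin ℓ → Λ) → (Fin m → Bool)) : Prop :=
  ∀ W ∈ WW, aW W ∈ Aset f Pr π W ∧ bW W ∈ Bset f Pr π W

/-- The collection `(𝒲, a^W, b^W)` is hard: there is a set `R` of revealed rows such that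
(i) every set `I` of unrevealed rows has relative average degree at least `4^{-|I|}` in the
restriction of `𝒲` to the unrevealed rows, and (ii) `a^W|_R ≤ b^{W'}|_R` for all `W, W' ∈ 𝒲`. -/
def HardCollection {m ℓ : ℕ} {Λ : Type} [Fintype Λ] (f : (Fin m → Bool) → Bool)
    (WW : Set (Fin m → Fin ℓ → Λ))
    (aW bW : (Fin m → Fin ℓ → Λ) → (Fin m → Bool)) : Prop :=
  ∃ R : Set (Fin m),
    (∀ I : Set (Fin m), I ⊆ Rᶜ →
      ((1 : ℝ) / 4) ^ I.ncard ≤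
        rAvgDeg (projSet (matSet WW) {p : Fin m × Fin ℓ | p.1 ∉ R})
          {q : ↥{p : Fin m × Fin ℓ | p.1 ∉ R} | q.val.1 ∈ I}) ∧
    (∀ W ∈ WW, ∀ W' ∈ WW, ∀ i ∈ R, aW W i ≤ bW W' i)

/-! ### CNF formulas, Nullstellensatz degree -/

/-- A clause over `ℓ` variables: a set of literals; `(i, true)` is the positive
literal `x_i`, `(i, false)` is the negative literal `¬x_i`. -/
abbrev CnfClause (ℓ : ℕ) := Finset (Fin ℓ × Bool)

/-- An assignment satisfies a clause if some literal is satisfied. -/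
def clauseSat {ℓ : ℕ} (z : Fin ℓ → Bool) (C : CnfClause ℓ) : Prop :=
  ∃ lit ∈ C, z lit.1 = lit.2

/-- The search problem `S_φ` : given an assignment, find a violated clause of `φ`. -/
def searchCNF {ℓ : ℕ} (φ : Finset (CnfClause ℓ)) :
    (Fin ℓ → Bool) → CnfClause ℓ → Prop :=
  fun z C => C ∈ φ ∧ ¬ clauseSat z C

/-- The standard polynomial encoding of a clause. -/
def clausePoly {ℓ : ℕ} (C : CnfClause ℓ) : MvPolynomial (Fin ℓ) (ZMod 2) :=
  ∏ lit ∈ C, (if lit.2 then 1 - MvPolynomial.X lit.1 else MvPolynomial.X lit.1)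

/-- The Nullstellensatz degree of a CNF contradiction `φ` over `F₂`. -/
def NSdeg {ℓ : ℕ} (φ : Finset (CnfClause ℓ)) : ℕ :=
  sInf {d : ℕ | ∃ (q : CnfClause ℓ → MvPolynomial (Fin ℓ) (ZMod 2))
      (r : Fin ℓ → MvPolynomial (Fin ℓ) (ZMod 2)),
      ((∑ C ∈ φ, clausePoly C * q C) +
        ∑ i : Fin ℓ, (MvPolynomial.X i ^ 2 - MvPolynomial.X i) * r i) = 1 ∧
      (∀ C ∈ φ, (clausePoly C * q C).totalDegree ≤ d) ∧
      (∀ i : Fin ℓ, ((MvPolynomial.X i ^ 2 - MvPolynomial.X i) * r i).totalDegree ≤ d)}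

/-- The equality gadget. -/
def eqGadget {Λ : Type} [DecidableEq Λ] : Λ → Λ → Bool := fun u v => decide (u = v)

/-! ### Semi-monotone composition -/

/-- `U_m ◇ mKW_g` : Alice gets `X`, Bob gets `Y`; with `a_i = g(X_i)`, `b_i = g(Y_i)`,
valid outputs are entries `(i,j)` with (`a_i > b_i` and `X i j > Y i j`), or
(`a_i < b_i` and `X i j < Y i j`), or (`a_i = b_i` and `X i j ≠ Y i j`); if `a = b`
the players may output the failure symbol `⊥` (here `none`). -/
def semiU {m : ℕ} {ι : Type} (g : (ι → Bool) → Bool) :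
    (Fin m → ι → Bool) → (Fin m → ι → Bool) → Option (Fin m × ι) → Prop :=
  fun X Y o =>
    match o with
    | none => ∀ i, g (X i) = g (Y i)
    | some e =>
        (g (X e.1) = true ∧ g (Y e.1) = false ∧ X e.1 e.2 = true ∧ Y e.1 e.2 = false) ∨
        (g (X e.1) = false ∧ g (Y e.1) = true ∧ X e.1 e.2 = false ∧ Y e.1 e.2 = true) ∨
        (g (X e.1) = g (Y e.1) ∧ X e.1 e.2 ≠ Y e.1 e.2)

/-! ### Razborov rank measure over F₂ -/

/-- The maximal `F₂`-rank of the restriction of `A` to an `S`-monochromatic rectangle. -/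
def monoMaxRank {X Y O : Type} [Fintype X] [Fintype Y]
    (S : X → Y → O → Prop) (A : Matrix X Y (ZMod 2)) : ℕ :=
  sSup {r : ℕ | ∃ (U : Finset X) (V : Finset Y) (o : O),
    (∀ x ∈ U, ∀ y ∈ V, S x y o) ∧
    r = (A.submatrix (Subtype.val : {x // x ∈ U} → X)
          (Subtype.val : {y // y ∈ V} → Y)).rank}

/-- The Razborov rank measure `μ_{F₂}(S, A)`. -/
def muF2 {X Y O : Type} [Fintype X] [Fintype Y]
    (S : X → Y → O → Prop) (A : Matrix X Y (ZMod 2)) : ℝ :=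
  (A.rank : ℝ) / (monoMaxRank S A : ℝ)

/-! ### Kronecker powers, pattern matrices -/

/-- The `m`-fold Kronecker power of a square matrix `B`, with index type `Fin m → ι`. -/
def kronPow {ι R : Type} [CommMonoid R] (m : ℕ) (B : Matrix ι ι R) :
    Matrix (Fin m → ι) (Fin m → ι) R :=
  Matrix.of fun x y => ∏ i, B (x i) (y i)

/-- The pattern matrix `A_{x,y} = p(eq(x₁,y₁),…,eq(x_ℓ,y_ℓ))` of a multilinear
polynomial `p` with coefficients `phat` over `F₂`. -/
def patternMatrix {Λ : Type} [DecidableEq Λ] (ℓ : ℕ)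
    (phat : Finset (Fin ℓ) → ZMod 2) : Matrix (Fin ℓ → Λ) (Fin ℓ → Λ) (ZMod 2) :=
  Matrix.of fun x y =>
    ∑ T : Finset (Fin ℓ), phat T * ∏ i ∈ T, (if x i = y i then (1 : ZMod 2) else 0)

/-! ### s-t-connectivity -/

/-- The `s`-`t`-connectivity function: the input is the adjacency matrix of a directed
graph on `n` vertices, `s = 0`, `t = n-1`; output is whether `t` is reachable from `s`. -/
def stConn (n : ℕ) : ((Fin n × Fin n) → Bool) → Bool :=
  fun E =>
    if ∀ h : 0 < n,
        Relation.ReflTransGen (fun u v : Fin n => E (u, v) = true)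
          ⟨0, h⟩ ⟨n - 1, Nat.sub_lt h Nat.one_pos⟩
      then true else false

/-! ### The matrix M of the semi-monotone composition theorem -/

/-- The matrix `M` used in the semi-monotone composition theorem, built from a matrix
`A ∈ F₂^{𝒳×𝒴}` (with `𝒳 = range xs`, `𝒴 = range ys` identified with `Fin K` via the
left inverses `ix`, `iy`). -/
def semiM {m n K : ℕ} (g : (Fin n → Bool) → Bool) (xs ys : Fin K → (Fin n → Bool))
    (ix iy : (Fin n → Bool) → Fin K) (A : Matrix (Fin K) (Fin K) (ZMod 2)) :
    Matrix (Fin m → Fin n → Bool) (Fin m → Fin n → Bool) (ZMod 2) :=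
  Matrix.of fun X Y =>
    if (fun i => g (X i)) = (fun i => g (Y i)) then 0
    else ∏ i : Fin m,
      (if g (X i) = true ∧ g (Y i) = false then A (ix (X i)) (iy (Y i))
       else if g (X i) = false ∧ g (Y i) = true then A (ix (Y i)) (iy (X i))
       else if X i = Y i then 1 else 0)

end

open Classical
set_option linter.unusedSectionVars false
set_option linter.unusedSimpArgs false

namespace KL

section avg
variable {ι Λ : Type} [Fintype ι] [DecidableEq ι] [Fintype Λ] [DecidableEq Λ]

lemma sum_update (j : ι) (H : (ι → Λ) → ℝ) :
    ∑ x : ι → Λ, ∑ v : Λ, H (Function.update x j v) = (Fintype.card Λ : ℝ) * ∑ x, H x := by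
  have hinv : Function.Involutive
      (fun p : (ι → Λ) × Λ => ((Function.update p.1 j p.2, p.1 j) : (ι → Λ) × Λ)) := by
    intro p
    ext1
    · simp
    · simp
  have h1 : ∑ p : (ι → Λ) × Λ, H (Function.update p.1 j p.2) = ∑ p : (ι → Λ) × Λ, H p.1 :=
    Fintype.sum_equiv hinv.toPerm _ _ (fun p => rfl)
  rw [Fintype.sum_prod_type, Fintype.sum_prod_type] at h1
  rw [h1]
  simp [Finset.mul_sum]

/-- Summing a function independent of the coordinates in `J` over a cylinder. -/
lemma sum_cyl (J : Finset ι) (u : ι → Λ) (g : (ι → Λ) → ℝ)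
    (hg : ∀ j ∈ J, ∀ x v, g (Function.update x j v) = g x) :
    (Fintype.card Λ : ℝ) ^ J.card * ∑ x ∈ Finset.univ.filter (fun x : ι → Λ => ∀ j ∈ J, x j = u j), g x
      = ∑ x, g x := by
  induction J using Finset.induction_on with
  | empty => simp
  | insert j J hj ih =>
    rw [← ih (fun i hi => hg i (Finset.mem_insert_of_mem hi)), Finset.card_insert_of_notMem hj, pow_succ,
      mul_assoc]
    congr 1
    rw [Finset.sum_filter, ← sum_update j, Finset.sum_filter]
    refine Finset.sum_congr rfl fun x _ => ?_
    rw [Finset.sum_eq_single (u j)]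
    · have : (∀ i ∈ insert j J, Function.update x j (u j) i = u i) ↔ (∀ i ∈ J, x i = u i) := by
        constructor
        · intro h i hi
          have hne : i ≠ j := fun h => hj (h ▸ hi)
          have := h i (Finset.mem_insert_of_mem hi)
          rwa [Function.update_of_ne hne] at this
        · intro h i hi
          by_cases hij : i = j
          · subst hij; simp
          · rw [Function.update_of_ne hij]
            exact h i ((Finset.mem_insert.mp hi).resolve_left hij)
      by_cases hx : ∀ i ∈ J, x i = u i
      · rw [if_pos (this.mpr hx), if_pos hx, hg j (Finset.mem_insert_self _ _)]
      · rw [if_neg (fun h => hx (this.mp h)), if_neg hx]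
    · intro v _ hv
      rw [if_neg]
      intro h
      have := h j (Finset.mem_insert_self _ _)
      rw [Function.update_self] at this
      exact hv this
    · simp
end avg

section op
variable {Λ : Type} [Fintype Λ]

lemma opnorm_fin (A : Λ → Λ → ℝ) (l : ℝ) (hl : 0 ≤ l)
    (hA : ∀ q : Λ → ℝ, ∑ u, (∑ v, A u v * q v) ^ 2 ≤ l * ∑ v, (q v) ^ 2) (k : ℕ) :
    ∀ (q : (Fin k → Λ) → ℝ),
    ∑ x : Fin k → Λ, (∑ y, q y * ∏ i, A (x i) (y i)) ^ 2 ≤ l ^ k * ∑ y, (q y) ^ 2 := by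
  induction k with
  | zero => intro q; simp [Fintype.sum_unique]
  | succ k ih =>
    intro q
    have e : ∀ F : (Fin (k+1) → Λ) → ℝ, ∑ x, F x = ∑ a : Λ, ∑ w : Fin k → Λ, F (Fin.cons a w) := by
      intro F
      rw [← (Fin.consEquiv (fun _ : Fin (k+1) => Λ)).sum_comp, Fintype.sum_prod_type]
      rfl
    rw [e, e]
    simp only [e, Fin.prod_univ_succ, Fin.cons_zero, Fin.cons_succ]
    rw [Finset.sum_comm]
    calc ∑ w : Fin k → Λ, ∑ a : Λ, (∑ b : Λ, ∑ v : Fin k → Λ,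
            q (Fin.cons b v) * (A a b * ∏ i, A (w i) (v i))) ^ 2
        = ∑ w : Fin k → Λ, ∑ a : Λ, (∑ b : Λ, A a b * ∑ v : Fin k → Λ,
            q (Fin.cons b v) * ∏ i, A (w i) (v i)) ^ 2 := by
          refine Finset.sum_congr rfl fun w _ => Finset.sum_congr rfl fun a _ => ?_
          congr 1
          refine Finset.sum_congr rfl fun b _ => ?_
          rw [Finset.mul_sum]
          refine Finset.sum_congr rfl fun v _ => ?_
          ring
      _ ≤ ∑ w : Fin k → Λ, l * ∑ b : Λ, (∑ v : Fin k → Λ,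
            q (Fin.cons b v) * ∏ i, A (w i) (v i)) ^ 2 :=
          Finset.sum_le_sum fun w _ => hA _
      _ = l * ∑ b : Λ, ∑ w : Fin k → Λ, (∑ v : Fin k → Λ,
            q (Fin.cons b v) * ∏ i, A (w i) (v i)) ^ 2 := by
          rw [← Finset.mul_sum, Finset.sum_comm]
      _ ≤ l * ∑ b : Λ, l ^ k * ∑ v : Fin k → Λ, (q (Fin.cons b v)) ^ 2 := by
          gcongr with b
          exact ih (fun v => q (Fin.cons b v))
      _ = l ^ (k+1) * ∑ b : Λ, ∑ v : Fin k → Λ, (q (Fin.cons b v)) ^ 2 := by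
          rw [← Finset.mul_sum]; ring

lemma opnorm_fintype {κ : Type} [Fintype κ] [DecidableEq κ] (A : Λ → Λ → ℝ) (l : ℝ) (hl : 0 ≤ l)
    (hA : ∀ q : Λ → ℝ, ∑ u, (∑ v, A u v * q v) ^ 2 ≤ l * ∑ v, (q v) ^ 2)
    (q : (κ → Λ) → ℝ) :
    ∑ x : κ → Λ, (∑ y, q y * ∏ i, A (x i) (y i)) ^ 2
      ≤ l ^ (Fintype.card κ) * ∑ y, (q y) ^ 2 := by
  let e : κ ≃ Fin (Fintype.card κ) := Fintype.equivFin κ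
  let E : (Fin (Fintype.card κ) → Λ) ≃ (κ → Λ) := Equiv.arrowCongr e.symm (Equiv.refl Λ)
  have h := opnorm_fin A l hl hA (Fintype.card κ) (fun y => q (E y))
  rw [E.sum_comp (fun y => (q y) ^ 2)] at h
  refine le_trans (le_of_eq ?_) h
  rw [← E.sum_comp]
  refine Finset.sum_congr rfl fun x _ => ?_
  rw [← E.sum_comp]
  congr 1
  refine Finset.sum_congr rfl fun y _ => ?_
  congr 1
  rw [← e.symm.prod_comp]
  refine Finset.prod_congr rfl fun i _ => ?_
  simp [E]

end op

/-- sign of a bit -/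
noncomputable def sg (b : Bool) : ℝ := if b then -1 else 1

lemma sg_sq (b : Bool) : sg b * sg b = 1 := by cases b <;> simp [sg]
lemma abs_sg (b : Bool) : |sg b| = 1 := by cases b <;> simp [sg]

section dens
variable {ι Λ : Type} [Fintype ι] [DecidableEq ι] [Fintype Λ] [DecidableEq Λ]

/-- mass of a finite set -/
noncomputable def ms (μ : (ι → Λ) → ℝ) (X : Finset (ι → Λ)) : ℝ := ∑ x ∈ X, μ x

/-- cylinder restriction -/
def cyl (X : Finset (ι → Λ)) (J : Finset ι) (u : ι → Λ) : Finset (ι → Λ) :=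
  X.filter (fun x => ∀ j ∈ J, x j = u j)

def Dense (μ : (ι → Λ) → ℝ) (ω : ℝ) (F : Finset ι) (X : Finset (ι → Λ)) : Prop :=
  ∀ J ⊆ F, ∀ u, ms μ (cyl X J u) ≤ ω ^ J.card * ms μ X

/-- biases -/
noncomputable def bias (μ : (ι → Λ) → ℝ) (gd : Λ → Λ → Bool) (Y : Finset (ι → Λ))
    (K J : Finset ι) (v : ι → Λ) (x : ι → Λ) : ℝ :=
  ∑ y ∈ cyl Y J v, μ y * ∏ k ∈ K, sg (gd (x k) (y k))

variable (μ : (ι → Λ) → ℝ) (hμ : ∀ x, 0 ≤ μ x)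

lemma ms_nonneg {μ : (ι → Λ) → ℝ} (hμ : ∀ x, 0 ≤ μ x) (X : Finset (ι → Λ)) : 0 ≤ ms μ X :=
  Finset.sum_nonneg fun x _ => hμ x

lemma ms_mono {μ : (ι → Λ) → ℝ} (hμ : ∀ x, 0 ≤ μ x) {X Y : Finset (ι → Λ)} (h : X ⊆ Y) :
    ms μ X ≤ ms μ Y :=
  Finset.sum_le_sum_of_subset_of_nonneg h fun x _ _ => hμ x

lemma sum_restrict_le {μ : (ι → Λ) → ℝ} (hμ : ∀ x, 0 ≤ μ x) {ω : ℝ} (hω : 0 ≤ ω)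
    {F K : Finset ι} (hK : K ⊆ F)
    {X : Finset (ι → Λ)} (hX : Dense μ ω F X) (w : K → Λ) :
    ∑ x ∈ X with K.restrict x = w, μ x ≤ ω ^ K.card * ms μ X := by
  by_cases hne : (X.filter fun x => K.restrict x = w).Nonempty
  · obtain ⟨x0, hx0⟩ := hne
    refine le_trans (le_of_eq ?_) (hX K hK x0)
    unfold ms cyl
    congr 1
    ext x
    simp only [Finset.mem_filter] at hx0 ⊢
    rw [← hx0.2]
    constructor
    · rintro ⟨h1, h2⟩
      exact ⟨h1, fun j hj => congrFun h2 ⟨j, hj⟩⟩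
    · rintro ⟨h1, h2⟩
      exact ⟨h1, funext fun j => h2 j j.2⟩
  · rw [Finset.not_nonempty_iff_eq_empty] at hne
    rw [hne, Finset.sum_empty]
    exact mul_nonneg (pow_nonneg hω _) (ms_nonneg hμ _)

/-- A function of the `K`-part averaged against a dense measure. -/
lemma sum_dense_le {μ : (ι → Λ) → ℝ} (hμ : ∀ x, 0 ≤ μ x) {ω : ℝ} (hω : 0 ≤ ω)
    {F K : Finset ι} (hK : K ⊆ F)
    {X : Finset (ι → Λ)} (hX : Dense μ ω F X) (b : (K → Λ) → ℝ) (hb : ∀ w, 0 ≤ b w) :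
    ∑ x ∈ X, μ x * b (K.restrict x) ≤ ω ^ K.card * ms μ X * ∑ w, b w := by
  rw [← Finset.sum_fiberwise X (fun x => K.restrict x), Finset.mul_sum]
  refine Finset.sum_le_sum fun w _ => ?_
  calc ∑ x ∈ X with K.restrict x = w, μ x * b (K.restrict x)
      = (∑ x ∈ X with K.restrict x = w, μ x) * b w := by
        rw [Finset.sum_mul]
        refine Finset.sum_congr rfl fun x hx => ?_
        rw [(Finset.mem_filter.mp hx).2]
    _ ≤ _ := mul_le_mul_of_nonneg_right (sum_restrict_le hμ hω hK hX w) (hb w)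

/-- bias with a subtype-valued restriction. -/
noncomputable def bias' (μ : (ι → Λ) → ℝ) (gd : Λ → Λ → Bool) (Y : Finset (ι → Λ))
    (K J : Finset ι) (v : J → Λ) (x : ι → Λ) : ℝ :=
  ∑ y ∈ Y with J.restrict y = v, μ y * ∏ k ∈ K, sg (gd (x k) (y k))

lemma bias_eq (gd : Λ → Λ → Bool) (Y : Finset (ι → Λ)) (K J : Finset ι) (v x : ι → Λ) :
    bias μ gd Y K J v x = bias' μ gd Y K J (J.restrict v) x := by
  unfold bias bias' cyl
  congr 1
  ext y
  simp only [Finset.mem_filter]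
  refine and_congr_right fun _ => ?_
  constructor
  · intro h; exact funext fun j => h j j.2
  · intro h j hj; exact congrFun h ⟨j, hj⟩

set_option maxHeartbeats 1000000 in
lemma second_moment {μ : (ι → Λ) → ℝ} (hμ : ∀ x, 0 ≤ μ x) {ω l : ℝ} (hω : 0 ≤ ω) (hl : 0 ≤ l)
    {gd : Λ → Λ → Bool}
    (hA : ∀ q : Λ → ℝ, ∑ u, (∑ v, sg (gd u v) * q v) ^ 2 ≤ l * ∑ v, (q v) ^ 2)
    {F K J : Finset ι} (hK : K ⊆ F) (hJ : J ⊆ F) (hKJ : Disjoint J K)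
    {X Y : Finset (ι → Λ)} (hX : Dense μ ω F X) (hY : Dense μ ω F Y) :
    ∑ x ∈ X, μ x * ∑ v : J → Λ, (bias' μ gd Y K J v x) ^ 2 ≤
      (ω ^ 2 * l) ^ K.card * ω ^ J.card * ms μ X * (ms μ Y) ^ 2 := by
  obtain ⟨q, hq⟩ : ∃ q : (J → Λ) → (K → Λ) → ℝ, ∀ v w, q v w =
    ∑ y ∈ Y with (J.restrict y = v ∧ K.restrict y = w), μ y := ⟨_, fun _ _ => rfl⟩
  have hq0 : ∀ v w, 0 ≤ q v w := fun v w => by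
    rw [hq]; exact Finset.sum_nonneg fun x _ => hμ x
  have hq1 : ∀ v w, q v w ≤ ω ^ (K.card + J.card) * ms μ Y := by
    intro v w
    by_cases hne : (Y.filter fun y => J.restrict y = v ∧ K.restrict y = w).Nonempty
    · obtain ⟨y0, hy0⟩ := hne
      have := sum_restrict_le hμ hω (Finset.union_subset hK hJ) hY ((K ∪ J).restrict y0)
      rw [Finset.card_union_of_disjoint hKJ.symm] at this
      refine le_trans ?_ this
      rw [hq]
      refine Finset.sum_le_sum_of_subset_of_nonneg ?_ fun x _ _ => hμ x
      intro y hy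
      simp only [Finset.mem_filter] at hy hy0 ⊢
      refine ⟨hy.1, funext fun j => ?_⟩
      rcases Finset.mem_union.mp j.2 with h | h
      · exact congrFun (hy.2.2.trans hy0.2.2.symm) ⟨j, h⟩
      · exact congrFun (hy.2.1.trans hy0.2.1.symm) ⟨j, h⟩
    · rw [Finset.not_nonempty_iff_eq_empty] at hne
      rw [hq, hne, Finset.sum_empty]
      exact mul_nonneg (pow_nonneg hω _) (ms_nonneg hμ _)
  have hqs : ∑ v, ∑ w, q v w = ms μ Y := by
    unfold ms
    rw [← Finset.sum_fiberwise Y (fun y => J.restrict y)]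
    refine Finset.sum_congr rfl fun v _ => ?_
    rw [← Finset.sum_fiberwise (Y.filter _) (fun y => K.restrict y)]
    refine Finset.sum_congr rfl fun w _ => ?_
    rw [Finset.filter_filter, hq]
  obtain ⟨b, hbd⟩ : ∃ b : (J → Λ) → (K → Λ) → ℝ, ∀ v x, b v x =
    ∑ w, q v w * ∏ k, sg (gd (x k) (w k)) := ⟨_, fun _ _ => rfl⟩
  have hb : ∀ v x, bias' μ gd Y K J v x = b v (K.restrict x) := by
    intro v x
    rw [hbd, bias']
    rw [← Finset.sum_fiberwise (Y.filter _) (fun y => K.restrict y)]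
    refine Finset.sum_congr rfl fun w _ => ?_
    rw [hq, Finset.filter_filter, Finset.sum_mul]
    refine Finset.sum_congr rfl fun y hy => ?_
    rw [← (Finset.mem_filter.mp hy).2.2, ← Finset.prod_coe_sort K]
    rfl
  have h1 : ∀ v, ∑ x : K → Λ, (b v x) ^ 2 ≤ l ^ K.card * ∑ w, (q v w) ^ 2 := by
    intro v
    have := opnorm_fintype (κ := K) (fun u v => sg (gd u v)) l hl hA (q v)
    rw [Fintype.card_coe] at this
    simpa only [hbd] using this
  have hm0 : 0 ≤ ω ^ K.card * ms μ X := mul_nonneg (pow_nonneg hω _) (ms_nonneg hμ _)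
  have s1 : ∑ x ∈ X, μ x * ∑ v : J → Λ, (bias' μ gd Y K J v x) ^ 2
      ≤ ω ^ K.card * ms μ X * ∑ w, ∑ v : J → Λ, (b v w) ^ 2 := by
    have := sum_dense_le hμ hω hK hX (fun w => ∑ v : J → Λ, (b v w) ^ 2)
      (fun w => Finset.sum_nonneg fun v _ => sq_nonneg _)
    refine le_trans (le_of_eq ?_) this
    refine Finset.sum_congr rfl fun x _ => ?_
    congr 1
    refine Finset.sum_congr rfl fun v _ => ?_
    rw [hb]
  have s2 : ∑ w, ∑ v : J → Λ, (b v w) ^ 2 ≤ l ^ K.card * ((ω ^ (K.card + J.card) * ms μ Y) * ms μ Y) := by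
    rw [Finset.sum_comm, ← hqs, Finset.mul_sum, Finset.mul_sum]
    refine Finset.sum_le_sum fun v _ => ?_
    refine (h1 v).trans ?_
    refine mul_le_mul_of_nonneg_left ?_ (pow_nonneg hl _)
    rw [Finset.mul_sum]
    refine Finset.sum_le_sum fun w _ => ?_
    rw [sq, hqs]
    exact mul_le_mul_of_nonneg_right (hq1 v w) (hq0 v w)
  refine s1.trans ((mul_le_mul_of_nonneg_left s2 hm0).trans (le_of_eq ?_))
  generalize ms μ X = a
  generalize ms μ Y = c
  rw [pow_add, mul_pow, ← pow_mul, mul_comm 2, pow_mul]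
  ring
end dens
end KL


open Classical
set_option linter.unusedSectionVars false
set_option linter.unusedSimpArgs false

namespace KL

/-- Numeric parameters. -/
structure Par (n C : ℕ) (N B : ℝ) : Prop where
  hN : 0 < N
  hB : 1024 ≤ B
  hC : B * N ≤ (B ^ 2) ^ C
  hn : (1 + 1 / B) ^ n ≤ 9 / 8
  hG : ∃ G : ℝ, 1 ≤ G ∧ (1 + 1 / G) ^ n ≤ 9 / 8 ∧ 8 * G ^ C ≤ B

/-- weak density parameter -/
noncomputable def wk (N B : ℝ) : ℝ := B ^ 2 / N
/-- strong density parameter -/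
noncomputable def st (N B : ℝ) : ℝ := B / N
/-- spectral parameter -/
noncomputable def lam (N B : ℝ) : ℝ := 2 * N ^ 2 / B ^ 32

namespace Par
variable {n C : ℕ} {N B : ℝ}

lemma B0 (P : Par n C N B) : 0 < B := by linarith [P.hB]
lemma wk0 (P : Par n C N B) : 0 < wk N B := div_pos (pow_pos P.B0 _) P.hN
lemma st0 (P : Par n C N B) : 0 < st N B := div_pos P.B0 P.hN
lemma lam0 (P : Par n C N B) : 0 < lam N B := div_pos (mul_pos two_pos (pow_pos P.hN _)) (pow_pos P.B0 _)

lemma key (P : Par n C N B) (k j : ℕ) (h : C * j ≤ k) :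
    (wk N B ^ 2 * lam N B / (1 / B) ^ 2) ^ k * (1 / wk N B) ^ j ≤ (1 / B) ^ k * (1 / B) ^ j := by
  have hB := P.hB
  have B0 := P.B0
  have N0 := P.hN
  have e1 : wk N B ^ 2 * lam N B / (1 / B) ^ 2 = 2 / B ^ 26 := by
    unfold wk lam
    field_simp
  have e2 : (1 / wk N B) ≤ (B * N) * (1 / B) := by
    unfold wk
    rw [one_div_div, div_le_iff₀ (by positivity)]
    have : (B * N) * (1 / B) * B ^ 2 = N * B ^ 2 := by field_simp
    rw [this]
    nlinarith [one_le_pow₀ (show 1 ≤ B by linarith) (n := 2)]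
  rw [e1]
  have e3 : (1 / wk N B) ^ j ≤ (B ^ 2) ^ k * (1 / B) ^ j := by
    calc (1 / wk N B) ^ j ≤ ((B * N) * (1 / B)) ^ j :=
          pow_le_pow_left₀ (by have := P.wk0; positivity) e2 j
      _ = (B * N) ^ j * (1 / B) ^ j := mul_pow _ _ _
      _ ≤ ((B ^ 2) ^ C) ^ j * (1 / B) ^ j := by
          gcongr
          exact P.hC
      _ ≤ (B ^ 2) ^ k * (1 / B) ^ j := by
          rw [← pow_mul (B ^ 2) C j]
          gcongr
          exact one_le_pow₀ (by linarith)
  calc (2 / B ^ 26) ^ k * (1 / wk N B) ^ j ≤ (2 / B ^ 26) ^ k * ((B ^ 2) ^ k * (1 / B) ^ j) := by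
        gcongr
    _ = (2 / B ^ 26 * B ^ 2) ^ k * (1 / B) ^ j := by rw [mul_pow]; ring
    _ ≤ _ := by
        gcongr
        have : 2 / B ^ 26 * B ^ 2 = (2 / B ^ 23) * (1 / B) := by field_simp
        rw [this]
        refine mul_le_of_le_one_left (by positivity) ?_
        rw [div_le_one (by positivity)]
        have : B ^ 1 ≤ B ^ 23 := pow_le_pow_right₀ (by linarith) (by norm_num)
        linarith

end Par

lemma sum_powerset_pow {ι : Type} [DecidableEq ι] (F : Finset ι) (s : ℝ) :
    ∑ K ∈ F.powerset, s ^ K.card = (1 + s) ^ F.card := by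
  have := Finset.sum_pow_mul_eq_add_pow s 1 F
  simp only [one_pow, mul_one] at this
  rw [this, add_comm]

lemma sum_powerset_le {ι : Type} [Fintype ι] [DecidableEq ι] (F : Finset ι) (s : ℝ) (hs : 0 ≤ s)
    (h : (1 + s) ^ (Fintype.card ι) ≤ 9 / 8) :
    ∑ K ∈ F.powerset, s ^ K.card ≤ 9 / 8 := by
  rw [sum_powerset_pow]
  exact (pow_le_pow_right₀ (by linarith) (Finset.card_le_univ F)).trans h

lemma sum_powerset_le' {ι : Type} [Fintype ι] [DecidableEq ι] (F : Finset ι) (s : ℝ) (hs : 0 ≤ s)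
    (h : (1 + s) ^ (Fintype.card ι) ≤ 9 / 8) :
    ∑ K ∈ F.powerset.filter (·.Nonempty), s ^ K.card ≤ 1 / 8 := by
  have h1 := sum_powerset_le F s hs h
  have : F.powerset.filter (·.Nonempty) = F.powerset.erase ∅ := by
    ext K
    simp only [Finset.mem_filter, Finset.mem_erase, Finset.nonempty_iff_ne_empty]
    tauto
  rw [this]
  have h2 := Finset.add_sum_erase F.powerset (fun K => s ^ K.card) (Finset.empty_mem_powerset F)
  simp only [Finset.card_empty, pow_zero] at h2
  linarith

section dens
variable {ι Λ : Type} [Fintype ι] [DecidableEq ι] [Fintype Λ] [DecidableEq Λ]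

def Good (μ : (ι → Λ) → ℝ) (gd : Λ → Λ → Bool) (Y : Finset (ι → Λ)) (F : Finset ι)
    (C : ℕ) (θ ω : ℝ) (x : ι → Λ) : Prop :=
  ∀ K ⊆ F, K.Nonempty → ∀ J ⊆ F, Disjoint J K → C * J.card ≤ K.card → ∀ v,
    |bias μ gd Y K J v x| ≤ θ ^ K.card * ω ^ J.card * ms μ Y

/-- The spectral hypothesis on the gadget. -/
def Spec (gd : Λ → Λ → Bool) (l : ℝ) : Prop :=
  ∀ q : Λ → ℝ, ∑ u, (∑ v, sg (gd u v) * q v) ^ 2 ≤ l * ∑ v, (q v) ^ 2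

lemma exists_good {C : ℕ} {N B : ℝ} (P : Par (Fintype.card ι) C N B)
    {μ : (ι → Λ) → ℝ} (hμ : ∀ x, 0 ≤ μ x)
    {gd : Λ → Λ → Bool} (hA : Spec gd (lam N B)) {F : Finset ι}
    {X Y : Finset (ι → Λ)} (hX : Dense μ (wk N B) F X) (hY : Dense μ (wk N B) F Y)
    (hY0 : 0 < ms μ Y) :
    ∃ X' ⊆ X, ms μ X / 2 ≤ ms μ X' ∧ ∀ x ∈ X', Good μ gd Y F C (1 / B) (wk N B) x := by
  have B0 := P.B0
  have w0 := P.wk0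
  have l0 := P.lam0
  refine ⟨X.filter (Good μ gd Y F C (1 / B) (wk N B)), Finset.filter_subset _ _, ?_,
    fun x hx => (Finset.mem_filter.mp hx).2⟩
  set ω := wk N B with hω
  set l := lam N B with hl
  set idx := (F.powerset.filter (·.Nonempty) ×ˢ F.powerset).filter
    (fun p => Disjoint p.2 p.1 ∧ C * p.2.card ≤ p.1.card) with hidx
  set thr : Finset ι → Finset ι → ℝ := fun K J => (1 / B) ^ K.card * ω ^ J.card * ms μ Y with hthr
  have thr0 : ∀ K J, 0 < thr K J := fun K J => by simp only [hthr]; positivity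
  set T : (ι → Λ) → ℝ := fun x => ∑ p ∈ idx, (1 / thr p.1 p.2 ^ 2) *
    ∑ v : p.2 → Λ, (bias' μ gd Y p.1 p.2 v x) ^ 2 with hT
  have hT0 : ∀ x, 0 ≤ T x := fun x => Finset.sum_nonneg fun p _ =>
    mul_nonneg (by positivity) (Finset.sum_nonneg fun v _ => sq_nonneg _)
  have hbad : ∀ x, ¬ Good μ gd Y F C (1 / B) ω x → 1 ≤ T x := by
    intro x hx
    unfold Good at hx
    push Not at hx
    obtain ⟨K, hK, hK1, J, hJ, hJK, hc, v, hv⟩ := hx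
    have hp : (K, J) ∈ idx := by
      simp only [hidx, Finset.mem_filter, Finset.mem_product, Finset.mem_powerset]
      exact ⟨⟨⟨hK, hK1⟩, hJ⟩, hJK, hc⟩
    have h1 := Finset.single_le_sum (f := fun p : Finset ι × Finset ι => (1 / thr p.1 p.2 ^ 2) *
      ∑ v : p.2 → Λ, (bias' μ gd Y p.1 p.2 v x) ^ 2)
      (fun p _ => mul_nonneg (by positivity) (Finset.sum_nonneg fun v _ => sq_nonneg _)) hp
    refine le_trans ?_ h1
    have h2 := Finset.single_le_sum (f := fun v : J → Λ => (bias' μ gd Y K J v x) ^ 2)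
      (fun v _ => sq_nonneg _) (Finset.mem_univ (J.restrict v))
    simp only at h2 ⊢
    rw [← bias_eq] at h2
    have h3 : thr K J ^ 2 ≤ bias μ gd Y K J v x ^ 2 := by
      rw [← sq_abs (bias μ gd Y K J v x)]
      exact pow_le_pow_left₀ (thr0 K J).le hv.le 2
    rw [one_div, inv_mul_eq_div, le_div_iff₀ (pow_pos (thr0 K J) 2), one_mul]
    exact h3.trans h2
  have hsum : ∑ x ∈ X, μ x * T x ≤ ms μ X * (1 / 2) := by
    have mX := ms_nonneg hμ X
    calc ∑ x ∈ X, μ x * T x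
        = ∑ p ∈ idx, (1 / thr p.1 p.2 ^ 2) *
            ∑ x ∈ X, μ x * ∑ v : p.2 → Λ, (bias' μ gd Y p.1 p.2 v x) ^ 2 := by
          simp only [hT, Finset.mul_sum]
          rw [Finset.sum_comm]
          refine Finset.sum_congr rfl fun p _ => Finset.sum_congr rfl fun x _ =>
            Finset.sum_congr rfl fun v _ => ?_
          ring
      _ ≤ ∑ p ∈ idx, ms μ X * ((1 / B) ^ p.1.card * (1 / B) ^ p.2.card) := by
          refine Finset.sum_le_sum fun p hp => ?_
          simp only [hidx, Finset.mem_filter, Finset.mem_product, Finset.mem_powerset] at hp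
          have h1 := second_moment hμ w0.le l0.le hA hp.1.1.1 hp.1.2 hp.2.1 hX hY
          refine (mul_le_mul_of_nonneg_left h1 (by positivity)).trans ?_
          refine le_trans (le_of_eq ?_) (mul_le_mul_of_nonneg_left (P.key _ _ hp.2.2) mX)
          simp only [hthr]
          rw [div_pow (ω ^ 2 * l), one_div_pow ω]
          have hB1 : (1 / B) ≠ 0 := by positivity
          have hω1 : ω ≠ 0 := w0.ne'
          have e9 : ((1 / B) ^ 2) ^ p.1.card = ((1 / B) ^ p.1.card) ^ 2 := by
            rw [← pow_mul, mul_comm 2, pow_mul]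
          rw [e9]
          have hB2 : (1 / B) ^ p.1.card ≠ 0 := by positivity
          generalize (1 / B) ^ p.1.card = q at *
          field_simp
      _ ≤ ∑ p ∈ F.powerset.filter (·.Nonempty) ×ˢ F.powerset,
            ms μ X * ((1 / B) ^ p.1.card * (1 / B) ^ p.2.card) :=
          Finset.sum_le_sum_of_subset_of_nonneg (Finset.filter_subset _ _)
            fun p _ _ => by positivity
      _ = ms μ X * ((∑ K ∈ F.powerset.filter (·.Nonempty), (1 / B) ^ K.card) *
            ∑ J ∈ F.powerset, (1 / B) ^ J.card) := by
          rw [← Finset.mul_sum, Finset.sum_product, Finset.sum_mul_sum]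
      _ ≤ ms μ X * ((1 / 8) * (9 / 8)) := by
          have a1 := sum_powerset_le' F (1 / B) (by positivity) P.hn
          have a2 := sum_powerset_le F (1 / B) (by positivity) P.hn
          gcongr
      _ ≤ _ := by nlinarith
  have h3 : ms μ (X.filter (fun x => ¬ Good μ gd Y F C (1 / B) ω x)) ≤ ms μ X * (1 / 2) := by
    refine le_trans ?_ hsum
    unfold ms
    rw [Finset.sum_filter]
    refine Finset.sum_le_sum fun x _ => ?_
    by_cases h : Good μ gd Y F C (1 / B) ω x
    · rw [if_neg (not_not.mpr h)]; exact mul_nonneg (hμ x) (hT0 x)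
    · rw [if_pos h]; exact le_mul_of_one_le_right (hμ x) (hbad x h)
  have h4 : ms μ (X.filter (Good μ gd Y F C (1 / B) ω)) +
      ms μ (X.filter (fun x => ¬ Good μ gd Y F C (1 / B) ω x)) = ms μ X :=
    Finset.sum_filter_add_sum_filter_not _ _ _
  linarith

/-- Mass of a cylinder intersected with a gadget-event. -/
lemma event_expand (μ : (ι → Λ) → ℝ) (gd : Λ → Λ → Bool) (Y : Finset (ι → Λ)) (I J : Finset ι)
    (v x : ι → Λ) (z : ι → Bool) :
    ms μ (cyl (Y.filter fun y => ∀ i ∈ I, gd (x i) (y i) = z i) J v) =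
      (1 / 2) ^ I.card * ∑ K ∈ I.powerset, (∏ k ∈ K, sg (z k)) * bias μ gd Y K J v x := by
  have h1 : ∀ y : ι → Λ, (if ∀ i ∈ I, gd (x i) (y i) = z i then (1 : ℝ) else 0) =
      (1 / 2) ^ I.card * ∑ K ∈ I.powerset, (∏ k ∈ K, sg (z k)) * ∏ k ∈ K, sg (gd (x k) (y k)) := by
    intro y
    have : ∀ K ∈ I.powerset, (∏ k ∈ K, sg (z k)) * ∏ k ∈ K, sg (gd (x k) (y k))
        = ∏ k ∈ K, (sg (z k) * sg (gd (x k) (y k))) := fun K _ => Finset.prod_mul_distrib.symm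
    rw [Finset.sum_congr rfl this, ← Finset.prod_one_add, ← Finset.prod_const, ← Finset.prod_mul_distrib]
    split_ifs with h
    · symm
      refine Finset.prod_eq_one fun i hi => ?_
      rw [h i hi, sg_sq]; norm_num
    · push Not at h
      obtain ⟨i, hi, hne⟩ := h
      symm
      refine Finset.prod_eq_zero hi ?_
      revert hne
      cases gd (x i) (y i) <;> cases z i <;> simp [sg]
  unfold ms cyl bias
  rw [Finset.filter_comm, Finset.sum_filter]
  simp only [Finset.mul_sum]
  rw [Finset.sum_comm]
  refine Finset.sum_congr rfl fun y _ => ?_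
  have h2 := h1 y
  have h3 : (if ∀ i ∈ I, gd (x i) (y i) = z i then μ y else 0) =
      μ y * (if ∀ i ∈ I, gd (x i) (y i) = z i then (1 : ℝ) else 0) := by split_ifs <;> simp
  rw [h3, h2, Finset.mul_sum, Finset.mul_sum]
  refine Finset.sum_congr rfl fun K _ => ?_
  ring

lemma abs_prod_sg {α : Type} (K : Finset α) (f : α → Bool) : |∏ k ∈ K, sg (f k)| = 1 := by
  rw [Finset.abs_prod]
  exact Finset.prod_eq_one fun k _ => abs_sg _

lemma abs_bias_le {μ : (ι → Λ) → ℝ} (hμ : ∀ x, 0 ≤ μ x) (gd : Λ → Λ → Bool)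
    (Y : Finset (ι → Λ)) (K J : Finset ι) (v x : ι → Λ) :
    |bias μ gd Y K J v x| ≤ ms μ (cyl Y J v) := by
  unfold bias ms
  refine (Finset.abs_sum_le_sum_abs _ _).trans (Finset.sum_le_sum fun y _ => ?_)
  rw [abs_mul, abs_prod_sg, mul_one, abs_of_nonneg (hμ y)]

lemma cyl_empty (Y : Finset (ι → Λ)) (v : ι → Λ) : cyl Y ∅ v = Y := by
  unfold cyl; simp

lemma bias_empty (μ : (ι → Λ) → ℝ) (gd : Λ → Λ → Bool)
    (Y : Finset (ι → Λ)) (J : Finset ι) (v x : ι → Λ) :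
    bias μ gd Y ∅ J v x = ms μ (cyl Y J v) := by
  unfold bias ms; simp

lemma good_lower {C : ℕ} {N B : ℝ} (P : Par (Fintype.card ι) C N B)
    {μ : (ι → Λ) → ℝ} (hμ : ∀ x, 0 ≤ μ x)
    {gd : Λ → Λ → Bool} {F I : Finset ι} (hI : I ⊆ F) {Y : Finset (ι → Λ)} {x : ι → Λ}
    (hx : Good μ gd Y F C (1 / B) (wk N B) x) (z : ι → Bool) :
    (1 / 2) ^ I.card * (ms μ Y / 2) ≤
      ms μ (Y.filter fun y => ∀ i ∈ I, gd (x i) (y i) = z i) := by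
  have B0 := P.B0
  have e := event_expand μ gd Y I ∅ x x z
  rw [cyl_empty] at e
  rw [e]
  refine mul_le_mul_of_nonneg_left ?_ (by positivity)
  rw [← Finset.add_sum_erase _ _ (Finset.empty_mem_powerset I), bias_empty, cyl_empty]
  have h1 : |∑ K ∈ I.powerset.erase ∅, (∏ k ∈ K, sg (z k)) * bias μ gd Y K ∅ x x| ≤
      (1 / 8) * ms μ Y := by
    refine (Finset.abs_sum_le_sum_abs _ _).trans ?_
    have : I.powerset.erase ∅ = I.powerset.filter (·.Nonempty) := by
      ext K
      simp only [Finset.mem_filter, Finset.mem_erase, Finset.nonempty_iff_ne_empty]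
      tauto
    rw [this]
    refine le_trans ?_ (mul_le_mul_of_nonneg_right
      (sum_powerset_le' I (1 / B) (by positivity) P.hn) (ms_nonneg hμ Y))
    rw [Finset.sum_mul]
    refine Finset.sum_le_sum fun K hK => ?_
    rw [Finset.mem_filter, Finset.mem_powerset] at hK
    rw [abs_mul, abs_prod_sg, one_mul]
    have := hx K (hK.1.trans hI) hK.2 ∅ (Finset.empty_subset _) (by simp) (by simp) x
    simpa using this
  have h2 := (abs_le.mp h1).1
  have h3 := ms_nonneg hμ Y
  simp only [Finset.prod_empty, one_mul]
  linarith

lemma good_dense {C : ℕ} {N B : ℝ} (P : Par (Fintype.card ι) C N B)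
    {μ : (ι → Λ) → ℝ} (hμ : ∀ x, 0 ≤ μ x)
    {gd : Λ → Λ → Bool} {F I : Finset ι} (hI : I ⊆ F) {Y : Finset (ι → Λ)} {x : ι → Λ}
    (hx : Good μ gd Y F C (1 / B) (wk N B) x) (hY : Dense μ (st N B) F Y) (z : ι → Bool) :
    Dense μ (wk N B) (F \ I) (Y.filter fun y => ∀ i ∈ I, gd (x i) (y i) = z i) := by
  have B0 := P.B0
  have w0 := P.wk0
  have s0 := P.st0
  intro J hJ v
  by_cases hJ0 : J = ∅
  · subst hJ0; rw [cyl_empty]; simp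
  have hJ1 : 1 ≤ J.card := Finset.card_pos.mpr (Finset.nonempty_iff_ne_empty.mpr hJ0)
  have hlow := good_lower P hμ hI hx z
  have mY := ms_nonneg hμ Y
  obtain ⟨G, hG1, hG2, hG3⟩ := P.hG
  have hup : ms μ (cyl (Y.filter fun y => ∀ i ∈ I, gd (x i) (y i) = z i) J v) ≤
      (1 / 2) ^ I.card * (wk N B ^ J.card * (ms μ Y / 2)) := by
    rw [event_expand]
    refine mul_le_mul_of_nonneg_left ?_ (by positivity)
    calc ∑ K ∈ I.powerset, (∏ k ∈ K, sg (z k)) * bias μ gd Y K J v x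
        ≤ ∑ K ∈ I.powerset, ((st N B ^ J.card * ms μ Y * G ^ (C * J.card)) * (1 / G) ^ K.card +
            (if K.Nonempty then (wk N B ^ J.card * ms μ Y) * (1 / B) ^ K.card else 0)) := by
          refine Finset.sum_le_sum fun K hK => ?_
          rw [Finset.mem_powerset] at hK
          refine (le_abs_self _).trans ?_
          rw [abs_mul, abs_prod_sg, one_mul]
          have p2 : 0 ≤ (if K.Nonempty then (wk N B ^ J.card * ms μ Y) * (1 / B) ^ K.card else 0) := by
            split_ifs <;> positivity
          by_cases hc : C * J.card ≤ K.card ∧ K.Nonempty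
          · have hd : Disjoint J K := by
              rw [Finset.disjoint_left]
              intro j hj hk
              exact (Finset.mem_sdiff.mp (hJ hj)).2 (hK hk)
            have := hx K (hK.trans hI) hc.2 J (hJ.trans Finset.sdiff_subset) hd hc.1 v
            rw [if_pos hc.2]
            have p1 : 0 ≤ (st N B ^ J.card * ms μ Y * G ^ (C * J.card)) * (1 / G) ^ K.card := by
              positivity
            calc _ ≤ _ := this
              _ = (wk N B ^ J.card * ms μ Y) * (1 / B) ^ K.card := by ring
              _ ≤ _ := by linarith
          · have hle : K.card ≤ C * J.card := by
              by_contra hcon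
              push Not at hcon
              exact hc ⟨hcon.le, Finset.card_pos.mp (by omega)⟩
            have h1 := (abs_bias_le hμ gd Y K J v x).trans (hY J (hJ.trans Finset.sdiff_subset) v)
            have h2 : 1 ≤ G ^ (C * J.card) * (1 / G) ^ K.card := by
              rw [one_div, inv_pow, ← div_eq_mul_inv, le_div_iff₀ (by positivity), one_mul]
              exact pow_le_pow_right₀ hG1 hle
            have h3 : 0 ≤ st N B ^ J.card * ms μ Y := by positivity
            nlinarith
      _ = (st N B ^ J.card * ms μ Y * G ^ (C * J.card)) * ∑ K ∈ I.powerset, (1 / G) ^ K.card +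
            (wk N B ^ J.card * ms μ Y) *
              ∑ K ∈ I.powerset.filter (·.Nonempty), (1 / B) ^ K.card := by
          rw [Finset.sum_add_distrib, ← Finset.mul_sum, ← Finset.sum_filter, ← Finset.mul_sum]
      _ ≤ (st N B ^ J.card * ms μ Y * G ^ (C * J.card)) * (9 / 8) +
            (wk N B ^ J.card * ms μ Y) * (1 / 8) := by
          have a1 := sum_powerset_le' I (1 / B) (by positivity) P.hn
          have a2 := sum_powerset_le I (1 / G) (by positivity) hG2
          gcongr
      _ ≤ _ := by
          have h5 : st N B ^ J.card * G ^ (C * J.card) ≤ (1 / 8) * wk N B ^ J.card := by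
            rw [pow_mul, ← mul_pow]
            have h6 : st N B * G ^ C ≤ (1 / 8) * wk N B := by
              unfold st wk
              rw [div_mul_eq_mul_div, ← mul_div_assoc]
              exact div_le_div_of_nonneg_right (by nlinarith) P.hN.le
            calc (st N B * G ^ C) ^ J.card ≤ ((1 / 8) * wk N B) ^ J.card := by gcongr
              _ = (1 / 8) ^ J.card * wk N B ^ J.card := mul_pow _ _ _
              _ ≤ _ := by
                  gcongr
                  calc (1 / 8 : ℝ) ^ J.card ≤ (1 / 8) ^ 1 :=
                        pow_le_pow_of_le_one (by norm_num) (by norm_num) hJ1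
                    _ = _ := by norm_num
          have h7 := mul_le_mul_of_nonneg_right h5 mY
          have h8 : 0 ≤ wk N B ^ J.card * ms μ Y := by positivity
          nlinarith
  calc _ ≤ _ := hup
    _ = wk N B ^ J.card * ((1 / 2) ^ I.card * (ms μ Y / 2)) := by ring
    _ ≤ _ := by gcongr

lemma exists_fix {μ : (ι → Λ) → ℝ} (hμ : ∀ x, 0 ≤ μ x) {ω : ℝ} (hω : 0 < ω) (F : Finset ι)
    (X : Finset (ι → Λ)) (u0 : ι → Λ) :
    ∃ I ⊆ F, ∃ u : ι → Λ, ω ^ I.card * ms μ X ≤ ms μ (cyl X I u) ∧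
      Dense μ ω (F \ I) (cyl X I u) := by
  let s : Finset (Finset ι × (ι → Λ)) := (F.powerset ×ˢ Finset.univ).filter
    (fun p => ω ^ p.1.card * ms μ X ≤ ms μ (cyl X p.1 p.2))
  have hs : s.Nonempty := ⟨(∅, u0), by simp [s, cyl_empty]⟩
  obtain ⟨⟨I, u⟩, hIu, hmax⟩ := s.exists_max_image (fun p => p.1.card) hs
  simp only [s, Finset.mem_filter, Finset.mem_product, Finset.mem_powerset, Finset.mem_univ,
    and_true] at hIu hmax
  refine ⟨I, hIu.1, u, hIu.2, ?_⟩
  intro J hJ v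
  by_contra hcon
  push Not at hcon
  have hd : Disjoint I J := by
    rw [Finset.disjoint_right]
    intro j hj
    exact (Finset.mem_sdiff.mp (hJ hj)).2
  have hcyl : cyl (cyl X I u) J v = cyl X (I ∪ J) (I.piecewise u v) := by
    unfold cyl
    rw [Finset.filter_filter]
    refine Finset.filter_congr fun x _ => ?_
    constructor
    · rintro ⟨h1, h2⟩ j hj
      by_cases hjI : j ∈ I
      · rw [Finset.piecewise_eq_of_mem _ _ _ hjI]; exact h1 j hjI
      · rw [Finset.piecewise_eq_of_notMem _ _ _ hjI]
        exact h2 j ((Finset.mem_union.mp hj).resolve_left hjI)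
    · intro h
      constructor
      · intro j hj
        rw [h j (Finset.mem_union_left _ hj), Finset.piecewise_eq_of_mem _ _ _ hj]
      · intro j hj
        rw [h j (Finset.mem_union_right _ hj),
          Finset.piecewise_eq_of_notMem _ _ _ (Finset.disjoint_right.mp hd hj)]
  have hJ0 : J.card ≠ 0 := by
    intro h
    rw [Finset.card_eq_zero] at h
    subst h
    rw [cyl_empty] at hcon
    simp at hcon
  have h2 : ω ^ (I ∪ J).card * ms μ X ≤ ms μ (cyl X (I ∪ J) (I.piecewise u v)) := by
    rw [← hcyl, Finset.card_union_of_disjoint hd, pow_add]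
    have := mul_le_mul_of_nonneg_left hIu.2 (pow_nonneg hω.le J.card)
    calc _ = ω ^ J.card * (ω ^ I.card * ms μ X) := by ring
      _ ≤ _ := this
      _ ≤ _ := hcon.le
  have h3 := hmax (I ∪ J, I.piecewise u v)
    ⟨Finset.union_subset hIu.1 (hJ.trans Finset.sdiff_subset), h2⟩
  simp only [Finset.card_union_of_disjoint hd] at h3
  omega

end dens
end KL


open Classical
set_option linter.unusedSectionVars false
set_option linter.unusedSimpArgs false
set_option linter.unusedVariables false

namespace KL

lemma leaves_pos {X Y O : Type} (p : Protocol X Y O) : 1 ≤ p.leaves := by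
  induction p with
  | leaf o => simp [Protocol.leaves]
  | nodeA h p0 p1 ih0 ih1 => simp only [Protocol.leaves]; omega
  | nodeB h p0 p1 ih0 ih1 => simp only [Protocol.leaves]; omega

lemma split_protocol {X Y O : Type} (T : ℕ) (hT : 1 ≤ T) (p : Protocol X Y O) (hp : T < p.leaves) :
    ∃ (α : X → Bool) (β : Y → Bool) (p1 p2 : Protocol X Y O),
      (∀ x y, p.run x y = if α x = true ∧ β y = true then p1.run x y else p2.run x y) ∧
      T < 2 * p1.leaves ∧ p1.leaves ≤ T ∧ p1.leaves + p2.leaves ≤ p.leaves := by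
  induction p with
  | leaf o => simp only [Protocol.leaves] at hp; omega
  | nodeA h p0 p1 ih0 ih1 =>
    simp only [Protocol.leaves] at hp
    by_cases h1 : T < p1.leaves
    · obtain ⟨α, β, q1, q2, hr, a1, a2, a3⟩ := ih1 h1
      refine ⟨fun x => α x && h x, β, q1, .nodeA h p0 q2, ?_, a1, a2, ?_⟩
      · intro x y
        simp only [Protocol.run, hr x y]
        rcases Bool.eq_false_or_eq_true (h x) with e1 | e1 <;>
          rcases Bool.eq_false_or_eq_true (α x) with e2 | e2 <;>
          rcases Bool.eq_false_or_eq_true (β y) with e3 | e3 <;> simp [e1, e2, e3]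
      · simp only [Protocol.leaves]; omega
    by_cases h0 : T < p0.leaves
    · obtain ⟨α, β, q1, q2, hr, a1, a2, a3⟩ := ih0 h0
      refine ⟨fun x => α x && !h x, β, q1, .nodeA h q2 p1, ?_, a1, a2, ?_⟩
      · intro x y
        simp only [Protocol.run, hr x y]
        rcases Bool.eq_false_or_eq_true (h x) with e1 | e1 <;>
          rcases Bool.eq_false_or_eq_true (α x) with e2 | e2 <;>
          rcases Bool.eq_false_or_eq_true (β y) with e3 | e3 <;> simp [e1, e2, e3]
      · simp only [Protocol.leaves]; omega
    by_cases hc : p0.leaves ≤ p1.leaves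
    · refine ⟨h, fun _ => true, p1, p0, ?_, by omega, by omega, ?_⟩
      · intro x y; simp [Protocol.run]
      · simp only [Protocol.leaves]; omega
    · refine ⟨fun x => !h x, fun _ => true, p0, p1, ?_, by omega, by omega, ?_⟩
      · intro x y; simp only [Protocol.run]; cases h x <;> simp
      · simp only [Protocol.leaves]; omega
  | nodeB h p0 p1 ih0 ih1 =>
    simp only [Protocol.leaves] at hp
    by_cases h1 : T < p1.leaves
    · obtain ⟨α, β, q1, q2, hr, a1, a2, a3⟩ := ih1 h1
      refine ⟨α, fun y => β y && h y, q1, .nodeB h p0 q2, ?_, a1, a2, ?_⟩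
      · intro x y
        simp only [Protocol.run, hr x y]
        rcases Bool.eq_false_or_eq_true (h y) with e1 | e1 <;>
          rcases Bool.eq_false_or_eq_true (α x) with e2 | e2 <;>
          rcases Bool.eq_false_or_eq_true (β y) with e3 | e3 <;> simp [e1, e2, e3]
      · simp only [Protocol.leaves]; omega
    by_cases h0 : T < p0.leaves
    · obtain ⟨α, β, q1, q2, hr, a1, a2, a3⟩ := ih0 h0
      refine ⟨α, fun y => β y && !h y, q1, .nodeB h q2 p1, ?_, a1, a2, ?_⟩
      · intro x y
        simp only [Protocol.run, hr x y]
        rcases Bool.eq_false_or_eq_true (h y) with e1 | e1 <;>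
          rcases Bool.eq_false_or_eq_true (α x) with e2 | e2 <;>
          rcases Bool.eq_false_or_eq_true (β y) with e3 | e3 <;> simp [e1, e2, e3]
      · simp only [Protocol.leaves]; omega
    by_cases hc : p0.leaves ≤ p1.leaves
    · refine ⟨fun _ => true, h, p1, p0, ?_, by omega, by omega, ?_⟩
      · intro x y; simp [Protocol.run]
      · simp only [Protocol.leaves]; omega
    · refine ⟨fun _ => true, fun y => !h y, p0, p1, ?_, by omega, by omega, ?_⟩
      · intro x y; simp only [Protocol.run]; cases h y <;> simp
      · simp only [Protocol.leaves]; omega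

section sim
variable {ι Λ : Type} [Fintype ι] [DecidableEq ι] [Fintype Λ] [DecidableEq Λ]

/-- Simulation state. -/
structure St (N B : ℝ) (μ : (ι → Λ) → ℝ) (H : Finset ι → (ι → Bool) → Prop)
    (gd : Λ → Λ → Bool) (κ : ℝ) (F IA IB : Finset ι) (z : ι → Bool)
    (X Y : Finset (ι → Λ)) : Prop where
  hκ : 0 < κ
  disj : Disjoint IA IB
  hF : ∀ j, j ∈ F ↔ j ∉ IA ∧ j ∉ IB
  mX : κ * ((st N B / 2) ^ IA.card * (1 / 4) ^ IB.card) ≤ ms μ X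
  mY : κ * ((st N B / 2) ^ IB.card * (1 / 4) ^ IA.card) ≤ ms μ Y
  fX : ∃ u : ι → Λ, ∀ x ∈ X, ∀ j ∈ IA, x j = u j
  fY : ∃ v : ι → Λ, ∀ y ∈ Y, ∀ j ∈ IB, y j = v j
  hz : ∀ x ∈ X, ∀ y ∈ Y, ∀ j ∉ F, gd (x j) (y j) = z j
  adv : H F z

lemma St.swap {N B : ℝ} {μ : (ι → Λ) → ℝ} {H : Finset ι → (ι → Bool) → Prop}
    {gd : Λ → Λ → Bool} {κ : ℝ} {F IA IB : Finset ι} {z : ι → Bool}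
    {X Y : Finset (ι → Λ)} (h : St N B μ H gd κ F IA IB z X Y) :
    St N B μ H (fun u v => gd v u) κ F IB IA z Y X :=
  ⟨h.hκ, h.disj.symm, fun j => (h.hF j).trans and_comm, h.mY, h.mX, h.fY, h.fX,
    fun y hy x hx j hj => h.hz x hx y hy j hj, h.adv⟩

lemma Dense.mono_base {μ : (ι → Λ) → ℝ} (hμ : ∀ x, 0 ≤ μ x) {a b : ℝ} (ha : 0 ≤ a) (hab : a ≤ b)
    {F : Finset ι} {X : Finset (ι → Λ)} (h : Dense μ a F X) : Dense μ b F X := fun J hJ u =>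
  (h J hJ u).trans (mul_le_mul_of_nonneg_right (pow_le_pow_left₀ ha hab _) (ms_nonneg hμ X))

lemma Par.st_le_wk {n C : ℕ} {N B : ℝ} (P : Par n C N B) : 2 * st N B ≤ wk N B := by
  unfold st wk
  rw [← mul_div_assoc]
  exact div_le_div_of_nonneg_right (by nlinarith [P.hB]) P.hN.le

lemma St.pos {n C : ℕ} {N B : ℝ} (P : Par n C N B) {μ : (ι → Λ) → ℝ}
    {H : Finset ι → (ι → Bool) → Prop}
    {gd : Λ → Λ → Bool} {κ : ℝ} {F IA IB : Finset ι} {z : ι → Bool}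
    {X Y : Finset (ι → Λ)} (h : St N B μ H gd κ F IA IB z X Y) : 0 < ms μ X := by
  refine lt_of_lt_of_le ?_ h.mX
  have := P.st0
  have := h.hκ
  positivity

lemma nonempty_of_ms {μ : (ι → Λ) → ℝ} {X : Finset (ι → Λ)} (h : 0 < ms μ X) : X.Nonempty := by
  by_contra hc
  rw [Finset.not_nonempty_iff_eq_empty] at hc
  subst hc
  simp [ms] at h

lemma round {C : ℕ} {N B : ℝ} (P : Par (Fintype.card ι) C N B)
    {μ : (ι → Λ) → ℝ} (hμ : ∀ x, 0 ≤ μ x) {H : Finset ι → (ι → Bool) → Prop}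
    (hadv : ∀ F z, H F z → ∀ I ⊆ F, ∃ z1 : ι → Bool, (∀ j ∉ I, z1 j = z j) ∧ H (F \ I) z1)
    (n : ℕ) : ∀ (gd : Λ → Λ → Bool) (hA : Spec gd (lam N B))
    (hA' : Spec (fun u v => gd v u) (lam N B))
    (κ : ℝ) (F IA IB : Finset ι) (z : ι → Bool) (X Y : Finset (ι → Λ)),
    F.card ≤ n → Dense μ (wk N B) F X → Dense μ (st N B) F Y → St N B μ H gd κ F IA IB z X Y →
    ∃ F' IA' IB' z', ∃ X' ⊆ X, ∃ Y' ⊆ Y, Dense μ (st N B) F' X' ∧ Dense μ (st N B) F' Y' ∧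
      St N B μ H gd (κ / 2) F' IA' IB' z' X' Y' := by
  have s0 := P.st0
  have w0 := P.wk0
  have hsw : st N B ≤ wk N B := by linarith [P.st_le_wk]
  induction n with
  | zero =>
    intro gd hA hA' κ F IA IB z X Y hn hX hY h
    have hF : F = ∅ := Finset.card_eq_zero.mp (by omega)
    subst hF
    have := h.hκ
    have m1 : 0 ≤ κ * ((st N B / 2) ^ IA.card * (1 / 4) ^ IB.card) := by positivity
    have m2 : 0 ≤ κ * ((st N B / 2) ^ IB.card * (1 / 4) ^ IA.card) := by positivity
    refine ⟨∅, IA, IB, z, X, subset_rfl, Y, subset_rfl, ?_, hY,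
      ⟨by linarith, h.disj, h.hF, by linarith [h.mX], by linarith [h.mY], h.fX, h.fY, h.hz, h.adv⟩⟩
    intro J hJ u
    rw [Finset.subset_empty.mp hJ, cyl_empty]; simp
  | succ n ih =>
    intro gd hA hA' κ F IA IB z X Y hn hX hY h
    have hκ := h.hκ
    have pX := h.pos P
    have pY := h.swap.pos P
    have hYw := hY.mono_base hμ s0.le hsw
    obtain ⟨X1, hX1, mX1, hgood⟩ := exists_good P hμ hA hX hYw pY
    obtain ⟨x0, hx0⟩ := nonempty_of_ms pX
    obtain ⟨I, hI, u, hIu, hdense⟩ := exists_fix hμ s0 F X1 x0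
    have hcX : cyl X1 I u ⊆ X := (Finset.filter_subset _ _).trans hX1
    by_cases hI0 : I = ∅
    · subst hI0
      rw [cyl_empty] at hdense hcX
      rw [Finset.sdiff_empty] at hdense
      have m1 : 0 ≤ κ * ((st N B / 2) ^ IB.card * (1 / 4) ^ IA.card) := by positivity
      obtain ⟨u, hu⟩ := h.fX
      exact ⟨F, IA, IB, z, X1, hX1, Y, subset_rfl, hdense, hY,
        ⟨by linarith, h.disj, h.hF, by linarith [h.mX], by linarith [h.mY],
          ⟨u, fun x hx => hu x (hX1 hx)⟩, h.fY, fun x hx => h.hz x (hX1 hx), h.adv⟩⟩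
    have hI1 : 1 ≤ I.card := Finset.card_pos.mpr (Finset.nonempty_iff_ne_empty.mpr hI0)
    have hhalf : (1 / 2 : ℝ) ^ I.card ≤ 1 / 2 := by
      calc (1 / 2 : ℝ) ^ I.card ≤ (1 / 2) ^ 1 :=
            pow_le_pow_of_le_one (by norm_num) (by norm_num) hI1
        _ = _ := by norm_num
    obtain ⟨z1, hz1, hH1⟩ := hadv F z h.adv I hI
    set Y1 := Y.filter (fun y => ∀ i ∈ I, gd (u i) (y i) = z1 i) with hY1
    have pX2 : 0 < ms μ (cyl X1 I u) := by
      refine lt_of_lt_of_le ?_ hIu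
      have : 0 < ms μ X1 := by linarith
      positivity
    obtain ⟨x, hx⟩ := nonempty_of_ms pX2
    have hxu : ∀ i ∈ I, x i = u i := (Finset.mem_filter.mp hx).2
    have hxg := hgood x (Finset.mem_filter.mp hx).1
    have hYeq : Y1 = Y.filter (fun y => ∀ i ∈ I, gd (x i) (y i) = z1 i) := by
      rw [hY1]
      refine Finset.filter_congr fun y _ => ?_
      refine forall₂_congr fun i hi => ?_
      rw [hxu i hi]
    have hY1d := good_dense P hμ hI hxg hY z1
    have hY1m := good_lower P hμ hI hxg z1
    rw [← hYeq] at hY1d hY1m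
    have hdI : Disjoint IA I := by
      rw [Finset.disjoint_right]
      intro j hj
      exact ((h.hF j).mp (hI hj)).1
    have hdI' : Disjoint IB I := by
      rw [Finset.disjoint_right]
      intro j hj
      exact ((h.hF j).mp (hI hj)).2
    have hSt : St N B μ H gd κ (F \ I) (IA ∪ I) IB z1 (cyl X1 I u) Y1 := by
      refine ⟨hκ, ?_, ?_, ?_, ?_, ?_, ?_, ?_, hH1⟩
      · exact Finset.disjoint_union_left.mpr ⟨h.disj, hdI'.symm⟩
      · intro j
        rw [Finset.mem_sdiff, h.hF j, Finset.mem_union]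
        tauto
      · rw [Finset.card_union_of_disjoint hdI, pow_add]
        refine le_trans ?_ hIu
        calc κ * ((st N B / 2) ^ IA.card * (st N B / 2) ^ I.card * (1 / 4) ^ IB.card)
            = (st N B) ^ I.card * ((1 / 2) ^ I.card *
                (κ * ((st N B / 2) ^ IA.card * (1 / 4) ^ IB.card))) := by
              rw [div_pow (st N B) 2 I.card, one_div_pow (2 : ℝ) I.card]; ring
          _ ≤ (st N B) ^ I.card * (1 / 2 * ms μ X) := by
              have := h.mX
              gcongr
          _ ≤ _ := by
              gcongr
              linarith
      · rw [Finset.card_union_of_disjoint hdI, pow_add]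
        refine le_trans ?_ hY1m
        have e4 : (1 / 4 : ℝ) ^ I.card = (1 / 2) ^ I.card * (1 / 2) ^ I.card := by
          rw [← mul_pow]; norm_num
        calc κ * ((st N B / 2) ^ IB.card * ((1 / 4) ^ IA.card * (1 / 4) ^ I.card))
            = (1 / 2) ^ I.card * ((1 / 2) ^ I.card *
                (κ * ((st N B / 2) ^ IB.card * (1 / 4) ^ IA.card))) := by
              rw [e4]; ring
          _ ≤ (1 / 2) ^ I.card * (1 / 2 * ms μ Y) := by
              have := h.mY
              gcongr
          _ = _ := by ring
      · obtain ⟨u', hu'⟩ := h.fX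
        refine ⟨IA.piecewise u' u, fun x hx j hj => ?_⟩
        by_cases hj1 : j ∈ IA
        · rw [Finset.piecewise_eq_of_mem _ _ _ hj1]
          exact hu' x (hcX hx) j hj1
        · rw [Finset.piecewise_eq_of_notMem _ _ _ hj1]
          exact (Finset.mem_filter.mp hx).2 j ((Finset.mem_union.mp hj).resolve_left hj1)
      · obtain ⟨v, hv⟩ := h.fY
        exact ⟨v, fun y hy => hv y (Finset.mem_filter.mp hy).1⟩
      · intro x hx y hy j hj
        by_cases hjI : j ∈ I
        · rw [(Finset.mem_filter.mp hx).2 j hjI]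
          exact (Finset.mem_filter.mp hy).2 j hjI
        · rw [hz1 j hjI]
          exact h.hz x (hcX hx) y (Finset.mem_filter.mp hy).1 j
            (fun hF => hj (Finset.mem_sdiff.mpr ⟨hF, hjI⟩))
    have hcard : (F \ I).card ≤ n := by
      rw [Finset.card_sdiff_of_subset hI]; omega
    obtain ⟨F', IB', IA', z', Y', hY', X', hX', d1, d2, hS⟩ :=
      ih (fun u v => gd v u) hA' hA κ (F \ I) IB (IA ∪ I) z1 Y1 (cyl X1 I u) hcard hY1d hdense hSt.swap
    exact ⟨F', IA', IB', z', X', hX'.trans hcX, Y', hY'.trans (Finset.filter_subset _ _), d2, d1,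
      hS.swap⟩

lemma one_bit {C : ℕ} {N B : ℝ} (P : Par (Fintype.card ι) C N B)
    {μ : (ι → Λ) → ℝ} (hμ : ∀ x, 0 ≤ μ x) {H : Finset ι → (ι → Bool) → Prop}
    (hadv : ∀ F z, H F z → ∀ I ⊆ F, ∃ z1 : ι → Bool, (∀ j ∉ I, z1 j = z j) ∧ H (F \ I) z1)
    {gd : Λ → Λ → Bool} (hA : Spec gd (lam N B))
    (hA' : Spec (fun u v => gd v u) (lam N B))
    {κ : ℝ} {F IA IB : Finset ι} {z : ι → Bool} {X Y : Finset (ι → Λ)}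
    (hX : Dense μ (st N B) F X) (hY : Dense μ (st N B) F Y) (h : St N B μ H gd κ F IA IB z X Y)
    (α : (ι → Λ) → Bool) :
    ∃ F' IA' IB' z', ∃ X' ⊆ X, ∃ Y' ⊆ Y, Dense μ (st N B) F' X' ∧ Dense μ (st N B) F' Y' ∧
      St N B μ H gd (κ / 4) F' IA' IB' z' X' Y' ∧ ∃ b, ∀ x ∈ X', α x = b := by
  have s0 := P.st0
  have w0 := P.wk0
  have hκ := h.hκ
  obtain ⟨b, hb⟩ : ∃ b, ms μ X / 2 ≤ ms μ (X.filter fun x => α x = b) := by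
    by_contra hc
    push Not at hc
    have h1 := hc true
    have h2 := hc false
    have h3 : ms μ (X.filter fun x => α x = true) + ms μ (X.filter fun x => ¬ α x = true) = ms μ X :=
      Finset.sum_filter_add_sum_filter_not _ _ _
    simp only [Bool.not_eq_true] at h3
    linarith
  set X1 := X.filter (fun x => α x = b) with hX1
  have hs : X1 ⊆ X := Finset.filter_subset _ _
  have hd : Dense μ (wk N B) F X1 := by
    intro J hJ u
    by_cases hJ0 : J = ∅
    · subst hJ0; rw [cyl_empty]; simp
    have hJ1 : 1 ≤ J.card := Finset.card_pos.mpr (Finset.nonempty_iff_ne_empty.mpr hJ0)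
    have h1 : ms μ (cyl X1 J u) ≤ ms μ (cyl X J u) :=
      ms_mono hμ (Finset.filter_subset_filter _ hs)
    have h2 := hX J hJ u
    have h4 : 2 * st N B ^ J.card ≤ wk N B ^ J.card := by
      calc 2 * st N B ^ J.card ≤ 2 ^ J.card * st N B ^ J.card := by
            gcongr
            calc (2 : ℝ) = 2 ^ 1 := by norm_num
              _ ≤ _ := pow_le_pow_right₀ (by norm_num) hJ1
        _ = (2 * st N B) ^ J.card := (mul_pow _ _ _).symm
        _ ≤ _ := by
            have := P.st_le_wk
            gcongr
    have h5 := ms_nonneg hμ X1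
    calc _ ≤ st N B ^ J.card * ms μ X := h1.trans h2
      _ ≤ st N B ^ J.card * (2 * ms μ X1) := by gcongr; linarith
      _ = (2 * st N B ^ J.card) * ms μ X1 := by ring
      _ ≤ _ := by gcongr
  have hSt : St N B μ H gd (κ / 2) F IA IB z X1 Y := by
    have m1 : 0 ≤ κ * ((st N B / 2) ^ IB.card * (1 / 4) ^ IA.card) := by positivity
    obtain ⟨u, hu⟩ := h.fX
    exact ⟨by linarith, h.disj, h.hF, by linarith [h.mX], by linarith [h.mY],
      ⟨u, fun x hx => hu x (hs hx)⟩, h.fY, fun x hx => h.hz x (hs hx), h.adv⟩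
  obtain ⟨F', IA', IB', z', X', hX', Y', hY', d1, d2, hS⟩ :=
    round P hμ hadv _ gd hA hA' (κ / 2) F IA IB z X1 Y le_rfl hd hY hSt
  refine ⟨F', IA', IB', z', X', hX'.trans hs, Y', hY', d1, d2, ?_, b, fun x hx =>
    (Finset.mem_filter.mp (hX' hx)).2⟩
  have : κ / 2 / 2 = κ / 4 := by ring
  rwa [this] at hS

lemma leaf_case {C : ℕ} {N B : ℝ} (P : Par (Fintype.card ι) C N B)
    {μ : (ι → Λ) → ℝ} (hμ : ∀ x, 0 ≤ μ x)
    (hμ1 : ∀ J u, ms μ (cyl Finset.univ J u) ≤ (4 / N) ^ J.card)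
    {H : Finset ι → (ι → Bool) → Prop}
    {R : Type} {Sol : (ι → Bool) → R → Prop} {Q : ℕ}
    (hleaf : ∀ F z, H F z → Fᶜ.card < Q → ∀ r, ∃ w : ι → Bool, (∀ j ∉ F, w j = z j) ∧ ¬ Sol w r)
    {gd : Λ → Λ → Bool} (hA : Spec gd (lam N B))
    {κ : ℝ} {F IA IB : Finset ι} {z : ι → Bool} {X Y : Finset (ι → Λ)}
    (hX : Dense μ (st N B) F X) (hY : Dense μ (st N B) F Y) (h : St N B μ H gd κ F IA IB z X Y)
    (r : R) (hr : ∀ x ∈ X, ∀ y ∈ Y, Sol (fun j => gd (x j) (y j)) r) :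
    κ ^ 2 * (B / 32) ^ Q ≤ 1 := by
  have s0 := P.st0
  have hκ := h.hκ
  have N0 := P.hN
  have pX := h.pos P
  have pY := h.swap.pos P
  have hsw : st N B ≤ wk N B := by linarith [P.st_le_wk]
  by_cases hQ : Fᶜ.card < Q
  · exfalso
    obtain ⟨w, hw, hnw⟩ := hleaf F z h.adv hQ r
    obtain ⟨X1, hX1, mX1, hgood⟩ := exists_good P hμ hA (hX.mono_base hμ s0.le hsw)
      (hY.mono_base hμ s0.le hsw) pY
    obtain ⟨x, hx⟩ := nonempty_of_ms (show 0 < ms μ X1 by linarith)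
    have hl := good_lower P hμ subset_rfl (hgood x hx) w
    obtain ⟨y, hy⟩ := nonempty_of_ms (lt_of_lt_of_le (by positivity) hl)
    rw [Finset.mem_filter] at hy
    apply hnw
    have : w = fun j => gd (x j) (y j) := by
      funext j
      by_cases hj : j ∈ F
      · exact (hy.2 j hj).symm
      · rw [hw j hj, h.hz x (hX1 hx) y hy.1 j hj]
    rw [this]
    exact hr x (hX1 hx) y hy.1
  · push Not at hQ
    have hFc : Fᶜ = IA ∪ IB := by
      ext j
      rw [Finset.mem_compl, h.hF, Finset.mem_union]
      tauto
    rw [hFc, Finset.card_union_of_disjoint h.disj] at hQ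
    obtain ⟨u, hu⟩ := h.fX
    obtain ⟨v, hv⟩ := h.fY
    have a1 : κ * ((st N B / 2) ^ IA.card * (1 / 4) ^ IB.card) ≤ (4 / N) ^ IA.card :=
      h.mX.trans ((ms_mono hμ (fun x hx => Finset.mem_filter.mpr
        ⟨Finset.mem_univ _, hu x hx⟩)).trans (hμ1 IA u))
    have a2 : κ * ((st N B / 2) ^ IB.card * (1 / 4) ^ IA.card) ≤ (4 / N) ^ IB.card :=
      h.mY.trans ((ms_mono hμ (fun x hx => Finset.mem_filter.mpr
        ⟨Finset.mem_univ _, hv x hx⟩)).trans (hμ1 IB v))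
    have a3 := mul_le_mul a1 a2 (by positivity) (by positivity)
    have hB32 : 1 ≤ B / 32 := by linarith [P.hB]
    have a4 : κ ^ 2 * (B / 32) ^ (IA.card + IB.card) * (4 / N) ^ (IA.card + IB.card) ≤
        1 * (4 / N) ^ (IA.card + IB.card) := by
      have e : B / 32 * (4 / N) = st N B / 2 * (1 / 4) := by
        unfold st; field_simp; ring
      rw [mul_assoc, ← mul_pow, e, mul_pow, one_mul]
      refine le_trans (le_of_eq ?_) (a3.trans (le_of_eq ?_))
      · rw [pow_add, pow_add]; ring
      · rw [pow_add]
    have a5 := le_of_mul_le_mul_right a4 (by positivity)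
    refine le_trans ?_ a5
    gcongr

lemma main_lemma {C : ℕ} {N B : ℝ} (P : Par (Fintype.card ι) C N B)
    {μ : (ι → Λ) → ℝ} (hμ : ∀ x, 0 ≤ μ x)
    (hμ1 : ∀ J u, ms μ (cyl Finset.univ J u) ≤ (4 / N) ^ J.card)
    {H : Finset ι → (ι → Bool) → Prop}
    (hadv : ∀ F z, H F z → ∀ I ⊆ F, ∃ z1 : ι → Bool, (∀ j ∉ I, z1 j = z j) ∧ H (F \ I) z1)
    {R : Type} {Sol : (ι → Bool) → R → Prop} {Q : ℕ}
    (hleaf : ∀ F z, H F z → Fᶜ.card < Q → ∀ r, ∃ w : ι → Bool, (∀ j ∉ F, w j = z j) ∧ ¬ Sol w r)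
    {gd : Λ → Λ → Bool} (hA : Spec gd (lam N B))
    (hA' : Spec (fun u v => gd v u) (lam N B)) (L : ℕ) :
    ∀ (p : Protocol (ι → Λ) (ι → Λ) R), p.leaves = L →
    ∀ (κ : ℝ) (F IA IB : Finset ι) (z : ι → Bool) (X Y : Finset (ι → Λ)),
    Dense μ (st N B) F X → Dense μ (st N B) F Y → St N B μ H gd κ F IA IB z X Y →
    (∀ x ∈ X, ∀ y ∈ Y, Sol (fun j => gd (x j) (y j)) (p.run x y)) →
    κ ^ 2 * (B / 32) ^ Q ≤ (L : ℝ) ^ 14 := by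
  induction L using Nat.strong_induction_on with
  | _ L ih =>
  intro p hp κ F IA IB z X Y hX hY h hr
  by_cases hL : L = 1
  · subst hL
    cases p with
    | leaf r =>
      simp only [Protocol.run] at hr
      simpa using leaf_case P hμ hμ1 hleaf hA hX hY h r hr
    | nodeA f p0 p1 =>
      simp only [Protocol.leaves] at hp
      have := leaves_pos p0
      have := leaves_pos p1
      omega
    | nodeB f p0 p1 =>
      simp only [Protocol.leaves] at hp
      have := leaves_pos p0
      have := leaves_pos p1
      omega
  have hL2 : 2 ≤ L := by have := leaves_pos p; omega
  obtain ⟨α, β, p1, p2, hrun, c1, c2, c3⟩ := split_protocol (2 * L / 3) (by omega) p (by omega)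
  obtain ⟨F1, IA1, IB1, z1, X1, hX1, Y1, hY1, d1, d2, hS, b, hb⟩ :=
    one_bit P hμ hadv hA hA' hX hY h α
  obtain ⟨F2, IB2, IA2, z2, Y2, hY2, X2, hX2, d3, d4, hS2, b', hb'⟩ :=
    one_bit P hμ hadv hA' hA d2 d1 hS.swap β
  have fin : ∀ q : Protocol (ι → Λ) (ι → Λ) R, q.leaves < L → 3 * q.leaves ≤ 2 * L →
      (∀ x ∈ X2, ∀ y ∈ Y2, p.run x y = q.run x y) → κ ^ 2 * (B / 32) ^ Q ≤ (L : ℝ) ^ 14 := by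
    intro q hq hq2 heq
    have := ih q.leaves hq q rfl (κ / 4 / 4) F2 IA2 IB2 z2 X2 Y2 d4 d3 hS2.swap
      (fun x hx y hy => by rw [← heq x hx y hy]; exact hr x (hX1 (hX2 hx)) y (hY1 (hY2 hy)))
    have hq3 : (q.leaves : ℝ) ≤ 2 / 3 * L := by
      have : (3 : ℝ) * q.leaves ≤ 2 * L := by exact_mod_cast hq2
      linarith
    have h14 : (q.leaves : ℝ) ^ 14 ≤ (2 / 3 * L) ^ 14 := by gcongr
    have hL0 : (0 : ℝ) ≤ (L : ℝ) ^ 14 := by positivity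
    rw [mul_pow] at h14
    have e : (κ / 4 / 4) ^ 2 * (B / 32) ^ Q = (κ ^ 2 * (B / 32) ^ Q) / 256 := by ring
    rw [e] at this
    have h6 : ((2 : ℝ) / 3) ^ 14 ≤ 1 / 256 := by norm_num
    have := mul_le_mul_of_nonneg_right h6 hL0
    linarith
  have l1 := leaves_pos p1
  have l2 := leaves_pos p2
  by_cases hc : b = true ∧ b' = true
  · refine fin p1 (by omega) (by omega) fun x hx y hy => ?_
    rw [hrun, hb x (hX2 hx), hb' y hy, if_pos hc]
  · refine fin p2 (by omega) (by omega) fun x hx y hy => ?_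
    rw [hrun, hb x (hX2 hx), hb' y hy, if_neg hc]

end sim
end KL


open Classical
set_option linter.unusedSectionVars false
set_option linter.unusedSimpArgs false
set_option linter.unusedVariables false

namespace KL

/-! ### The adversary -/
section adv
variable {m ℓ : ℕ} {O : Type}

/-- Adversary predicate. -/
def HAdv (S : (Fin ℓ → Bool) → O → Prop) (Q : ℕ) (F : Finset (Fin m × Fin ℓ))
    (z : Fin m × Fin ℓ → Bool) : Prop :=
  ∀ (i : Fin m) (T : DTree (Fin ℓ) O), T.depth + Fᶜ.card < Q →
    ∃ w : Fin ℓ → Bool, (∀ l, (i, l) ∉ F → w l = z (i, l)) ∧ ¬ S w (T.run w)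

lemma hadv_univ (S : (Fin ℓ → Bool) → O → Prop) (z : Fin m × Fin ℓ → Bool) :
    HAdv S (Qcomplexity S) Finset.univ z := by
  intro i T hT
  by_contra hc
  push Not at hc
  have : Qcomplexity S ≤ T.depth := Nat.sInf_le ⟨T, fun w => hc w (by simp), rfl⟩
  omega

lemma hadv_one {S : (Fin ℓ → Bool) → O → Prop} {Q : ℕ} {F : Finset (Fin m × Fin ℓ)}
    {z : Fin m × Fin ℓ → Bool} (h : HAdv S Q F z) (j : Fin m × Fin ℓ) (hj : j ∈ F) :
    ∃ b, HAdv S Q (F.erase j) (Function.update z j b) := by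
  by_contra hc
  push Not at hc
  obtain ⟨i0, l0⟩ := j
  have hcard : (F.erase (i0, l0))ᶜ.card = Fᶜ.card + 1 := by
    rw [Finset.card_compl, Finset.card_compl, Finset.card_erase_of_mem hj]
    have h1 := Finset.card_le_univ F
    have h2 : 0 < F.card := Finset.card_pos.mpr ⟨_, hj⟩
    omega
  have key : ∀ b, ∃ T : DTree (Fin ℓ) O, T.depth + Fᶜ.card + 1 < Q ∧
      ∀ w : Fin ℓ → Bool, (∀ l, (i0, l) ∉ F → w l = z (i0, l)) → w l0 = b → S w (T.run w) := by
    intro b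
    have hb := hc b
    unfold HAdv at hb
    push Not at hb
    obtain ⟨i, T, hT, hw⟩ := hb
    rw [hcard] at hT
    by_cases hi : i = i0
    · subst hi
      refine ⟨T, by omega, fun w h1 h2 => hw w fun l hl => ?_⟩
      by_cases hl0 : l = l0
      · subst hl0; rw [Function.update_self]; exact h2
      · have hne : (i, l) ≠ (i, l0) := fun h => hl0 (Prod.ext_iff.mp h).2
        rw [Function.update_of_ne hne]
        exact h1 l (fun hF => hl (Finset.mem_erase.mpr ⟨hne, hF⟩))
    · exfalso
      obtain ⟨w, h1, h2⟩ := h i T (by omega)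
      refine h2 (hw w fun l hl => ?_)
      have hne : (i, l) ≠ (i0, l0) := fun h => hi (Prod.ext_iff.mp h).1
      rw [Function.update_of_ne hne]
      exact h1 l (fun hF => hl (Finset.mem_erase.mpr ⟨hne, hF⟩))
  obtain ⟨T0, hT0, h0⟩ := key false
  obtain ⟨T1, hT1, h1⟩ := key true
  obtain ⟨w, hw1, hw2⟩ := h i0 (.node l0 T0 T1) (by simp only [DTree.depth]; omega)
  apply hw2
  rcases Bool.eq_false_or_eq_true (w l0) with e | e
  · simp only [DTree.run, e, if_true]; exact h1 w hw1 e
  · simp only [DTree.run, e]; exact h0 w hw1 e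

lemma hadv_step {S : (Fin ℓ → Bool) → O → Prop} {Q : ℕ} (F : Finset (Fin m × Fin ℓ))
    (z : Fin m × Fin ℓ → Bool) (h : HAdv S Q F z) (I : Finset (Fin m × Fin ℓ)) (hI : I ⊆ F) :
    ∃ z1 : Fin m × Fin ℓ → Bool, (∀ j ∉ I, z1 j = z j) ∧ HAdv S Q (F \ I) z1 := by
  induction I using Finset.induction_on with
  | empty => exact ⟨z, fun _ _ => rfl, by simpa using h⟩
  | insert j I hj ih =>
    obtain ⟨z1, h1, h2⟩ := ih ((Finset.subset_insert _ _).trans hI)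
    obtain ⟨b, hb⟩ := hadv_one h2 j (Finset.mem_sdiff.mpr ⟨hI (Finset.mem_insert_self _ _), hj⟩)
    refine ⟨Function.update z1 j b, fun k hk => ?_, ?_⟩
    · rw [Finset.mem_insert, not_or] at hk
      rw [Function.update_of_ne hk.1, h1 k hk.2]
    · have : F \ insert j I = (F \ I).erase j := by
        ext k
        simp only [Finset.mem_sdiff, Finset.mem_insert, Finset.mem_erase]
        tauto
      rw [this]
      exact hb

lemma hadv_leaf {S : (Fin ℓ → Bool) → O → Prop} {Q : ℕ} (F : Finset (Fin m × Fin ℓ))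
    (z : Fin m × Fin ℓ → Bool) (h : HAdv S Q F z) (hc : Fᶜ.card < Q) (r : Fin m × O) :
    ∃ w : Fin m × Fin ℓ → Bool, (∀ j ∉ F, w j = z j) ∧ ¬ S (fun l => w (r.1, l)) r.2 := by
  obtain ⟨i, o⟩ := r
  obtain ⟨w, h1, h2⟩ := h i (.leaf o) (by simpa [DTree.depth] using hc)
  refine ⟨fun j => if j.1 = i then w j.2 else z j, ?_, ?_⟩
  · rintro ⟨i', l⟩ hj
    by_cases hi : i' = i
    · subst hi; simpa using h1 l hj
    · simp [hi]
  · simpa [DTree.run] using h2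

end adv

/-! ### Maximizing over partial revelations -/
section maxi
variable {m ℓ : ℕ} {Λ : Type} [Fintype Λ] [DecidableEq Λ] [Nonempty Λ]

lemma exists_reveal (G : (Fin m → Option Bool) → (Fin m × Fin ℓ → Λ) → ℝ)
    (hG0 : ∀ σ x, 0 ≤ G σ x)
    (hsub : ∀ σ i x, σ i = none → G σ x ≤
      G (Function.update σ i (some false)) x + G (Function.update σ i (some true)) x) :
    ∃ (σ : Fin m → Option Bool) (J : Finset (Fin m × Fin ℓ)) (w : Fin m × Fin ℓ → Λ),
      (∀ j ∈ J, σ j.1 ≠ none) ∧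
      (∑ x, G (fun _ => none) x ≤ ∑ x, G σ (J.piecewise w x)) ∧
      ∀ (J' : Finset (Fin m × Fin ℓ)) (u : Fin m × Fin ℓ → Λ),
        (Fintype.card Λ : ℝ) ^ J'.card * ∑ x ∈ Finset.univ.filter (fun x => ∀ j ∈ J', x j = u j),
          G σ (J.piecewise w x) ≤ 2 ^ J'.card * ∑ x, G σ (J.piecewise w x) := by
  let Φ : (Fin m → Option Bool) × Finset (Fin m × Fin ℓ) × (Fin m × Fin ℓ → Λ) → ℝ :=
    fun p => ∑ x, G p.1 (p.2.1.piecewise p.2.2 x)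
  let s : Finset ((Fin m → Option Bool) × Finset (Fin m × Fin ℓ) × (Fin m × Fin ℓ → Λ)) :=
    Finset.univ.filter (fun p => ∀ j ∈ p.2.1, p.1 j.1 ≠ none)
  obtain ⟨w0⟩ : Nonempty (Fin m × Fin ℓ → Λ) := inferInstance
  have hs0 : ((fun _ => none, ∅, w0) :
      (Fin m → Option Bool) × Finset (Fin m × Fin ℓ) × (Fin m × Fin ℓ → Λ)) ∈ s := by
    simp [s]
  obtain ⟨⟨σ, J, w⟩, hmem, hmax⟩ := s.exists_max_image Φ ⟨_, hs0⟩
  have hadm : ∀ j ∈ J, σ j.1 ≠ none := (Finset.mem_filter.mp hmem).2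
  have hΦ0 : ∀ p, 0 ≤ Φ p := fun p => Finset.sum_nonneg fun x _ => hG0 _ _
  have claim : ∀ (J' : Finset (Fin m × Fin ℓ)) (σ' : Fin m → Option Bool)
      (J2 : Finset (Fin m × Fin ℓ)) (w2 : Fin m × Fin ℓ → Λ),
      (∀ j ∈ J2, σ' j.1 ≠ none ∨ j ∈ J') → Φ (σ', J2, w2) ≤ 2 ^ J'.card * Φ (σ, J, w) := by
    intro J'
    induction J' using Finset.induction_on with
    | empty =>
      intro σ' J2 w2 h
      simp only [Finset.card_empty, pow_zero, one_mul]
      exact hmax _ (Finset.mem_filter.mpr ⟨Finset.mem_univ _, fun j hj =>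
        (h j hj).resolve_right (by simp)⟩)
    | insert j J' hj ih =>
      intro σ' J2 w2 h
      rw [Finset.card_insert_of_notMem hj, pow_succ]
      by_cases hσ : σ' j.1 = none
      · have h1 : ∀ b, Φ (Function.update σ' j.1 (some b), J2, w2) ≤ 2 ^ J'.card * Φ (σ, J, w) := by
          intro b
          refine ih _ _ _ fun k hk => ?_
          by_cases hkj : k.1 = j.1
          · left; rw [hkj]; simp
          · rw [Function.update_of_ne hkj]
            rcases h k hk with h | h
            · exact Or.inl h
            · rcases Finset.mem_insert.mp h with h | h
              · exact absurd (by rw [h]) hkj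
              · exact Or.inr h
        have h2 : Φ (σ', J2, w2) ≤ Φ (Function.update σ' j.1 (some false), J2, w2) +
            Φ (Function.update σ' j.1 (some true), J2, w2) := by
          simp only [Φ]
          rw [← Finset.sum_add_distrib]
          exact Finset.sum_le_sum fun x _ => hsub _ _ _ hσ
        have := h1 false
        have := h1 true
        linarith
      · have h1 := ih σ' J2 w2 fun k hk => by
          rcases h k hk with h | h
          · exact Or.inl h
          · rcases Finset.mem_insert.mp h with h | h
            · left; rw [h]; exact hσ
            · exact Or.inr h
        have : 0 ≤ 2 ^ J'.card * Φ (σ, J, w) := mul_nonneg (by positivity) (hΦ0 _)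
        linarith
  refine ⟨σ, J, w, hadm, ?_, ?_⟩
  · have := hmax _ hs0
    simpa [Φ] using this
  · intro J' u
    have h1 : ∀ x ∈ Finset.univ.filter (fun x : Fin m × Fin ℓ → Λ => ∀ j ∈ J', x j = u j),
        G σ (J.piecewise w x) = G σ ((J ∪ J').piecewise (J.piecewise w u) x) := by
      intro x hx
      have hx' := (Finset.mem_filter.mp hx).2
      congr 1
      funext j
      by_cases hj : j ∈ J
      · simp [hj]
      · by_cases hj' : j ∈ J'
        · simp [hj, hj', hx' j hj']
        · simp [hj, hj']
    rw [Finset.sum_congr rfl h1, sum_cyl]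
    · exact claim J' σ (J ∪ J') (J.piecewise w u) fun j hj => by
        rcases Finset.mem_union.mp hj with h | h
        · exact Or.inl (hadm j h)
        · exact Or.inr h
    · intro j hj x v
      congr 1
      funext k
      by_cases hk : k ∈ J ∪ J'
      · simp only [Finset.piecewise_eq_of_mem _ _ _ hk]
      · have : k ≠ j := fun h => hk (h ▸ Finset.mem_union_right _ hj)
        simp only [Finset.piecewise_eq_of_notMem _ _ _ hk, Function.update_of_ne this]

end maxi

/-! ### Pulling back protocols and formula complexity -/
section pull
variable {X Y X' Y' O : Type}

/-- Pull back a protocol along partial maps of inputs. -/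
def pull (e : X' → Option X) (e' : Y' → Option Y) : Protocol X Y O → Protocol X' Y' O
  | .leaf o => .leaf o
  | .nodeA h p0 p1 => .nodeA (fun x => ((e x).map h).getD false) (pull e e' p0) (pull e e' p1)
  | .nodeB h p0 p1 => .nodeB (fun y => ((e' y).map h).getD false) (pull e e' p0) (pull e e' p1)

lemma leaves_pull (e : X' → Option X) (e' : Y' → Option Y) (p : Protocol X Y O) :
    (pull e e' p).leaves = p.leaves := by
  induction p with
  | leaf o => rfl
  | nodeA h p0 p1 ih0 ih1 => simp [pull, Protocol.leaves, ih0, ih1]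
  | nodeB h p0 p1 ih0 ih1 => simp [pull, Protocol.leaves, ih0, ih1]

lemma run_pull (e : X' → Option X) (e' : Y' → Option Y) (p : Protocol X Y O)
    {x' : X'} {y' : Y'} {x : X} {y : Y} (hx : e x' = some x) (hy : e' y' = some y) :
    (pull e e' p).run x' y' = p.run x y := by
  induction p with
  | leaf o => rfl
  | nodeA h p0 p1 ih0 ih1 => simp [pull, Protocol.run, ih0, ih1, hx]
  | nodeB h p0 p1 ih0 ih1 => simp [pull, Protocol.run, ih0, ih1, hy]

lemma exists_protocol [Finite X] [Finite Y] [Nonempty O] (R : X → Y → O → Prop)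
    (hR : ∀ x y, ∃ o, R x y o) : ∃ p : Protocol X Y O, Solves p R := by
  have := Fintype.ofFinite X
  have := Fintype.ofFinite Y
  obtain ⟨o0⟩ := ‹Nonempty O›
  have h1 : ∀ x, ∀ s : Finset Y, ∃ p : Protocol X Y O, ∀ y ∈ s, R x y (p.run x y) := by
    intro x s
    induction s using Finset.induction_on with
    | empty => exact ⟨.leaf o0, by simp⟩
    | insert y0 s hy ih =>
      obtain ⟨p, hp⟩ := ih
      obtain ⟨o, ho⟩ := hR x y0
      refine ⟨.nodeB (fun y => decide (y = y0)) p (.leaf o), fun y hy => ?_⟩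
      by_cases hyy : y = y0
      · subst hyy; simpa [Protocol.run] using ho
      · simpa [Protocol.run, hyy] using hp y ((Finset.mem_insert.mp hy).resolve_left hyy)
  have h2 : ∀ s : Finset X, ∃ p : Protocol X Y O, ∀ x ∈ s, ∀ y, R x y (p.run x y) := by
    intro s
    induction s using Finset.induction_on with
    | empty => exact ⟨.leaf o0, by simp⟩
    | insert x0 s hx ih =>
      obtain ⟨p, hp⟩ := ih
      obtain ⟨q, hq⟩ := h1 x0 Finset.univ
      refine ⟨.nodeA (fun x => decide (x = x0)) p q, fun x hx y => ?_⟩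
      by_cases hxx : x = x0
      · subst hxx; simpa [Protocol.run] using hq y (Finset.mem_univ _)
      · simpa [Protocol.run, hxx] using hp x ((Finset.mem_insert.mp hx).resolve_left hxx) y
  obtain ⟨p, hp⟩ := h2 Finset.univ
  exact ⟨p, fun x y => hp x (Finset.mem_univ _) y⟩

end pull

section mlsec
variable {m : ℕ}

lemma mL_le {A B : Set (Fin m → Bool)} (p : Protocol A B (Fin m)) (hp : Solves p (mKWrect A B)) :
    mL A B ≤ p.leaves := Nat.sInf_le ⟨p, hp, rfl⟩

lemma mL_spec {f : (Fin m → Bool) → Bool} (hf : Monotone f) (hm : 0 < m)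
    {A B : Set (Fin m → Bool)} (hA : ∀ a ∈ A, f a = true) (hB : ∀ b ∈ B, f b = false) :
    ∃ p : Protocol A B (Fin m), Solves p (mKWrect A B) ∧ p.leaves = mL A B := by
  have : Nonempty (Fin m) := ⟨⟨0, hm⟩⟩
  have hex : ∃ p : Protocol A B (Fin m), Solves p (mKWrect A B) := by
    refine exists_protocol _ fun a b => ?_
    by_contra hc
    push Not at hc
    have hle : a.val ≤ b.val := by
      intro i
      have := hc i
      unfold mKWrect at this
      cases ha : a.val i
      · exact Bool.false_le _
      · have : b.val i ≠ false := fun h => this ⟨ha, h⟩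
        simp only [ne_eq, Bool.not_eq_false] at this
        rw [this]
    have := hf hle
    rw [hA _ a.2, hB _ b.2] at this
    exact absurd this (by decide)
  obtain ⟨p, hp⟩ := hex
  exact Nat.sInf_mem (s := {k | ∃ p : Protocol A B (Fin m), Solves p (mKWrect A B) ∧ p.leaves = k})
    ⟨_, p, hp, rfl⟩

lemma mL_nonempty (hm : 0 < m) {A B : Set (Fin m → Bool)} (h : 2 ≤ mL A B) :
    A.Nonempty ∧ B.Nonempty := by
  constructor
  · by_contra hc
    rw [Set.not_nonempty_iff_eq_empty] at hc
    have := mL_le (A := A) (B := B) (.leaf ⟨0, hm⟩) (fun x => absurd x.2 (by simp [hc]))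
    simp only [Protocol.leaves] at this
    omega
  · by_contra hc
    rw [Set.not_nonempty_iff_eq_empty] at hc
    have := mL_le (A := A) (B := B) (.leaf ⟨0, hm⟩) (fun _ x => absurd x.2 (by simp [hc]))
    simp only [Protocol.leaves] at this
    omega

lemma mL_split {f : (Fin m → Bool) → Bool} (hf : Monotone f) (hm : 0 < m)
    {A B : Set (Fin m → Bool)} (hA : ∀ a ∈ A, f a = true) (hB : ∀ b ∈ B, f b = false) (i : Fin m) :
    mL A B ≤ mL {a | a ∈ A ∧ a i = false} B + mL A {b | b ∈ B ∧ b i = true} + 1 := by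
  obtain ⟨p0, hp0, l0⟩ := mL_spec hf hm (A := {a | a ∈ A ∧ a i = false}) (B := B)
    (fun a ha => hA a ha.1) hB
  obtain ⟨p1, hp1, l1⟩ := mL_spec hf hm (A := A) (B := {b | b ∈ B ∧ b i = true})
    hA (fun b hb => hB b hb.1)
  let eA : A → Option {a | a ∈ A ∧ a i = false} := fun a =>
    if h : a.val i = false then some ⟨a.val, a.2, h⟩ else none
  let eB : B → Option {b | b ∈ B ∧ b i = true} := fun b =>
    if h : b.val i = true then some ⟨b.val, b.2, h⟩ else none
  let p : Protocol A B (Fin m) := .nodeA (fun a => a.val i) (pull eA some p0)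
    (.nodeB (fun b => b.val i) (.leaf i) (pull some eB p1))
  have hp : Solves p (mKWrect A B) := by
    intro a b
    rcases Bool.eq_false_or_eq_true (a.val i) with ha | ha
    · rcases Bool.eq_false_or_eq_true (b.val i) with hb | hb
      · have := hp1 a ⟨b.val, b.2, hb⟩
        rw [← run_pull some eB p1 (x' := a) (y' := b) rfl (by simp [eB, hb])] at this
        simpa [p, Protocol.run, ha, hb, mKWrect] using this
      · simp [p, Protocol.run, ha, hb, mKWrect]
    · have := hp0 ⟨a.val, a.2, ha⟩ b
      rw [← run_pull eA some p0 (x' := a) (y' := b) (by simp [eA, ha]) rfl] at this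
      simpa [p, Protocol.run, ha, mKWrect] using this
  have := mL_le p hp
  simp only [p, Protocol.leaves, leaves_pull, l0, l1] at this
  omega

end mlsec

/-! ### Suffixes -/
section suff
variable {X Y O : Type}

lemma subtree_append (p : Protocol X Y O) (π₁ π₂ : List Bool) (q : Protocol X Y O)
    (h : p.subtree π₁ = some q) : p.subtree (π₁ ++ π₂) = q.subtree π₂ := by
  induction π₁ generalizing p with
  | nil => simp only [Protocol.subtree, Option.some.injEq] at h; subst h; rfl
  | cons b π ih =>
    cases p with
    | leaf o => simp [Protocol.subtree] at h
    | nodeA g p0 p1 => cases b <;> simp [Protocol.subtree] at h ⊢ <;> exact ih _ h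
    | nodeB g p0 p1 => cases b <;> simp [Protocol.subtree] at h ⊢ <;> exact ih _ h

lemma run_subtree (p : Protocol X Y O) (π : List Bool) (q : Protocol X Y O)
    (h : p.subtree π = some q) {x : X} {y : Y} (hx : p.followsA π x) (hy : p.followsB π y) :
    q.run x y = p.run x y := by
  induction π generalizing p with
  | nil => simp only [Protocol.subtree, Option.some.injEq] at h; subst h; rfl
  | cons b π ih =>
    cases p with
    | leaf o => simp [Protocol.subtree] at h
    | nodeA g p0 p1 =>
      cases b <;> simp [Protocol.subtree, Protocol.followsA, Protocol.followsB, Protocol.run] at h hx hy ⊢ <;>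
        simp [hx.1] <;> exact ih _ h hx.2 hy
    | nodeB g p0 p1 =>
      cases b <;> simp [Protocol.subtree, Protocol.followsA, Protocol.followsB, Protocol.run] at h hx hy ⊢ <;>
        simp [hy.1] <;> exact ih _ h hx hy.2

lemma exists_leaves (p : Protocol X Y O) : ∃ F : Finset (List Bool), F.card = p.leaves ∧
    ∀ π ∈ F, p.IsFullTranscript π := by
  have comb : ∀ F0 F1 : Finset (List Bool),
      (F0.image (List.cons false) ∪ F1.image (List.cons true)).card = F0.card + F1.card := by
    intro F0 F1
    rw [Finset.card_union_of_disjoint, Finset.card_image_of_injective _ (List.cons_injective),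
      Finset.card_image_of_injective _ (List.cons_injective)]
    rw [Finset.disjoint_left]
    intro a h0 h1
    obtain ⟨_, _, rfl⟩ := Finset.mem_image.mp h0
    obtain ⟨_, _, h⟩ := Finset.mem_image.mp h1
    simp at h
  induction p with
  | leaf o => exact ⟨{[]}, by simp [Protocol.leaves], by simp [Protocol.IsFullTranscript, Protocol.subtree]⟩
  | nodeA h p0 p1 ih0 ih1 =>
    obtain ⟨F0, c0, h0⟩ := ih0
    obtain ⟨F1, c1, h1⟩ := ih1
    refine ⟨F0.image (List.cons false) ∪ F1.image (List.cons true), ?_, ?_⟩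
    · rw [comb, c0, c1]; rfl
    · intro π hπ
      rcases Finset.mem_union.mp hπ with hh | hh
      · obtain ⟨π', hm, rfl⟩ := Finset.mem_image.mp hh
        simpa [Protocol.IsFullTranscript, Protocol.subtree] using h0 π' hm
      · obtain ⟨π', hm, rfl⟩ := Finset.mem_image.mp hh
        simpa [Protocol.IsFullTranscript, Protocol.subtree] using h1 π' hm
  | nodeB h p0 p1 ih0 ih1 =>
    obtain ⟨F0, c0, h0⟩ := ih0
    obtain ⟨F1, c1, h1⟩ := ih1
    refine ⟨F0.image (List.cons false) ∪ F1.image (List.cons true), ?_, ?_⟩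
    · rw [comb, c0, c1]; rfl
    · intro π hπ
      rcases Finset.mem_union.mp hπ with hh | hh
      · obtain ⟨π', hm, rfl⟩ := Finset.mem_image.mp hh
        simpa [Protocol.IsFullTranscript, Protocol.subtree] using h0 π' hm
      · obtain ⟨π', hm, rfl⟩ := Finset.mem_image.mp hh
        simpa [Protocol.IsFullTranscript, Protocol.subtree] using h1 π' hm

end suff
end KL


open Classical
set_option linter.unusedSectionVars false
set_option linter.unusedSimpArgs false
set_option linter.unusedVariables false

namespace KL
section hard
variable {m ℓ : ℕ} {Λ O : Type} [Fintype Λ] [DecidableEq Λ] [Nonempty Λ]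

/-- Alice's revealed set. -/
def As (A : Set (Fin m → Bool)) (σ : Fin m → Option Bool) : Set (Fin m → Bool) :=
  {a | a ∈ A ∧ ∀ i, σ i = some false → a i = false}
/-- Bob's revealed set. -/
def Bs (A : Set (Fin m → Bool)) (σ : Fin m → Option Bool) : Set (Fin m → Bool) :=
  {a | a ∈ A ∧ ∀ i, σ i = some true → a i = true}

lemma As_none (A : Set (Fin m → Bool)) : As A (fun _ => none) = A := by ext; simp [As]
lemma Bs_none (A : Set (Fin m → Bool)) : Bs A (fun _ => none) = A := by ext; simp [Bs]

lemma As_false (A : Set (Fin m → Bool)) (σ : Fin m → Option Bool) (i : Fin m) (h : σ i = none) :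
    As A (Function.update σ i (some false)) = {a | a ∈ As A σ ∧ a i = false} := by
  ext a
  simp only [As, Set.mem_setOf_eq]
  constructor
  · rintro ⟨h1, h2⟩
    refine ⟨⟨h1, fun k hk => h2 k ?_⟩, h2 i (by simp)⟩
    rw [Function.update_of_ne]; exact hk
    rintro rfl; simp [h] at hk
  · rintro ⟨⟨h1, h2⟩, h3⟩
    refine ⟨h1, fun k hk => ?_⟩
    by_cases hki : k = i
    · rw [hki]; exact h3
    · rw [Function.update_of_ne hki] at hk; exact h2 k hk

lemma Bs_true (A : Set (Fin m → Bool)) (σ : Fin m → Option Bool) (i : Fin m) (h : σ i = none) :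
    Bs A (Function.update σ i (some true)) = {a | a ∈ Bs A σ ∧ a i = true} := by
  ext a
  simp only [Bs, Set.mem_setOf_eq]
  constructor
  · rintro ⟨h1, h2⟩
    refine ⟨⟨h1, fun k hk => h2 k ?_⟩, h2 i (by simp)⟩
    rw [Function.update_of_ne]; exact hk
    rintro rfl; simp [h] at hk
  · rintro ⟨⟨h1, h2⟩, h3⟩
    refine ⟨h1, fun k hk => ?_⟩
    by_cases hki : k = i
    · rw [hki]; exact h3
    · rw [Function.update_of_ne hki] at hk; exact h2 k hk

lemma As_true (A : Set (Fin m → Bool)) (σ : Fin m → Option Bool) (i : Fin m) (h : σ i = none) :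
    As A (Function.update σ i (some true)) = As A σ := by
  ext a
  simp only [As, Set.mem_setOf_eq]
  refine and_congr_right fun _ => forall_congr' fun k => ?_
  by_cases hki : k = i
  · subst hki; simp [h]
  · rw [Function.update_of_ne hki]

lemma Bs_false (A : Set (Fin m → Bool)) (σ : Fin m → Option Bool) (i : Fin m) (h : σ i = none) :
    Bs A (Function.update σ i (some false)) = Bs A σ := by
  ext a
  simp only [Bs, Set.mem_setOf_eq]
  refine and_congr_right fun _ => forall_congr' fun k => ?_
  by_cases hki : k = i
  · subst hki; simp [h]
  · rw [Function.update_of_ne hki]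

lemma hard_dist (hm : 0 < m) {f : (Fin m → Bool) → Bool} (hf : Monotone f)
    {S : (Fin ℓ → Bool) → O → Prop} {gd : Λ → Λ → Bool}
    (Pr : Protocol ((Fin m → Fin ℓ → Λ) × {a : Fin m → Bool // f a = true})
                   ((Fin m → Fin ℓ → Λ) × {b : Fin m → Bool // f b = false}) (Fin m × O))
    (hPr : Solves Pr (starLift f S gd)) (π : List Bool)
    (hγ : 4 * (m : ℝ) ^ 2 ≤ gammaM f Pr π)
    (q : Protocol ((Fin m → Fin ℓ → Λ) × {a : Fin m → Bool // f a = true})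
                   ((Fin m → Fin ℓ → Λ) × {b : Fin m → Bool // f b = false}) (Fin m × O))
    (hq : Pr.subtree π = some q) :
    ∃ μ : (Fin m × Fin ℓ → Λ) → ℝ, (∀ x, 0 ≤ μ x) ∧ ms μ Finset.univ = 1 ∧
      (∀ J u, ms μ (cyl Finset.univ J u) ≤ (4 / (Fintype.card Λ : ℝ)) ^ J.card) ∧
      ∃ p : Protocol (Fin m × Fin ℓ → Λ) (Fin m × Fin ℓ → Λ) (Fin m × O),
        p.leaves = q.leaves ∧ ∀ x y, μ x ≠ 0 → μ y ≠ 0 →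
          S (fun l => gd (x ((p.run x y).1, l)) (y ((p.run x y).1, l))) (p.run x y).2 := by
  let cu : (Fin m × Fin ℓ → Λ) → (Fin m → Fin ℓ → Λ) := fun x i l => x (i, l)
  let M : (Fin m → Option Bool) → (Fin m × Fin ℓ → Λ) → ℕ := fun σ x =>
    mL (As (Aset f Pr π (cu x)) σ) (Bs (Bset f Pr π (cu x)) σ)
  let G : (Fin m → Option Bool) → (Fin m × Fin ℓ → Λ) → ℝ := fun σ x => (M σ x : ℝ) + 1
  have hsub : ∀ σ i x, σ i = none → G σ x ≤
      G (Function.update σ i (some false)) x + G (Function.update σ i (some true)) x := by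
    intro σ i x h
    have h1 := mL_split hf hm (A := As (Aset f Pr π (cu x)) σ) (B := Bs (Bset f Pr π (cu x)) σ)
      (fun a ha => ha.1.1) (fun b hb => hb.1.1) i
    simp only [G, M]
    rw [As_false _ _ _ h, Bs_false _ _ _ h, As_true _ _ _ h, Bs_true _ _ _ h]
    have h2 : ((mL (As (Aset f Pr π (cu x)) σ) (Bs (Bset f Pr π (cu x)) σ) : ℕ) : ℝ) ≤ _ :=
      Nat.cast_le.mpr h1
    push_cast at h2
    linarith
  obtain ⟨σ, J, w, hJ, hΦ, hcyl⟩ := exists_reveal (ℓ := ℓ) G (fun σ x => by positivity) hsub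
  set Φ : ℝ := ∑ x, G σ (J.piecewise w x) with hΦdef
  set N : ℝ := (Fintype.card Λ : ℝ) with hN
  have N0 : 0 < N := by rw [hN]; exact_mod_cast Fintype.card_pos
  set V : ℝ := (Fintype.card (Fin m × Fin ℓ → Λ) : ℝ) with hV
  have V0 : 0 < V := by rw [hV]; exact_mod_cast Fintype.card_pos
  have hbig : 5 * V ≤ Φ := by
    refine le_trans ?_ hΦ
    have e1 : (Fintype.card (Fin m → Fin ℓ → Λ) : ℝ) = V := by
      rw [hV, Fintype.card_congr (Equiv.curry (Fin m) (Fin ℓ) Λ)]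
    have e2 : ∑ W : Fin m → Fin ℓ → Λ, (mL (Aset f Pr π W) (Bset f Pr π W) : ℝ) =
        ∑ x : Fin m × Fin ℓ → Λ, (M (fun _ => none) x : ℝ) := by
      rw [← (Equiv.curry (Fin m) (Fin ℓ) Λ).sum_comp]
      refine Finset.sum_congr rfl fun x _ => ?_
      simp only [M, As_none, Bs_none]
      rfl
    unfold gammaM at hγ
    rw [e1, e2, le_div_iff₀ V0] at hγ
    simp only [G]
    rw [Finset.sum_add_distrib]
    have h1 : (1 : ℝ) ≤ (m : ℝ) ^ 2 := one_le_pow₀ (by exact_mod_cast hm)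
    have h3 : ∑ x : Fin m × Fin ℓ → Λ, (1 : ℝ) = V := by simp [hV]
    rw [h3]
    nlinarith
  let g : (Fin m × Fin ℓ → Λ) → ℝ := fun x =>
    if 2 ≤ M σ (J.piecewise w x) then G σ (J.piecewise w x) else 0
  have hg0 : ∀ x, 0 ≤ g x := by
    intro x; simp only [g, G]; split_ifs <;> positivity
  have hgle : ∀ x, g x ≤ G σ (J.piecewise w x) := by
    intro x; simp only [g, G]; split_ifs
    · exact le_rfl
    · positivity
  have hgge : ∀ x, G σ (J.piecewise w x) - 2 ≤ g x := by
    intro x; simp only [g, G]; split_ifs with h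
    · linarith
    · have : M σ (J.piecewise w x) ≤ 1 := by omega
      have : (M σ (J.piecewise w x) : ℝ) ≤ 1 := by exact_mod_cast this
      linarith
  set Z : ℝ := ∑ x, g x with hZ
  have hZΦ : Φ / 2 ≤ Z := by
    have h1 : ∑ x : Fin m × Fin ℓ → Λ, (G σ (J.piecewise w x) - 2) ≤ Z :=
      Finset.sum_le_sum fun x _ => hgge x
    rw [Finset.sum_sub_distrib] at h1
    have h3 : ∑ x : Fin m × Fin ℓ → Λ, (2 : ℝ) = 2 * V := by simp [hV, mul_comm]
    rw [h3] at h1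
    linarith
  have Z0 : 0 < Z := by linarith
  refine ⟨fun x => g x / Z, fun x => div_nonneg (hg0 x) Z0.le, ?_, ?_, ?_⟩
  · unfold ms
    rw [← Finset.sum_div, div_self Z0.ne']
  · intro J' u
    by_cases hJ0 : J' = ∅
    · subst hJ0
      rw [cyl_empty]
      unfold ms
      rw [← Finset.sum_div, div_self Z0.ne']
      simp
    have hJ1 : 1 ≤ J'.card := Finset.card_pos.mpr (Finset.nonempty_iff_ne_empty.mpr hJ0)
    unfold ms cyl
    rw [← Finset.sum_div, div_le_iff₀ Z0]
    have h1 := hcyl J' u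
    have h2 : ∑ x ∈ Finset.univ.filter (fun x : Fin m × Fin ℓ → Λ => ∀ j ∈ J', x j = u j), g x ≤
        ∑ x ∈ Finset.univ.filter (fun x : Fin m × Fin ℓ → Λ => ∀ j ∈ J', x j = u j),
          G σ (J.piecewise w x) := Finset.sum_le_sum fun x _ => hgle x
    refine h2.trans ?_
    rw [div_pow, div_mul_eq_mul_div, le_div_iff₀ (by positivity), mul_comm]
    refine h1.trans ?_
    have h4 : (4 : ℝ) ^ J'.card = 2 ^ J'.card * 2 ^ J'.card := by rw [← mul_pow]; norm_num
    have h5 : (2 : ℝ) ≤ 2 ^ J'.card := by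
      calc (2 : ℝ) = 2 ^ 1 := by norm_num
        _ ≤ _ := pow_le_pow_right₀ (by norm_num) hJ1
    rw [h4, mul_assoc]
    gcongr
    nlinarith
  · have hA : ∀ x, 2 ≤ M σ (J.piecewise w x) →
        (As (Aset f Pr π (cu (J.piecewise w x))) σ).Nonempty ∧
        (Bs (Bset f Pr π (cu (J.piecewise w x))) σ).Nonempty := fun x hx => mL_nonempty hm hx
    let eA : (Fin m × Fin ℓ → Λ) → Option ((Fin m → Fin ℓ → Λ) × {a : Fin m → Bool // f a = true}) :=
      fun x => if h : 2 ≤ M σ (J.piecewise w x) then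
        some (cu (J.piecewise w x), ⟨(hA x h).1.some, (hA x h).1.some_mem.1.1⟩) else none
    let eB : (Fin m × Fin ℓ → Λ) → Option ((Fin m → Fin ℓ → Λ) × {a : Fin m → Bool // f a = false}) :=
      fun x => if h : 2 ≤ M σ (J.piecewise w x) then
        some (cu (J.piecewise w x), ⟨(hA x h).2.some, (hA x h).2.some_mem.1.1⟩) else none
    refine ⟨pull eA eB q, leaves_pull _ _ _, fun x y hx hy => ?_⟩
    have hx2 : 2 ≤ M σ (J.piecewise w x) := by
      by_contra hc
      exact hx (by simp [g, hc])
    have hy2 : 2 ≤ M σ (J.piecewise w y) := by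
      by_contra hc
      exact hy (by simp [g, hc])
    have ex : eA x = some (cu (J.piecewise w x), ⟨(hA x hx2).1.some, (hA x hx2).1.some_mem.1.1⟩) := by
      simp only [eA, dif_pos hx2]
    have ey : eB y = some (cu (J.piecewise w y), ⟨(hA y hy2).2.some, (hA y hy2).2.some_mem.1.1⟩) := by
      simp only [eB, dif_pos hy2]
    rw [run_pull eA eB q ex ey, run_subtree Pr π q hq (hA x hx2).1.some_mem.1.2
      (hA y hy2).2.some_mem.1.2]
    have hsol := hPr (cu (J.piecewise w x), ⟨(hA x hx2).1.some, (hA x hx2).1.some_mem.1.1⟩)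
      (cu (J.piecewise w y), ⟨(hA y hy2).2.some, (hA y hy2).2.some_mem.1.1⟩)
    generalize Pr.run _ _ = r at hsol ⊢
    obtain ⟨h1, h2, h3⟩ := hsol
    simp only at h1 h2
    have hσ : σ r.1 = none := by
      rcases hs : σ r.1 with _ | b
      · rfl
      · cases b
        · rw [(hA x hx2).1.some_mem.2 _ hs] at h1
          simp at h1
        · rw [(hA y hy2).2.some_mem.2 _ hs] at h2
          simp at h2
    have hnot : ∀ l, (r.1, l) ∉ J := fun l hl => hJ _ hl hσ
    unfold liftSP at h3
    simpa [cu, hnot] using h3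

/-- Combination of the hard distribution with the simulation. -/
lemma combine (hm : 0 < m) {f : (Fin m → Bool) → Bool} (hf : Monotone f)
    {S : (Fin ℓ → Bool) → O → Prop} {gd : Λ → Λ → Bool}
    (Pr : Protocol ((Fin m → Fin ℓ → Λ) × {a : Fin m → Bool // f a = true})
                   ((Fin m → Fin ℓ → Λ) × {b : Fin m → Bool // f b = false}) (Fin m × O))
    (hPr : Solves Pr (starLift f S gd)) (π : List Bool)
    (hγ : 4 * (m : ℝ) ^ 2 ≤ gammaM f Pr π)
    (q : Protocol ((Fin m → Fin ℓ → Λ) × {a : Fin m → Bool // f a = true})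
                   ((Fin m → Fin ℓ → Λ) × {b : Fin m → Bool // f b = false}) (Fin m × O))
    (hq : Pr.subtree π = some q) {C : ℕ} {B : ℝ}
    (P : Par (m * ℓ) C (Fintype.card Λ : ℝ) B)
    (hA : Spec gd (lam (Fintype.card Λ : ℝ) B))
    (hA' : Spec (fun u v => gd v u) (lam (Fintype.card Λ : ℝ) B)) :
    (B / 32) ^ (Qcomplexity S) ≤ (q.leaves : ℝ) ^ 14 := by
  obtain ⟨μ, hμ, hμs, hμ1, p, hpl, hp⟩ := hard_dist hm hf Pr hPr π hγ q hq
  have P' : Par (Fintype.card (Fin m × Fin ℓ)) C (Fintype.card Λ : ℝ) B := by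
    have : Fintype.card (Fin m × Fin ℓ) = m * ℓ := by simp
    rw [this]; exact P
  set X : Finset (Fin m × Fin ℓ → Λ) := Finset.univ.filter (fun x => μ x ≠ 0) with hX
  have mX : ms μ X = 1 := by
    rw [← hμs]
    unfold ms
    rw [hX, Finset.sum_filter_ne_zero]
  have N0 := P.hN
  have dX : Dense μ (st (Fintype.card Λ : ℝ) B) Finset.univ X := by
    intro J _ u
    rw [mX, mul_one]
    refine (ms_mono hμ (Finset.filter_subset_filter _ (Finset.subset_univ X))).trans
      ((hμ1 J u).trans ?_)
    have hB := P.hB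
    unfold st
    gcongr
    linarith
  obtain ⟨u0⟩ : Nonempty (Fin m × Fin ℓ → Λ) := inferInstance
  have hSt : St (Fintype.card Λ : ℝ) B μ (HAdv S (Qcomplexity S)) gd 1 Finset.univ ∅ ∅
      (fun _ => false) X X := by
    refine ⟨one_pos, by simp, by simp, ?_, ?_, ⟨u0, by simp⟩, ⟨u0, by simp⟩, by simp, hadv_univ S _⟩
    · rw [mX]; simp
    · rw [mX]; simp
  have := main_lemma P' hμ hμ1 hadv_step (Sol := fun w (r : Fin m × O) => S (fun l => w (r.1, l)) r.2)
    hadv_leaf hA hA' p.leaves p rfl 1 Finset.univ ∅ ∅ _ X X dX dX hSt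
    (fun x hx y hy => hp x y (Finset.mem_filter.mp hx).2 (Finset.mem_filter.mp hy).2)
  rw [hpl] at this
  simpa using this

end hard
end KL


open Classical
set_option linter.unusedSectionVars false
set_option linter.unusedSimpArgs false
set_option linter.unusedVariables false

namespace KL

lemma bil_of_rect {Λ : Type} [Fintype Λ] [DecidableEq Λ] (gd : Λ → Λ → Bool) (d : ℝ)
    (h : ∀ A B : Finset Λ, |∑ u ∈ A, ∑ v ∈ B, sg (gd u v)| ≤ d) (φ ψ : Λ → Bool) :
    ∑ u, ∑ v, sg (gd u v) * sg (φ u) * sg (ψ v) ≤ 4 * d := by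
  have e : ∀ (u v : Λ), sg (gd u v) * sg (φ u) * sg (ψ v) = ∑ b : Bool, ∑ c : Bool,
      sg b * sg c * (if φ u = b then (if ψ v = c then sg (gd u v) else 0) else 0) := by
    intro u v
    generalize gd u v = g
    cases φ u <;> cases ψ v <;> cases g <;> simp [sg]
  have e2 : ∑ u, ∑ v, sg (gd u v) * sg (φ u) * sg (ψ v) = ∑ b : Bool, ∑ c : Bool,
      sg b * sg c * ∑ u ∈ Finset.univ.filter (fun u => φ u = b),
        ∑ v ∈ Finset.univ.filter (fun v => ψ v = c), sg (gd u v) := by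
    simp only [e, Fintype.sum_bool, Finset.sum_add_distrib, ← Finset.mul_sum, Finset.sum_filter]
    have r : ∀ b c : Bool, (∑ x : Λ, ∑ i : Λ, if φ x = b then if ψ i = c then sg (gd x i) else 0 else 0)
        = ∑ a : Λ, if φ a = b then ∑ a_1 : Λ, if ψ a_1 = c then sg (gd a a_1) else 0 else 0 := by
      intro b c
      refine Finset.sum_congr rfl fun x _ => ?_
      split_ifs <;> simp
    simp only [r]
  rw [e2]
  have t : ∀ b c : Bool, sg b * sg c * ∑ u ∈ Finset.univ.filter (fun u => φ u = b),
        ∑ v ∈ Finset.univ.filter (fun v => ψ v = c), sg (gd u v) ≤ d := by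
    intro b c
    refine (le_abs_self _).trans ?_
    rw [abs_mul, abs_mul, abs_sg, abs_sg, one_mul, one_mul]
    exact h _ _
  simp only [Fintype.sum_bool]
  have := t true true
  have := t true false
  have := t false true
  have := t false false
  linarith

lemma spec_of_rect {Λ : Type} [Fintype Λ] [DecidableEq Λ] (gd : Λ → Λ → Bool) (d l : ℝ)
    (h : ∀ A B : Finset Λ, |∑ u ∈ A, ∑ v ∈ B, sg (gd u v)| ≤ d) (hl : 0 ≤ l)
    (hd : (Fintype.card Λ : ℝ) ^ 2 * (4 * d) ≤ l ^ 2) : Spec gd l := by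
  intro q
  set K : Λ × Λ → ℝ := fun p => ∑ u, sg (gd u p.1) * sg (gd u p.2) with hK
  have h1 : ∑ u, (∑ v, sg (gd u v) * q v) ^ 2 = ∑ p : Λ × Λ, K p * (q p.1 * q p.2) := by
    simp only [hK, Finset.sum_mul]
    rw [Finset.sum_comm]
    refine Finset.sum_congr rfl fun u _ => ?_
    rw [sq, Finset.sum_mul_sum, Fintype.sum_prod_type]
    refine Finset.sum_congr rfl fun v _ => Finset.sum_congr rfl fun v' _ => ?_
    ring
  have h2 : ∑ p : Λ × Λ, K p ^ 2 ≤ l ^ 2 := by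
    refine le_trans ?_ hd
    have e : ∑ p : Λ × Λ, K p ^ 2 = ∑ p : Λ × Λ, sg (gd p.1 p.2) *
        ∑ u, ∑ v, sg (gd u v) * sg (gd u p.2) * sg (gd p.1 v) := by
      have e0 : ∑ p : Λ × Λ, K p ^ 2 = ∑ v : Λ, ∑ v' : Λ, ∑ u : Λ, ∑ u' : Λ,
              sg (gd u v) * sg (gd u v') * (sg (gd u' v) * sg (gd u' v')) := by
        rw [Fintype.sum_prod_type]
        refine Finset.sum_congr rfl fun v _ => Finset.sum_congr rfl fun v' _ => ?_
        simp only [hK]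
        rw [sq, Finset.sum_mul_sum]
      rw [e0]
      simp only [Finset.mul_sum, Fintype.sum_prod_type]
      calc _ = ∑ v : Λ, ∑ v' : Λ, ∑ u : Λ, ∑ u' : Λ,
              sg (gd u v) * sg (gd u v') * (sg (gd u' v) * sg (gd u' v')) := rfl
        _ = ∑ v : Λ, ∑ v' : Λ, ∑ u' : Λ, ∑ u : Λ,
              sg (gd u v) * sg (gd u v') * (sg (gd u' v) * sg (gd u' v')) :=
            Finset.sum_congr rfl fun v _ => Finset.sum_congr rfl fun v' _ => Finset.sum_comm
        _ = ∑ v' : Λ, ∑ v : Λ, ∑ u' : Λ, ∑ u : Λ,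
              sg (gd u v) * sg (gd u v') * (sg (gd u' v) * sg (gd u' v')) := Finset.sum_comm
        _ = ∑ v' : Λ, ∑ u' : Λ, ∑ v : Λ, ∑ u : Λ,
              sg (gd u v) * sg (gd u v') * (sg (gd u' v) * sg (gd u' v')) :=
            Finset.sum_congr rfl fun v _ => Finset.sum_comm
        _ = ∑ u' : Λ, ∑ v' : Λ, ∑ v : Λ, ∑ u : Λ,
              sg (gd u v) * sg (gd u v') * (sg (gd u' v) * sg (gd u' v')) := Finset.sum_comm
        _ = ∑ u' : Λ, ∑ v' : Λ, ∑ u : Λ, ∑ v : Λ,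
              sg (gd u v) * sg (gd u v') * (sg (gd u' v) * sg (gd u' v')) :=
            Finset.sum_congr rfl fun v _ => Finset.sum_congr rfl fun v' _ => Finset.sum_comm
        _ = _ := by
            refine Finset.sum_congr rfl fun u' _ => Finset.sum_congr rfl fun v' _ =>
              Finset.sum_congr rfl fun u _ => Finset.sum_congr rfl fun v _ => ?_
            ring
    rw [e]
    calc _ ≤ ∑ p : Λ × Λ, 4 * d := by
          refine Finset.sum_le_sum fun p _ => ?_
          have hneg : ∀ A B : Finset Λ, |∑ u ∈ A, ∑ v ∈ B, sg (!gd u v)| ≤ d := by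
            intro A B
            have : ∀ b, sg (!b) = - sg b := by intro b; cases b <;> simp [sg]
            simp only [this, Finset.sum_neg_distrib, abs_neg]
            exact h A B
          rcases Bool.eq_false_or_eq_true (gd p.1 p.2) with hb | hb
          · have := bil_of_rect (fun u v => !gd u v) d hneg (fun u => gd u p.2) (fun v => gd p.1 v)
            have r : ∀ b, sg (!b) = - sg b := by intro b; cases b <;> simp [sg]
            simp only [r, neg_mul, Finset.sum_neg_distrib] at this
            rw [hb]
            simp only [sg, if_true, neg_mul, one_mul] at this ⊢
            exact this
          · have := bil_of_rect gd d h (fun u => gd u p.2) (fun v => gd p.1 v)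
            rw [hb]
            simpa [sg] using this
      _ = _ := by simp [sq]
  have h3 : (∑ p : Λ × Λ, K p * (q p.1 * q p.2)) ^ 2 ≤ (l * ∑ v, q v ^ 2) ^ 2 := by
    refine (Finset.sum_mul_sq_le_sq_mul_sq _ _ _).trans ?_
    have e : ∑ p : Λ × Λ, (q p.1 * q p.2) ^ 2 = (∑ v, q v ^ 2) ^ 2 := by
      rw [sq (∑ v, q v ^ 2), Finset.sum_mul_sum, Fintype.sum_prod_type]
      simp only [mul_pow]
    rw [e, mul_pow]
    gcongr
  rw [h1]
  exact le_of_sq_le_sq h3 (mul_nonneg hl (Finset.sum_nonneg fun v _ => sq_nonneg _))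

lemma rect_of_disc {t : ℕ} (gd : (Fin t → Bool) → (Fin t → Bool) → Bool)
    (A B : Finset (Fin t → Bool)) :
    |∑ u ∈ A, ∑ v ∈ B, sg (gd u v)| ≤ disc gd * ((2 : ℝ) ^ t * 2 ^ t) := by
  rw [← div_le_iff₀ (by positivity)]
  unfold disc
  apply le_csSup
  · have : {r : ℝ | ∃ A B : Finset (Fin t → Bool),
      r = |((((A ×ˢ B).filter fun uv => gd uv.1 uv.2 = false).card : ℝ) -
          (((A ×ˢ B).filter fun uv => gd uv.1 uv.2 = true).card : ℝ))| /
        ((2 ^ t : ℝ) * (2 ^ t : ℝ))} = Set.range (fun p : Finset (Fin t → Bool) × Finset (Fin t → Bool) =>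
          |((((p.1 ×ˢ p.2).filter fun uv => gd uv.1 uv.2 = false).card : ℝ) -
          (((p.1 ×ˢ p.2).filter fun uv => gd uv.1 uv.2 = true).card : ℝ))| /
        ((2 ^ t : ℝ) * (2 ^ t : ℝ))) := by
      ext r
      constructor
      · rintro ⟨A, B, h⟩; exact ⟨(A, B), h.symm⟩
      · rintro ⟨p, h⟩; exact ⟨p.1, p.2, h.symm⟩
    rw [this]
    exact (Set.finite_range _).bddAbove
  · refine ⟨A, B, ?_⟩
    congr 2
    rw [← Finset.sum_product', Finset.card_filter, Finset.card_filter]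
    push_cast
    rw [← Finset.sum_sub_distrib]
    refine Finset.sum_congr rfl fun p _ => ?_
    cases gd p.1 p.2 <;> simp [sg]

lemma spec_of_disc {t : ℕ} (gd : (Fin t → Bool) → (Fin t → Bool) → Bool) (B : ℝ) (hB : 0 < B)
    (h : disc gd ≤ 1 / B ^ 64) :
    Spec gd (lam ((Fintype.card (Fin t → Bool) : ℕ) : ℝ) B) ∧
    Spec (fun u v => gd v u) (lam ((Fintype.card (Fin t → Bool) : ℕ) : ℝ) B) := by
  have hN : ((Fintype.card (Fin t → Bool) : ℕ) : ℝ) = 2 ^ t := by simp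
  have hd : (((Fintype.card (Fin t → Bool) : ℕ) : ℝ)) ^ 2 * (4 * (disc gd * ((2 : ℝ) ^ t * 2 ^ t))) ≤
      lam ((Fintype.card (Fin t → Bool) : ℕ) : ℝ) B ^ 2 := by
    rw [hN]
    unfold lam
    calc _ ≤ ((2 : ℝ) ^ t) ^ 2 * (4 * (1 / B ^ 64 * ((2 : ℝ) ^ t * 2 ^ t))) := by gcongr
      _ = _ := by field_simp; ring
  have hl : 0 ≤ lam ((Fintype.card (Fin t → Bool) : ℕ) : ℝ) B := by unfold lam; positivity
  refine ⟨spec_of_rect gd _ _ (rect_of_disc gd) hl hd, spec_of_rect _ _ _ (fun A B => ?_) hl hd⟩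
  rw [Finset.sum_comm]
  exact rect_of_disc gd B A

lemma par_exists {ε : ℝ} (hε : 0 < ε) (hε1 : ε ≤ 1) : ∃ C c : ℕ, ∀ (n t : ℕ), 2 ≤ n →
    (c : ℝ) * Real.logb 2 (n : ℝ) ≤ (t : ℝ) →
    Par n C ((2 : ℝ) ^ t) ((2 : ℝ) ^ (ε * (t : ℝ))) := by
  set C := ⌈1 / ε⌉₊ with hC
  refine ⟨C, ⌈((5 * C + 10 : ℕ) : ℝ) / ε⌉₊, fun n t hn ht => ?_⟩
  have hC1 : 1 ≤ ε * C := by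
    have := Nat.le_ceil (1 / ε)
    rw [div_le_iff₀ hε] at this
    rw [mul_comm]; exact this
  have hn0 : (2 : ℝ) ≤ n := by exact_mod_cast hn
  have hlog : 0 ≤ Real.logb 2 (n : ℝ) := Real.logb_nonneg (by norm_num) (by linarith)
  set B := (2 : ℝ) ^ (ε * (t : ℝ)) with hB
  have hBn : (n : ℝ) ^ (5 * C + 10) ≤ B := by
    have h1 : ((5 * C + 10 : ℕ) : ℝ) * Real.logb 2 (n : ℝ) ≤ ε * t := by
      have := Nat.le_ceil (((5 * C + 10 : ℕ) : ℝ) / ε)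
      rw [div_le_iff₀ hε] at this
      calc _ ≤ ((⌈((5 * C + 10 : ℕ) : ℝ) / ε⌉₊ : ℝ) * ε) * Real.logb 2 (n : ℝ) :=
            mul_le_mul_of_nonneg_right this hlog
        _ = ε * ((⌈((5 * C + 10 : ℕ) : ℝ) / ε⌉₊ : ℝ) * Real.logb 2 (n : ℝ)) := by ring
        _ ≤ _ := mul_le_mul_of_nonneg_left ht hε.le
    have h2 : (n : ℝ) ^ (5 * C + 10) = (2 : ℝ) ^ (((5 * C + 10 : ℕ) : ℝ) * Real.logb 2 (n : ℝ)) := by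
      rw [mul_comm (((5 * C + 10 : ℕ) : ℝ)) (Real.logb 2 (n:ℝ)), Real.rpow_mul (by norm_num), Real.rpow_logb (by norm_num) (by norm_num) (by linarith),
        Real.rpow_natCast]
    rw [h2]
    exact Real.rpow_le_rpow_of_exponent_le (by norm_num) h1
  have hn1 : (1 : ℝ) ≤ n := by linarith
  have h16 : 16 * (n : ℝ) ≤ (n : ℝ) ^ 5 := by
    have : (2 : ℝ) ^ 4 ≤ (n : ℝ) ^ 4 := by gcongr
    calc 16 * (n : ℝ) ≤ (n : ℝ) ^ 4 * n := by gcongr; linarith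
      _ = _ := by ring
  have hB1024 : 1024 ≤ B := by
    refine le_trans ?_ hBn
    calc (1024 : ℝ) = 2 ^ 10 := by norm_num
      _ ≤ (n : ℝ) ^ 10 := by gcongr
      _ ≤ _ := pow_le_pow_right₀ hn1 (by omega)
  have hB16 : 16 * (n : ℝ) ≤ B := h16.trans ((pow_le_pow_right₀ hn1 (by omega)).trans hBn)
  have hexp : (1 + 1 / (16 * (n : ℝ))) ^ n ≤ 9 / 8 := by
    have h1 : (1 + 1 / (16 * (n : ℝ))) ^ n ≤ Real.exp (1 / (16 * (n : ℝ))) ^ n := by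
      gcongr
      linarith [Real.add_one_le_exp (1 / (16 * (n : ℝ)))]
    have h2 : Real.exp (1 / (16 * (n : ℝ))) ^ n = Real.exp (1 / 16) := by
      rw [← Real.exp_nat_mul]
      congr 1
      field_simp
    have h3 : Real.exp (1 / 16) ≤ 9 / 8 := by
      have h4 := Real.add_one_le_exp (-(1 / 16 : ℝ))
      rw [Real.exp_neg] at h4
      have h5 := Real.exp_pos (1 / 16 : ℝ)
      have h6 : Real.exp (1 / 16) * (Real.exp (1 / 16))⁻¹ = 1 := mul_inv_cancel₀ h5.ne'
      nlinarith
    linarith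
  refine ⟨by positivity, hB1024, ?_, ?_, 16 * n, by linarith, hexp, ?_⟩
  · have e1 : (2 : ℝ) ^ t = (2 : ℝ) ^ (t : ℝ) := (Real.rpow_natCast 2 t).symm
    have e2 : (B ^ 2) ^ C = (2 : ℝ) ^ (ε * (t : ℝ) * (2 * C : ℕ)) := by
      rw [← pow_mul, Real.rpow_mul (by norm_num), Real.rpow_natCast]
    rw [e2, e1, hB, ← Real.rpow_add (by norm_num)]
    apply Real.rpow_le_rpow_of_exponent_le (by norm_num)
    push_cast
    have ht0 : (0 : ℝ) ≤ t := by positivity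
    have : ε + 1 ≤ 2 * (ε * C) := by linarith
    nlinarith
  · refine le_trans ?_ hexp
    gcongr
  · have h1 : (16 * (n : ℝ)) ^ C ≤ ((n : ℝ) ^ 5) ^ C := by gcongr
    calc 8 * (16 * (n : ℝ)) ^ C ≤ (n : ℝ) ^ 3 * ((n : ℝ) ^ 5) ^ C := by
          have : (2 : ℝ) ^ 3 ≤ (n : ℝ) ^ 3 := by gcongr
          gcongr
          linarith
      _ = (n : ℝ) ^ (5 * C + 3) := by rw [← pow_mul, ← pow_add]; congr 1; ring
      _ ≤ (n : ℝ) ^ (5 * C + 10) := pow_le_pow_right₀ hn1 (by omega)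
      _ ≤ B := hBn

lemma mL_one {f : (Fin 1 → Bool) → Bool} (hf : Monotone f)
    {A B : Set (Fin 1 → Bool)} (hA : ∀ a ∈ A, f a = true) (hB : ∀ b ∈ B, f b = false) :
    mL A B ≤ 1 := by
  obtain ⟨p, hp, hl⟩ := mL_spec hf one_pos hA hB
  refine mL_le (.leaf 0) fun a b => ?_
  have := hp a b
  simp only [Protocol.run]
  rwa [Subsingleton.elim (p.run a b) 0] at this

lemma not_live_one {ℓ : ℕ} {Λ O : Type} [Fintype Λ] [DecidableEq Λ] [Nonempty Λ]
    {f : (Fin 1 → Bool) → Bool} (hf : Monotone f)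
    (Pr : Protocol ((Fin 1 → Fin ℓ → Λ) × {a : Fin 1 → Bool // f a = true})
                   ((Fin 1 → Fin ℓ → Λ) × {b : Fin 1 → Bool // f b = false}) (Fin 1 × O))
    (π : List Bool) : gammaM f Pr π ≤ 1 := by
  unfold gammaM
  rw [div_le_one (by exact_mod_cast Fintype.card_pos)]
  calc _ ≤ ∑ W : Fin 1 → Fin ℓ → Λ, (1 : ℝ) := by
        refine Finset.sum_le_sum fun W _ => ?_
        have := mL_one hf (A := Aset f Pr π W) (B := Bset f Pr π W) (fun a ha => ha.1) (fun b hb => hb.1)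
        exact_mod_cast this
    _ = _ := by simp

end KL

/-- For every `η > 0` there exist `c ∈ ℕ` and `κ > 0` such that:
for every protocol `Pr` solving `mKW_f ⊛ (S ◇ gd)` and every live transcript `π₁`,
there are at least `2^{κ·Q(S)·t}` distinct suffixes `π₂` such that `π₁ ∘ π₂` is a
full transcript (a leaf) of `Pr`. -/
theorem many_suffixes_of_live_transcript (η : ℝ) (hη : 0 < η) :
    ∃ (c : ℕ) (κ : ℝ), 0 < κ ∧
      ∀ (m ℓ t : ℕ) (O : Type)
        (f : (Fin m → Bool) → Bool) (S : (Fin ℓ → Bool) → O → Prop)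
        (gd : (Fin t → Bool) → (Fin t → Bool) → Bool),
        Monotone f → (∃ x, f x = true) → (∃ x, f x = false) →
        (∀ z, ∃ o, S z o) →
        disc gd ≤ (2 : ℝ) ^ (-(η * (t : ℝ))) →
        (c : ℝ) * Real.logb 2 ((m : ℝ) * (ℓ : ℝ)) ≤ (t : ℝ) →
        ∀ (Pr : Protocol
            ((Fin m → Fin ℓ → (Fin t → Bool)) × {a : Fin m → Bool // f a = true})
            ((Fin m → Fin ℓ → (Fin t → Bool)) × {b : Fin m → Bool // f b = false})
            (Fin m × O)),
          Solves Pr (starLift f S gd) →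
          ∀ π₁ : List Bool, LiveT f Pr π₁ →
            ∃ F : Finset (List Bool),
              (2 : ℝ) ^ (κ * (Qcomplexity S : ℝ) * (t : ℝ)) ≤ (F.card : ℝ) ∧
              ∀ π₂ ∈ F, Protocol.IsFullTranscript Pr (π₁ ++ π₂) := by
  set ε : ℝ := min η 1 / 64 with hεdef
  have hε : 0 < ε := div_pos (lt_min hη one_pos) (by norm_num)
  have hε1 : ε ≤ 1 := by
    have := min_le_right η 1
    rw [hεdef]; linarith
  have hεη : 64 * ε ≤ η := by
    have := min_le_left η 1
    rw [hεdef]; linarith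
  obtain ⟨C, c, hpar⟩ := KL.par_exists hε hε1
  refine ⟨c, ε / 28, by positivity, ?_⟩
  intro m ℓ t O f S gd hf hf1 hf0 hS hdisc ht Pr hPr π₁ hlive
  obtain ⟨q, hq⟩ := Option.isSome_iff_exists.mp hlive.1
  obtain ⟨F, hFc, hF⟩ := KL.exists_leaves q
  refine ⟨F, ?_, fun π₂ h2 => ?_⟩
  swap
  · obtain ⟨o, ho⟩ := hF π₂ h2
    exact ⟨o, by rw [KL.subtree_append Pr π₁ π₂ q hq, ho]⟩
  rw [hFc]
  by_cases hQ : Qcomplexity S = 0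
  · rw [hQ]
    simp only [Nat.cast_zero, mul_zero, zero_mul, Real.rpow_zero]
    exact_mod_cast KL.leaves_pos q
  have hℓ : 1 ≤ ℓ := by
    by_contra hc
    have h0 : ℓ = 0 := by omega
    subst h0
    obtain ⟨o, ho⟩ := hS (fun _ => false)
    have : Qcomplexity S ≤ 0 := Nat.sInf_le ⟨.leaf o, fun z => by
      rw [Subsingleton.elim z (fun _ => false)]; exact ho, rfl⟩
    omega
  have hm0 : m ≠ 0 := by
    rintro rfl
    obtain ⟨x, hx⟩ := hf1
    obtain ⟨y, hy⟩ := hf0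
    rw [Subsingleton.elim x y, hy] at hx
    simp at hx
  have hm1 : m ≠ 1 := by
    rintro rfl
    have h1 := KL.not_live_one hf Pr π₁
    have h2 := hlive.2
    norm_num at h2
    linarith
  have hn : 2 ≤ m * ℓ := by
    calc 2 = 2 * 1 := rfl
      _ ≤ m * ℓ := Nat.mul_le_mul (by omega) hℓ
  have P := hpar (m * ℓ) t hn (by push_cast; exact ht)
  set B := (2 : ℝ) ^ (ε * (t : ℝ)) with hB
  have B0 := P.B0
  have hN : ((Fintype.card (Fin t → Bool) : ℕ) : ℝ) = 2 ^ t := by simp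
  have hd : disc gd ≤ 1 / B ^ 64 := by
    refine hdisc.trans ?_
    have : 1 / B ^ 64 = (2 : ℝ) ^ (-(ε * (t : ℝ) * (64 : ℕ))) := by
      rw [Real.rpow_neg (by norm_num), Real.rpow_mul (by norm_num), Real.rpow_natCast, one_div]
    rw [this]
    apply Real.rpow_le_rpow_of_exponent_le (by norm_num)
    push_cast
    have ht0 : (0 : ℝ) ≤ t := by positivity
    nlinarith
  obtain ⟨s1, s2⟩ := KL.spec_of_disc gd B B0 hd
  rw [← hN] at P
  have main := KL.combine (by omega) hf Pr hPr π₁ hlive.2 q hq P s1 s2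
  have h32 : (2 : ℝ) ^ (ε * (t : ℝ) / 2) ≤ B / 32 := by
    set r := (2 : ℝ) ^ (ε * (t : ℝ) / 2) with hr
    have hr0 : 0 < r := Real.rpow_pos_of_pos (by norm_num) _
    have e : B = r * r := by
      rw [hB, hr, ← Real.rpow_add (by norm_num)]; congr 1; ring
    have := P.hB
    have : 32 ≤ r := by nlinarith
    rw [e]
    nlinarith
  have h14 : ((2 : ℝ) ^ (ε / 28 * (Qcomplexity S : ℝ) * (t : ℝ))) ^ 14 ≤ (q.leaves : ℝ) ^ 14 := by
    refine le_trans ?_ main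
    have e : ((2 : ℝ) ^ (ε / 28 * (Qcomplexity S : ℝ) * (t : ℝ))) ^ 14 =
        ((2 : ℝ) ^ (ε * (t : ℝ) / 2)) ^ (Qcomplexity S) := by
      rw [← Real.rpow_natCast, ← Real.rpow_mul (by norm_num), ← Real.rpow_natCast,
        ← Real.rpow_mul (by norm_num)]
      congr 1
      push_cast
      ring
    rw [e]
    gcongr
  exact le_of_pow_le_pow_left₀ (by norm_num) (by positivity) h14
end

section
/- Hard collection lemma: Let f : {0,1}^m → {0,1} be a non-constant monotone function, S ⊆ {0,1}^ℓ × 𝒪 a search problem, gd : Λ×Λ → {0,1} a gadget with Λ = {0,1}^t, and Π a protocol solving mKW_f ⊛ (S◇gd). Then every live transcript of Π supports a hard collection. -/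
open Classical

namespace HardColl

/-- Extend a protocol on a sub-rectangle to a larger rectangle. -/
noncomputable def pullP {X Y O : Type} {A0 A : Set X} {B0 B : Set Y} :
    Protocol ↥A0 ↥B0 O → Protocol ↥A ↥B O
  | .leaf o => .leaf o
  | .nodeA h p q =>
      .nodeA (fun x => if hx : x.1 ∈ A0 then h ⟨x.1, hx⟩ else false) (pullP p) (pullP q)
  | .nodeB h p q =>
      .nodeB (fun y => if hy : y.1 ∈ B0 then h ⟨y.1, hy⟩ else false) (pullP p) (pullP q)

lemma pullP_leaves {X Y O : Type} {A0 A : Set X} {B0 B : Set Y} (p : Protocol ↥A0 ↥B0 O) :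
    (pullP p : Protocol ↥A ↥B O).leaves = p.leaves := by
  induction p with
  | leaf o => rfl
  | nodeA h p q hp hq => simp [pullP, Protocol.leaves, hp, hq]
  | nodeB h p q hp hq => simp [pullP, Protocol.leaves, hp, hq]

lemma pullP_run {X Y O : Type} {A0 A : Set X} {B0 B : Set Y} (p : Protocol ↥A0 ↥B0 O)
    (x : X) (y : Y) (hx0 : x ∈ A0) (hx : x ∈ A) (hy0 : y ∈ B0) (hy : y ∈ B) :
    (pullP p : Protocol ↥A ↥B O).run ⟨x, hx⟩ ⟨y, hy⟩ = p.run ⟨x, hx0⟩ ⟨y, hy0⟩ := by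
  induction p with
  | leaf o => rfl
  | nodeA h p q hp hq => simp [pullP, Protocol.run, hp, hq, hx0]
  | nodeB h p q hp hq => simp [pullP, Protocol.run, hp, hq, hy0]

/-- Combine protocols along a coordinate. -/
lemma combine {m : ℕ} (A B : Set (Fin m → Bool)) (i : Fin m)
    (p : Protocol ↥{a | a ∈ A ∧ a i = false} ↥B (Fin m))
    (q : Protocol ↥{a | a ∈ A ∧ a i = true} ↥{b | b ∈ B ∧ b i = true} (Fin m))
    (hp : Solves p (mKWrect _ _)) (hq : Solves q (mKWrect _ _)) :
    ∃ r : Protocol ↥A ↥B (Fin m), Solves r (mKWrect A B) ∧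
      r.leaves = p.leaves + q.leaves + 1 := by
  refine ⟨.nodeA (fun x => x.1 i) (pullP p) (.nodeB (fun y => y.1 i) (.leaf i) (pullP q)), ?_, ?_⟩
  · rintro ⟨x, hx⟩ ⟨y, hy⟩
    by_cases h1 : x i = true
    · by_cases h2 : y i = true
      · have := hq ⟨x, hx, h1⟩ ⟨y, hy, h2⟩
        simp only [Protocol.run, h1, h2, if_true]
        rw [pullP_run q x y ⟨hx, h1⟩ hx ⟨hy, h2⟩ hy]
        exact this
      · simp only [Protocol.run, h1, h2, if_true]
        exact ⟨h1, by simpa using h2⟩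
    · have h1' : x i = false := by simpa using h1
      have := hp ⟨x, hx, h1'⟩ ⟨y, hy⟩
      simp only [Protocol.run, h1]
      have e := pullP_run (A := A) (B := B) p x y ⟨hx, h1'⟩ hx hy hy
      simp only [Bool.false_eq_true, if_false]
      rw [e]
      exact this
  · simp [Protocol.leaves, pullP_leaves]; omega

lemma solvable_aux {m : ℕ} (f : (Fin m → Bool) → Bool) (hf : Monotone f) (i0 : Fin m)
    (J : Finset (Fin m)) : ∀ (A B : Set (Fin m → Bool)),
    (∀ a ∈ A, f a = true) → (∀ b ∈ B, f b = false) →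
    (∀ i, i ∉ J → (∀ a ∈ A, a i = false) ∨ (∀ b ∈ B, b i = true)) →
    ∃ p : Protocol ↥A ↥B (Fin m), Solves p (mKWrect A B) ∧ p.leaves + 1 ≤ 2 * 2 ^ J.card := by
  induction J using Finset.induction_on with
  | empty =>
    intro A B hA hB h
    refine ⟨.leaf i0, ?_, by simp [Protocol.leaves]⟩
    rintro ⟨x, hx⟩ ⟨y, hy⟩
    exfalso
    have hxy : x ≤ y := by
      intro i
      rcases h i (by simp) with h | h
      · rw [h x hx]; exact Bool.false_le _
      · rw [h y hy]; exact Bool.le_true _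
    have := hf hxy
    rw [hA x hx, hB y hy] at this
    exact absurd this (by decide)
  | insert i J hi ih =>
    intro A B hA hB h
    obtain ⟨p, hp, hp'⟩ := ih {a | a ∈ A ∧ a i = false} B (fun a ha => hA a ha.1) hB (by
      intro j hj
      by_cases hji : j = i
      · subst hji; left; intro a ha; exact ha.2
      · rcases h j (by simp [hj, hji]) with h | h
        · left; intro a ha; exact h a ha.1
        · right; exact h)
    obtain ⟨q, hq, hq'⟩ := ih {a | a ∈ A ∧ a i = true} {b | b ∈ B ∧ b i = true}
      (fun a ha => hA a ha.1) (fun b hb => hB b hb.1) (by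
      intro j hj
      by_cases hji : j = i
      · subst hji; right; intro a ha; exact ha.2
      · rcases h j (by simp [hj, hji]) with h | h
        · left; intro a ha; exact h a ha.1
        · right; intro b hb; exact h b hb.1)
    obtain ⟨r, hr, hr'⟩ := combine A B i p q hp hq
    refine ⟨r, hr, ?_⟩
    rw [Finset.card_insert_of_notMem hi, hr', pow_succ]
    omega

lemma mL_le {m : ℕ} {A B : Set (Fin m → Bool)} (p : Protocol ↥A ↥B (Fin m))
    (hp : Solves p (mKWrect A B)) : mL A B ≤ p.leaves :=
  Nat.sInf_le ⟨p, hp, rfl⟩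

lemma mL_bound {m : ℕ} (f : (Fin m → Bool) → Bool) (hf : Monotone f) (i0 : Fin m)
    (A B : Set (Fin m → Bool)) (hA : ∀ a ∈ A, f a = true) (hB : ∀ b ∈ B, f b = false) :
    mL A B + 1 ≤ 2 ^ (m + 1) := by
  obtain ⟨p, hp, hp'⟩ := solvable_aux f hf i0 Finset.univ A B hA hB (by simp)
  have := mL_le p hp
  simp at hp'
  rw [pow_succ]; omega

lemma mL_opt {m : ℕ} (f : (Fin m → Bool) → Bool) (hf : Monotone f) (i0 : Fin m)
    (A B : Set (Fin m → Bool)) (hA : ∀ a ∈ A, f a = true) (hB : ∀ b ∈ B, f b = false) :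
    ∃ p : Protocol ↥A ↥B (Fin m), Solves p (mKWrect A B) ∧ p.leaves = mL A B := by
  obtain ⟨p, hp, hp'⟩ := solvable_aux f hf i0 Finset.univ A B hA hB (by simp)
  exact Nat.sInf_mem (s := {k | ∃ p : Protocol ↥A ↥B (Fin m), Solves p (mKWrect A B) ∧ p.leaves = k})
    ⟨_, p, hp, rfl⟩

lemma mL_split {m : ℕ} (f : (Fin m → Bool) → Bool) (hf : Monotone f)
    (A B : Set (Fin m → Bool)) (hA : ∀ a ∈ A, f a = true) (hB : ∀ b ∈ B, f b = false)
    (i : Fin m) :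
    mL A B ≤ mL {a | a ∈ A ∧ a i = false} B +
      mL {a | a ∈ A ∧ a i = true} {b | b ∈ B ∧ b i = true} + 1 := by
  obtain ⟨p, hp, hp'⟩ := mL_opt f hf i {a | a ∈ A ∧ a i = false} B (fun a ha => hA a ha.1) hB
  obtain ⟨q, hq, hq'⟩ := mL_opt f hf i {a | a ∈ A ∧ a i = true} {b | b ∈ B ∧ b i = true}
    (fun a ha => hA a ha.1) (fun b hb => hB b hb.1)
  obtain ⟨r, hr, hr'⟩ := combine A B i p q hp hq
  have := mL_le r hr
  omega

lemma nonempty_of_mL {m : ℕ} (i0 : Fin m) (A B : Set (Fin m → Bool)) (h : 1 < mL A B) :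
    A.Nonempty ∧ B.Nonempty := by
  by_contra hc
  have : mL A B ≤ 1 := by
    refine mL_le (.leaf i0) ?_
    rintro ⟨x, hx⟩ ⟨y, hy⟩
    exact absurd ⟨⟨x, hx⟩, ⟨y, hy⟩⟩ hc
  omega

/-- The threshold (layer-cake) lemma. -/
lemma threshold {Ω : Type} [Fintype Ω] [Nonempty Ω] (m : ℕ) (hm : 1 ≤ m) (v : Ω → ℕ)
    (hv : ∀ w, v w + 1 ≤ 2 ^ (m + 1))
    (havg : 4 * (m : ℝ) ^ 2 ≤ (∑ w, (v w : ℝ)) / (Fintype.card Ω : ℝ)) :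
    ∃ L : ℕ, 2 * (Fintype.card Ω : ℝ) <
      ((L : ℝ) + 1) * ((Finset.univ.filter fun w => L ≤ v w).card : ℝ) := by
  by_contra! hc
  have hcard : (0 : ℝ) < Fintype.card Ω := by exact_mod_cast Fintype.card_pos
  obtain ⟨N, hN⟩ : ∃ N, N + 1 = 2 ^ (m + 1) := ⟨2 ^ (m+1) - 1, Nat.sub_add_cancel Nat.one_le_two_pow⟩
  have h1 : ∀ w, (v w : ℝ) = ∑ k ∈ Finset.range N, if k + 1 ≤ v w then (1 : ℝ) else 0 := by
    intro w
    rw [Finset.sum_boole]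
    have : (Finset.range N).filter (fun k => k + 1 ≤ v w) = Finset.range (v w) := by
      ext k
      have := hv w
      simp only [Finset.mem_filter, Finset.mem_range]
      omega
    rw [this, Finset.card_range]
  have h2 : ∑ w, (v w : ℝ) = ∑ k ∈ Finset.range N,
      ((Finset.univ.filter fun w => k + 1 ≤ v w).card : ℝ) := by
    rw [Finset.sum_congr rfl (fun w _ => h1 w), Finset.sum_comm]
    refine Finset.sum_congr rfl fun k _ => ?_
    rw [Finset.sum_boole]
  have h3 : ∑ w, (v w : ℝ) ≤ ∑ k ∈ Finset.range N,
      2 * (Fintype.card Ω : ℝ) * ((k : ℝ) + 1 + 1)⁻¹ := by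
    rw [h2]
    refine Finset.sum_le_sum fun k _ => ?_
    have := hc (k + 1)
    push_cast at this
    rw [← div_eq_mul_inv, le_div_iff₀ (by positivity), mul_comm]
    exact this
  rw [← Finset.mul_sum] at h3
  have h4 : ∑ k ∈ Finset.range N, ((k : ℝ) + 1 + 1)⁻¹ ≤ (m + 1) * Real.log 2 := by
    have := harmonic_le_one_add_log (N + 1)
    rw [harmonic, Finset.sum_range_succ'] at this
    push_cast at this
    have e : Real.log ((N : ℝ) + 1) = (m + 1) * Real.log 2 := by
      have : (N : ℝ) + 1 = 2 ^ (m + 1) := by exact_mod_cast hN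
      rw [this, Real.log_pow]; push_cast; ring
    rw [e] at this
    norm_num at this ⊢
    linarith
  rw [le_div_iff₀ hcard] at havg
  have hl := Real.log_two_lt_d9
  have hm' : (1 : ℝ) ≤ m := by exact_mod_cast hm
  have h5 : 4 * (m : ℝ) ^ 2 * (Fintype.card Ω : ℝ) ≤
      (2 * ((m + 1) * Real.log 2)) * (Fintype.card Ω : ℝ) := by
    have := mul_le_mul_of_nonneg_left h4 (by positivity : 0 ≤ 2 * (Fintype.card Ω : ℝ))
    linarith
  have h6 := le_of_mul_le_mul_right h5 hcard
  nlinarith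

/-- Invariant of the revealing process. -/
def Good {m : ℕ} {M : Type} (A B : M → Set (Fin m → Bool)) (R : Set (Fin m))
    (WW : Set M) (L : ℝ) : Prop :=
  ∃ A' B' : M → Set (Fin m → Bool), (∀ W, A' W ⊆ A W) ∧ (∀ W, B' W ⊆ B W) ∧
    (∀ W ∈ WW, L ≤ (mL (A' W) (B' W) : ℝ)) ∧
    ∀ i ∈ R, (∀ W ∈ WW, ∀ a ∈ A' W, a i = false) ∨ (∀ W ∈ WW, ∀ b ∈ B' W, b i = true)

/-- Rows outside `R`. -/
abbrev TR {m : ℕ} (ℓ : ℕ) (R : Set (Fin m)) : Set (Fin m × Fin ℓ) := {p | p.1 ∉ R}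

lemma reveal_one {m ℓ : ℕ} {Λ : Type} [Fintype Λ] (f : (Fin m → Bool) → Bool) (hf : Monotone f)
    (A B : (Fin m → Fin ℓ → Λ) → Set (Fin m → Bool))
    (hA : ∀ W, ∀ a ∈ A W, f a = true) (hB : ∀ W, ∀ b ∈ B W, f b = false)
    (R J : Set (Fin m)) (WW : Set (Fin m → Fin ℓ → Λ)) (L : ℝ) (h : Good A B R WW L)
    (i : Fin m) :
    ∃ WW' ⊆ WW, Good A B (insert i R) WW' ((L + 1) / 2 - 1) ∧
      (projSet (matSet WW) (TR ℓ J)).ncard ≤ 2 * (projSet (matSet WW') (TR ℓ J)).ncard := by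
  obtain ⟨A', B', hA', hB', hL, hR⟩ := h
  set W0 := {W | W ∈ WW ∧ (L + 1) / 2 - 1 ≤ (mL {a | a ∈ A' W ∧ a i = false} (B' W) : ℝ)} with hW0
  set W1 := {W | W ∈ WW ∧ (L + 1) / 2 - 1 ≤
    (mL {a | a ∈ A' W ∧ a i = true} {b | b ∈ B' W ∧ b i = true} : ℝ)} with hW1
  have hcov : WW ⊆ W0 ∪ W1 := by
    intro W hW
    have h1 := mL_split f hf (A' W) (B' W) (fun a ha => hA W a (hA' W ha))
      (fun b hb => hB W b (hB' W hb)) i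
    have h1' : (mL (A' W) (B' W) : ℝ) ≤ mL {a | a ∈ A' W ∧ a i = false} (B' W) +
      mL {a | a ∈ A' W ∧ a i = true} {b | b ∈ B' W ∧ b i = true} + 1 := by exact_mod_cast h1
    have h2 := hL W hW
    by_contra hc
    simp only [hW0, hW1, Set.mem_union, Set.mem_setOf_eq, hW, true_and, not_or, not_le] at hc
    linarith [hc.1, hc.2]
  have hG0 : Good A B (insert i R) W0 ((L + 1) / 2 - 1) := by
    refine ⟨fun W => {a | a ∈ A' W ∧ a i = false}, B', fun W a ha => hA' W ha.1, hB',
      fun W hW => hW.2, ?_⟩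
    rintro j (rfl | hj)
    · left; intro W hW a ha; exact ha.2
    · rcases hR j hj with h | h
      · left; intro W hW a ha; exact h W hW.1 a ha.1
      · right; intro W hW b hb; exact h W hW.1 b hb
  have hG1 : Good A B (insert i R) W1 ((L + 1) / 2 - 1) := by
    refine ⟨fun W => {a | a ∈ A' W ∧ a i = true}, fun W => {b | b ∈ B' W ∧ b i = true},
      fun W a ha => hA' W ha.1, fun W a ha => hB' W ha.1, fun W hW => hW.2, ?_⟩
    rintro j (rfl | hj)
    · right; intro W hW a ha; exact ha.2
    · rcases hR j hj with h | h
      · left; intro W hW a ha; exact h W hW.1 a ha.1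
      · right; intro W hW b hb; exact h W hW.1 b hb.1
  have hn : (projSet (matSet WW) (TR ℓ J)).ncard ≤
      (projSet (matSet W0) (TR ℓ J)).ncard + (projSet (matSet W1) (TR ℓ J)).ncard := by
    refine le_trans (Set.ncard_le_ncard ?_ (Set.toFinite _)) (Set.ncard_union_le _ _)
    unfold projSet matSet
    rw [← Set.image_union, ← Set.image_union]
    exact Set.image_mono (Set.image_mono hcov)
  by_cases hle : (projSet (matSet W0) (TR ℓ J)).ncard ≤ (projSet (matSet W1) (TR ℓ J)).ncard
  · exact ⟨W1, fun W hW => hW.1, hG1, by omega⟩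
  · exact ⟨W0, fun W hW => hW.1, hG0, by omega⟩

lemma reveal_many {m ℓ : ℕ} {Λ : Type} [Fintype Λ] (f : (Fin m → Bool) → Bool) (hf : Monotone f)
    (A B : (Fin m → Fin ℓ → Λ) → Set (Fin m → Bool))
    (hA : ∀ W, ∀ a ∈ A W, f a = true) (hB : ∀ W, ∀ b ∈ B W, f b = false)
    (R J : Set (Fin m)) (WW : Set (Fin m → Fin ℓ → Λ)) (L : ℝ) (h : Good A B R WW L)
    (I : Finset (Fin m)) :
    ∃ WW' ⊆ WW, Good A B (R ∪ ↑I) WW' ((L + 1) / 2 ^ I.card - 1) ∧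
      (projSet (matSet WW) (TR ℓ J)).ncard ≤ 2 ^ I.card * (projSet (matSet WW') (TR ℓ J)).ncard := by
  induction I using Finset.induction_on with
  | empty => exact ⟨WW, subset_rfl, by simpa using h, by simp⟩
  | insert i I hi ih =>
    obtain ⟨W1, hW1, hG1, hn1⟩ := ih
    obtain ⟨W2, hW2, hG2, hn2⟩ := reveal_one f hf A B hA hB _ J W1 _ hG1 i
    refine ⟨W2, hW2.trans hW1, ?_, ?_⟩
    · rw [Finset.coe_insert, Set.union_insert, Finset.card_insert_of_notMem hi]
      convert hG2 using 1
      rw [pow_succ]; field_simp; ring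
    · rw [Finset.card_insert_of_notMem hi, pow_succ, mul_assoc]
      exact hn1.trans (Nat.mul_le_mul_left _ hn2)

lemma proj_proj_le {m ℓ : ℕ} {Λ : Type} [Fintype Λ] (R I : Set (Fin m))
    (M : Set (Fin m × Fin ℓ → Λ)) :
    (projSet (projSet M (TR ℓ R)) {q : ↥(TR ℓ R) | q.val.1 ∈ I}ᶜ).ncard ≤
      (projSet M (TR ℓ (R ∪ I))).ncard := by
  have : projSet (projSet M (TR ℓ R)) {q : ↥(TR ℓ R) | q.val.1 ∈ I}ᶜ =
      (fun (g : ↥(TR ℓ (R ∪ I)) → Λ) (q : ↥({q : ↥(TR ℓ R) | q.val.1 ∈ I}ᶜ)) =>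
        g ⟨q.1.1, by
          have h1 := q.1.2
          have h2 := q.2
          simp only [Set.mem_compl_iff, Set.mem_setOf_eq, Set.mem_union, not_or] at *
          exact ⟨h1, h2⟩⟩) '' (projSet M (TR ℓ (R ∪ I))) := by
    unfold projSet
    rw [Set.image_image, Set.image_image]
  rw [this]
  exact Set.ncard_image_le (Set.toFinite _)

lemma card_split {m ℓ : ℕ} (R I : Set (Fin m)) (hI : I ⊆ Rᶜ) :
    (TR ℓ R).ncard = {q : ↥(TR ℓ R) | q.val.1 ∈ I}.ncard + (TR ℓ (R ∪ I)).ncard := by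
  have h1 : {q : ↥(TR ℓ R) | q.val.1 ∈ I}.ncard = {p : Fin m × Fin ℓ | p.1 ∈ I}.ncard := by
    rw [← Set.ncard_image_of_injective _ (Subtype.val_injective)]
    congr 1
    ext p
    simp only [Set.mem_image, Set.mem_setOf_eq]
    constructor
    · rintro ⟨q, hq, rfl⟩; exact hq
    · intro hp; exact ⟨⟨p, hI hp⟩, hp, rfl⟩
  rw [h1, ← Set.ncard_union_eq _ (Set.toFinite _) (Set.toFinite _)]
  · congr 1
    ext p
    have := @hI p.1
    simp only [Set.mem_union, Set.mem_setOf_eq, Set.mem_compl_iff] at *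
    tauto
  · rw [Set.disjoint_left]
    intro p hp hq
    exact hq (Or.inr hp)

lemma proj_le {m ℓ : ℕ} {Λ : Type} [Fintype Λ] (R : Set (Fin m)) (M : Set (Fin m × Fin ℓ → Λ)) :
    (projSet M (TR ℓ R)).ncard ≤ Fintype.card Λ ^ (TR ℓ R).ncard := by
  have := Set.ncard_le_ncard (Set.subset_univ (projSet M (TR ℓ R))) (Set.toFinite _)
  rw [Set.ncard_univ, Nat.card_fun, Nat.card_eq_fintype_card, Nat.card_coe_set_eq] at this
  exact this

/-- A state: revealed rows `R` with large product of density and threshold. -/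
def State {m ℓ : ℕ} {Λ : Type} [Fintype Λ]
    (A B : (Fin m → Fin ℓ → Λ) → Set (Fin m → Bool)) (R : Set (Fin m)) 
    (WW : Set (Fin m → Fin ℓ → Λ)) (L : ℝ) : Prop :=
  Good A B R WW L ∧
    2 * (Fintype.card Λ : ℝ) ^ (TR ℓ R).ncard < (L + 1) * (projSet (matSet WW) (TR ℓ R)).ncard

lemma step {m ℓ : ℕ} {Λ : Type} [Fintype Λ] [Nonempty Λ] (f : (Fin m → Bool) → Bool)
    (hf : Monotone f)
    (A B : (Fin m → Fin ℓ → Λ) → Set (Fin m → Bool))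
    (hA : ∀ W, ∀ a ∈ A W, f a = true) (hB : ∀ W, ∀ b ∈ B W, f b = false)
    (R : Set (Fin m)) (WW : Set (Fin m → Fin ℓ → Λ)) (L : ℝ) (h : State A B R WW L)
    (I : Set (Fin m)) (hI : I ⊆ Rᶜ)
    (hlt : rAvgDeg (projSet (matSet WW) (TR ℓ R)) {q : ↥(TR ℓ R) | q.val.1 ∈ I} <
      ((1 : ℝ) / 4) ^ I.ncard) :
    I.Nonempty ∧ ∃ WW' L', State A B (R ∪ I) WW' L' := by
  obtain ⟨hG, hd⟩ := h
  have hΛ : (0 : ℝ) < Fintype.card Λ := by exact_mod_cast Fintype.card_pos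
  set a := (projSet (matSet WW) (TR ℓ R)).ncard with ha
  have hpos : (0 : ℝ) < (L + 1) * a := lt_trans (by positivity) hd
  have ha0 : (0 : ℝ) < a := by
    rcases (Nat.cast_nonneg a : (0 : ℝ) ≤ a).lt_or_eq with h | h
    · exact h
    · rw [← h, mul_zero] at hpos; exact absurd hpos (lt_irrefl _)
  have hL : 0 < L + 1 := by
    by_contra hc
    nlinarith
  have hne : (projSet (matSet WW) (TR ℓ R)).Nonempty := by
    rw [Set.nonempty_iff_ne_empty]
    intro h0
    rw [ha, h0] at ha0; simp at ha0
  unfold rAvgDeg at hlt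
  set b := (projSet (projSet (matSet WW) (TR ℓ R)) {q : ↥(TR ℓ R) | q.val.1 ∈ I}ᶜ).ncard with hb
  have hb0 : (0 : ℝ) < b := by
    have : 0 < b := by
      rw [hb, Set.ncard_pos (Set.toFinite _)]
      exact hne.image _
    exact_mod_cast this
  set s := {q : ↥(TR ℓ R) | q.val.1 ∈ I}.ncard with hs
  have hbb : (b : ℝ) ≤ (projSet (matSet WW) (TR ℓ (R ∪ I))).ncard := by
    exact_mod_cast proj_proj_le R I (matSet WW)
  constructor
  · rw [Set.nonempty_iff_ne_empty]
    intro h0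
    have hba : b ≤ a := Set.ncard_image_le (Set.toFinite _)
    have hba' : (b : ℝ) ≤ a := by exact_mod_cast hba
    have hs0 : s = 0 := by rw [hs, h0]; simp
    rw [hs0, h0, Set.ncard_empty, pow_zero, pow_zero, div_one, div_lt_one hb0] at hlt
    linarith
  · obtain ⟨WW', hW', hG', hn⟩ := reveal_many f hf A B hA hB R (R ∪ I) WW L hG (Set.toFinite I).toFinset
    rw [Set.Finite.coe_toFinset] at hG'
    rw [← Set.ncard_eq_toFinset_card] at hG' hn
    set k := I.ncard
    refine ⟨WW', _, hG', ?_⟩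
    set n := (projSet (matSet WW) (TR ℓ (R ∪ I))).ncard
    set n' := (projSet (matSet WW') (TR ℓ (R ∪ I))).ncard
    have hn' : (n : ℝ) ≤ 2 ^ k * n' := by exact_mod_cast hn
    have hcs := card_split (ℓ := ℓ) R I hI
    rw [← hs] at hcs
    rw [hcs, pow_add] at hd
    set D := (Fintype.card Λ : ℝ) ^ s
    set E := (Fintype.card Λ : ℝ) ^ (TR ℓ (R ∪ I)).ncard
    have hD : 0 < D := by positivity
    have hE : 0 < E := by positivity
    rw [div_lt_iff₀ hD, div_lt_iff₀ hb0, one_div, inv_pow, mul_assoc, inv_mul_eq_div,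
      lt_div_iff₀ (by positivity)] at hlt
    have h4 : (4 : ℝ) ^ k = 2 ^ k * 2 ^ k := by rw [← mul_pow]; norm_num
    have h2 : (0 : ℝ) < 2 ^ k := by positivity
    have e1 : (a : ℝ) * 2 ^ k * 2 ^ k < D * n' * 2 ^ k := by
      calc (a : ℝ) * 2 ^ k * 2 ^ k = a * 4 ^ k := by rw [h4]; ring
        _ < D * b := hlt
        _ ≤ D * (2 ^ k * n') := by gcongr; exact hbb.trans hn'
        _ = _ := by ring
    have e2 := lt_of_mul_lt_mul_right e1 h2.le
    have e3 : D * (2 * E * 2 ^ k) < D * ((L + 1) * n') := by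
      calc D * (2 * E * 2 ^ k) = 2 * (D * E) * 2 ^ k := by ring
        _ < (L + 1) * a * 2 ^ k := by gcongr
        _ = (L + 1) * (a * 2 ^ k) := by ring
        _ ≤ (L + 1) * (D * n') := by gcongr
        _ = _ := by ring
    have e4 := lt_of_mul_lt_mul_left e3 hD.le
    have : ((L + 1) / 2 ^ k - 1 + 1) * (n' : ℝ) = ((L + 1) * n') / 2 ^ k := by ring
    rw [this, lt_div_iff₀ h2]
    exact e4

lemma finish {m ℓ : ℕ} {Λ : Type} [Fintype Λ] [Nonempty Λ] (f : (Fin m → Bool) → Bool)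
    (i0 : Fin m) (hf : Monotone f)
    (A B : (Fin m → Fin ℓ → Λ) → Set (Fin m → Bool))
    (hA : ∀ W, ∀ a ∈ A W, f a = true) (hB : ∀ W, ∀ b ∈ B W, f b = false) (n : ℕ) :
    ∀ (R : Set (Fin m)) (WW : Set (Fin m → Fin ℓ → Λ)) (L : ℝ), State A B R WW L →
    Rᶜ.ncard = n →
    ∃ (WW : Set (Fin m → Fin ℓ → Λ)) (aW bW : (Fin m → Fin ℓ → Λ) → (Fin m → Bool)),
      (∀ W ∈ WW, aW W ∈ A W ∧ bW W ∈ B W) ∧ HardCollection f WW aW bW := by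
  induction n using Nat.strong_induction_on with
  | _ n ih =>
  intro R WW L hS hn
  by_cases hc : ∀ I : Set (Fin m), I ⊆ Rᶜ → ((1 : ℝ) / 4) ^ I.ncard ≤
        rAvgDeg (projSet (matSet WW) (TR ℓ R)) {q : ↥(TR ℓ R) | q.val.1 ∈ I}
  · obtain ⟨⟨A', B', hA', hB', hL, hR⟩, hd⟩ := hS
    have hL1 : 1 < L := by
      have h1 : ((projSet (matSet WW) (TR ℓ R)).ncard : ℝ) ≤
        (Fintype.card Λ : ℝ) ^ (TR ℓ R).ncard := by exact_mod_cast proj_le R (matSet WW)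
      have hΛ : (0 : ℝ) < Fintype.card Λ := by exact_mod_cast Fintype.card_pos
      have hE : 0 < (Fintype.card Λ : ℝ) ^ (TR ℓ R).ncard := by positivity
      by_contra hc
      have h0 : (0 : ℝ) ≤ (projSet (matSet WW) (TR ℓ R)).ncard := Nat.cast_nonneg _
      nlinarith
    have hne : ∀ W ∈ WW, (A' W).Nonempty ∧ (B' W).Nonempty := by
      intro W hW
      refine nonempty_of_mL i0 _ _ ?_
      have := hL W hW
      exact_mod_cast lt_of_lt_of_le hL1 this
    refine ⟨WW, fun W => if h : (A' W).Nonempty then h.choose else fun _ => false,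
      fun W => if h : (B' W).Nonempty then h.choose else fun _ => false, ?_, R, hc, ?_⟩
    · intro W hW
      obtain ⟨h1, h2⟩ := hne W hW
      simp only [h1, h2, dif_pos]
      exact ⟨hA' W h1.choose_spec, hB' W h2.choose_spec⟩
    · intro W hW W' hW' i hi
      have h1 := (hne W hW).1
      have h2 := (hne W' hW').2
      simp only [h1, h2, dif_pos]
      rcases hR i hi with h | h
      · rw [h W hW _ h1.choose_spec]; exact Bool.false_le _
      · rw [h W' hW' _ h2.choose_spec]; exact Bool.le_true _
  · push Not at hc
    obtain ⟨I, hI, hlt⟩ := hc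
    obtain ⟨hIne, WW', L', hS'⟩ := step f hf A B hA hB R WW L hS I hI hlt
    refine ih _ ?_ (R ∪ I) WW' L' hS' rfl
    rw [← hn]
    refine Set.ncard_lt_ncard ?_ (Set.toFinite _)
    rw [Set.ssubset_iff_subset_ne]
    refine ⟨Set.compl_subset_compl.2 Set.subset_union_left, fun he => ?_⟩
    obtain ⟨x, hx⟩ := hIne
    have := hI hx
    rw [← he] at this
    exact this (Or.inr hx)

end HardColl

/-- Hard collection lemma.  Every live transcript of a protocol
solving `mKW_f ⊛ (S ◇ gd)` supports a hard collection. -/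
theorem hard_collection_lemma (m ℓ t : ℕ) (O : Type)
    (f : (Fin m → Bool) → Bool) (S : (Fin ℓ → Bool) → O → Prop)
    (gd : (Fin t → Bool) → (Fin t → Bool) → Bool)
    (hf : Monotone f) (hf1 : ∃ x, f x = true) (hf0 : ∃ x, f x = false)
    (Pr : Protocol
        ((Fin m → Fin ℓ → (Fin t → Bool)) × {a : Fin m → Bool // f a = true})
        ((Fin m → Fin ℓ → (Fin t → Bool)) × {b : Fin m → Bool // f b = false})
        (Fin m × O))
    (hPr : Solves Pr (starLift f S gd))
    (π : List Bool) (hlive : LiveT f Pr π) :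
    ∃ (WW : Set (Fin m → Fin ℓ → (Fin t → Bool)))
      (aW bW : (Fin m → Fin ℓ → (Fin t → Bool)) → (Fin m → Bool)),
      SupportsCollection f Pr π WW aW bW ∧ HardCollection f WW aW bW := by
  have hm : 0 < m := by
    rcases Nat.eq_zero_or_pos m with h | h
    · subst h
      obtain ⟨x, hx⟩ := hf1
      obtain ⟨y, hy⟩ := hf0
      rw [Subsingleton.elim x y, hy] at hx
      exact absurd hx (by decide)
    · exact h
  have hA : ∀ W, ∀ a ∈ Aset f Pr π W, f a = true := fun W a ha => ha.1
  have hB : ∀ W, ∀ b ∈ Bset f Pr π W, f b = false := fun W b hb => hb.1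
  obtain ⟨L, hL⟩ := HardColl.threshold m hm
    (fun W => mL (Aset f Pr π W) (Bset f Pr π W))
    (fun W => HardColl.mL_bound f hf ⟨0, hm⟩ _ _ (hA W) (hB W)) hlive.2
  refine HardColl.finish f ⟨0, hm⟩ hf (Aset f Pr π) (Bset f Pr π) hA hB _ ∅
    {W | L ≤ mL (Aset f Pr π W) (Bset f Pr π W)} L ⟨⟨Aset f Pr π, Bset f Pr π,
      fun _ => subset_rfl, fun _ => subset_rfl, fun W hW => ?_, by simp⟩, ?_⟩ rfl
  · exact_mod_cast hW
  · have e1 : (HardColl.TR ℓ (∅ : Set (Fin m))).ncard = m * ℓ := by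
      have : HardColl.TR ℓ (∅ : Set (Fin m)) = Set.univ := by ext p; simp
      rw [this, Set.ncard_univ]; simp
    have e2 : (projSet (matSet {W | L ≤ mL (Aset f Pr π W) (Bset f Pr π W)})
        (HardColl.TR ℓ ∅)).ncard =
        (Finset.univ.filter fun W => L ≤ mL (Aset f Pr π W) (Bset f Pr π W)).card := by
      unfold projSet matSet
      rw [Set.image_image, Set.ncard_image_of_injective, ← Set.ncard_coe_finset]
      · congr 1; ext W; simp
      · intro W W' h
        funext i j
        exact congrFun h ⟨(i, j), by simp⟩
    have e3 : (Fintype.card (Fin m → Fin ℓ → Fin t → Bool) : ℝ) =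
        (Fintype.card (Fin t → Bool) : ℝ) ^ (m * ℓ) := by
      rw [Fintype.card_fun, Fintype.card_fun (α := Fin ℓ)]
      simp only [Fintype.card_fin]
      push_cast
      rw [← pow_mul, mul_comm ℓ m]
    rw [e1, e2, ← e3]
    exact hL
end
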